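/- For every positive integer n with n ≡ 0, 2, or 4 (mod 5) and n ∉ {10, 15, 30}, one has N̄(1,5,n) > N̄(2,5,n). -/

import Mathlib

/-- An overpartition of `n`: a partition of `n` together with a chosen subset of its
distinct part sizes (the overlined parts). -/
def Overpartition (n : ℕ) : Type :=
  {P : n.Partition × Finset ℕ // P.2 ⊆ P.1.parts.toFinset}

/-- The Dyson rank of an overpartition: largest part minus number of parts. -/
def Overpartition.rank {n : ℕ} (P : Overpartition n) : ℤ :=
  (P.1.1.parts.sup : ℤ) - (P.1.1.parts.card : ℤ)

/-- `nbarRank m n` is the number of overpartitions of `n` with rank `m`. -/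
noncomputable def nbarRank (m : ℤ) (n : ℕ) : ℕ :=
  Nat.card {P : Overpartition n // P.rank = m}

/-- `nbar a c n` is the number of overpartitions of `n` with rank congruent to `a` mod `c`. -/
noncomputable def nbar (a : ℤ) (c : ℕ) (n : ℕ) : ℕ :=
  Nat.card {P : Overpartition n // P.rank ≡ a [ZMOD (c : ℤ)]}

/-- `pbar n` is the number of overpartitions of `n`. -/
noncomputable def pbar (n : ℕ) : ℕ := Nat.card (Overpartition n)

/-!
Dyson's map on Ferrers diagrams gives a recurrence for weighted counts of overpartitions whose rank
is at least `m`. Solving it, the generating function of `N̄(1,5,n) - N̄(2,5,n)` is the bilateral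
series `∑ (-1)ⁿ q^(n²) (6 q^(2n) - 2 qⁿ) / (1 - q^(5n))` over `n ≠ 0`, divided by Gauss's series
`∑ (-1)ⁿ q^(n²)`. Split according to `n` modulo `5`, numerator and denominator become combinations
of theta functions and Appell–Lerch sums of nome `q⁵⁰`, and identities of Kronecker and Weierstrass
type between these determine the quotient one residue class of exponents at a time.

After `q⁵` is replaced by `q`, the classes `0` and `2` are quotients of theta functions, hence
infinite products, and the class `4` is a sum of a Lambert series and an Appell sum, each divided
by a theta function. Coefficientwise they dominate `2 q / ((1 - q³)(1 - q⁴))`, `2 / (1 - q)` and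
`2 / (1 - q)`. The positive integers not of the form `1 + 3 i + 4 j` are `2`, `3` and `6`, whence
the exceptions `10`, `15` and `30`.
-/

section DysonMap

lemma sup_mem_of_ne_zero {s : Multiset ℕ} (hs : s ≠ 0) : s.sup ∈ s := by
  induction s using Multiset.induction_on with
  | empty => exact absurd rfl hs
  | cons a s ih =>
    rw [Multiset.sup_cons]
    rcases eq_or_ne s 0 with rfl | h
    · simp
    · rcases le_total a s.sup with hle | hle
      · rw [sup_eq_right.2 hle]
        exact Multiset.mem_cons_of_mem (ih h)
      · rw [sup_eq_left.2 hle]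
        exact Multiset.mem_cons_self _ _

/-- The multiset of parts obtained by subtracting `1` from every part and discarding zeros, that
is, by deleting the first column of the Ferrers diagram. -/
def decParts (s : Multiset ℕ) : Multiset ℕ := (s.map Nat.pred).filter (· ≠ 0)

/-- Dyson's map: delete the first column of the Ferrers diagram and add its length, increased by
`c`, as a new part. -/
def dysonMap (c : ℤ) (s : Multiset ℕ) : Multiset ℕ :=
  (((s.card : ℤ) + c).toNat ::ₘ s.map Nat.pred).filter (· ≠ 0)

/-- The inverse of Dyson's map: delete the largest part and add its length, decreased by `c`, as a
new first column. -/
def dysonInv (c : ℤ) (s : Multiset ℕ) : Multiset ℕ :=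
  (s.erase s.sup).map Nat.succ +
    Multiset.replicate (((s.sup : ℤ) - c).toNat - (s.erase s.sup).card) 1

/-- The Dyson rank of a multiset of parts. -/
def partsRank (s : Multiset ℕ) : ℤ := (s.sup : ℤ) - s.card

variable {c : ℤ} {s : Multiset ℕ}

lemma mem_decParts {x : ℕ} : x ∈ decParts s ↔ x ≠ 0 ∧ x + 1 ∈ s := by
  rw [decParts, Multiset.mem_filter, Multiset.mem_map]
  constructor
  · rintro ⟨⟨a, ha, rfl⟩, h⟩
    have ha0 : a ≠ 0 := fun ha0 => h (congrArg Nat.pred ha0)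
    exact ⟨h, (Nat.succ_pred ha0).symm ▸ ha⟩
  · rintro ⟨h, h'⟩
    exact ⟨⟨x + 1, h', rfl⟩, h⟩

lemma map_succ_decParts (s : Multiset ℕ) : (decParts s).map Nat.succ = s.filter (2 ≤ ·) := by
  have hfilter : s.filter ((· ≠ 0) ∘ Nat.pred) = s.filter (2 ≤ ·) :=
    Multiset.filter_congr fun x _ => by
      simp only [Function.comp_apply, Nat.pred_eq_sub_one]
      omega
  rw [decParts, Multiset.filter_map, Multiset.map_map, hfilter]
  conv_rhs => rw [← Multiset.map_id (s.filter (2 ≤ ·))]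
  refine Multiset.map_congr rfl fun x hx => Nat.succ_pred_eq_of_pos ?_
  have := (Multiset.mem_filter.1 hx).2
  omega

lemma map_succ_decParts_add_replicate (hs : ∀ x ∈ s, 0 < x) :
    (decParts s).map Nat.succ + Multiset.replicate (s.count 1) 1 = s := by
  have hones : s.filter (fun x => ¬ 2 ≤ x) = s.filter (· = 1) :=
    Multiset.filter_congr fun x hx => by
      have := hs x hx
      omega
  rw [map_succ_decParts, ← Multiset.filter_eq', ← hones, Multiset.filter_add_not]

lemma card_decParts_add_count (hs : ∀ x ∈ s, 0 < x) :
    (decParts s).card + s.count 1 = s.card := by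
  simpa using congrArg Multiset.card (map_succ_decParts_add_replicate hs)

lemma sum_decParts_add_card (hs : ∀ x ∈ s, 0 < x) : (decParts s).sum + s.card = s.sum := by
  have hsum := congrArg Multiset.sum (map_succ_decParts_add_replicate hs)
  have hcard := card_decParts_add_count hs
  have hsucc : ((decParts s).map Nat.succ).sum = (decParts s).sum + (decParts s).card := by
    simp only [Nat.succ_eq_add_one, Multiset.sum_map_add, Multiset.map_id', Multiset.map_const',
      Multiset.sum_replicate, smul_eq_mul, mul_one]
  simp only [Multiset.sum_add, Multiset.sum_replicate, smul_eq_mul, mul_one, hsucc] at hsum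
  omega

lemma card_toFinset_eq_decParts (hs : ∀ x ∈ s, 0 < x) :
    s.toFinset.card = (decParts s).toFinset.card + if 1 ∈ s then 1 else 0 := by
  conv_lhs => rw [← map_succ_decParts_add_replicate hs]
  rw [Multiset.toFinset_add, Multiset.toFinset_map, Finset.card_union_of_disjoint,
    Finset.card_image_of_injective _ Nat.succ_injective]
  · split_ifs with h
    · rw [Multiset.toFinset_replicate, if_neg (Multiset.count_pos.2 h).ne', Finset.card_singleton]
    · simp [Multiset.count_eq_zero.2 h]
  · simp only [Finset.disjoint_left, Finset.mem_image, Multiset.mem_toFinset, mem_decParts]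
    rintro x ⟨y, hy, rfl⟩ h
    have := Multiset.eq_of_mem_replicate h
    omega

lemma dysonMap_eq : dysonMap c s =
    if ((s.card : ℤ) + c).toNat = 0 then decParts s
    else ((s.card : ℤ) + c).toNat ::ₘ decParts s := by
  split_ifs with h
  · exact Multiset.filter_cons_of_neg _ (not_not.2 h)
  · exact Multiset.filter_cons_of_pos _ h

lemma pos_of_mem_dysonMap {x : ℕ} (hx : x ∈ dysonMap c s) : 0 < x :=
  Nat.pos_of_ne_zero (Multiset.mem_filter.1 hx).2

lemma pos_of_mem_dysonInv {x : ℕ} (hx : x ∈ dysonInv c s) : 0 < x := by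
  rcases Multiset.mem_add.1 hx with h | h
  · obtain ⟨y, _, rfl⟩ := Multiset.mem_map.1 h
    exact Nat.succ_pos y
  · rw [Multiset.eq_of_mem_replicate h]
    exact one_pos

lemma sum_dysonMap (hs : ∀ x ∈ s, 0 < x) (h0 : 0 ≤ (s.card : ℤ) + c) :
    ((dysonMap c s).sum : ℤ) = s.sum + c := by
  have := sum_decParts_add_card hs
  rw [dysonMap_eq]
  split_ifs with h
  · omega
  · rw [Multiset.sum_cons, Nat.cast_add]
    omega

section Forward

variable (h1 : partsRank s ≤ c + 1) (h0 : 0 ≤ (s.card : ℤ) + c)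
include h1 h0

lemma le_toNat_of_mem_decParts {x : ℕ} (hx : x ∈ decParts s) : x ≤ ((s.card : ℤ) + c).toNat := by
  have := Multiset.le_sup (mem_decParts.1 hx).2
  unfold partsRank at h1
  omega

lemma decParts_eq_zero_of_toNat_eq_zero (hg : ((s.card : ℤ) + c).toNat = 0) : decParts s = 0 :=
  Multiset.eq_zero_of_forall_notMem fun _ hx =>
    (mem_decParts.1 hx).1 (Nat.le_zero.1 (hg ▸ le_toNat_of_mem_decParts h1 h0 hx))

lemma sup_dysonMap : (dysonMap c s).sup = ((s.card : ℤ) + c).toNat := by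
  rw [dysonMap_eq]
  split_ifs with h
  · rw [decParts_eq_zero_of_toNat_eq_zero h1 h0 h, h, Multiset.sup_zero, bot_eq_zero]
  · rw [Multiset.sup_cons]
    exact sup_eq_left.2 (Multiset.sup_le.2 fun _ => le_toNat_of_mem_decParts h1 h0)

lemma erase_sup_dysonMap : (dysonMap c s).erase (dysonMap c s).sup = decParts s := by
  rw [sup_dysonMap h1 h0, dysonMap_eq]
  split_ifs with h
  · rw [decParts_eq_zero_of_toNat_eq_zero h1 h0 h, Multiset.erase_zero]
  · rw [Multiset.erase_cons_head]

lemma dysonInv_dysonMap (hs : ∀ x ∈ s, 0 < x) : dysonInv c (dysonMap c s) = s := by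
  rw [dysonInv, erase_sup_dysonMap h1 h0, sup_dysonMap h1 h0]
  conv_rhs => rw [← map_succ_decParts_add_replicate hs]
  have := card_decParts_add_count hs
  congr 2
  omega

lemma sub_one_le_partsRank_dysonMap (hs : ∀ x ∈ s, 0 < x) :
    c - 1 ≤ partsRank (dysonMap c s) := by
  have hcard := card_decParts_add_count hs
  rw [partsRank, sup_dysonMap h1 h0, dysonMap_eq]
  split_ifs
  · omega
  · rw [Multiset.card_cons]
    omega

lemma toNat_mem_decParts_iff (hg : ((s.card : ℤ) + c).toNat ≠ 0) :
    ((s.card : ℤ) + c).toNat ∈ decParts s ↔ ¬ partsRank s ≤ c := by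
  rw [mem_decParts]
  unfold partsRank at h1 ⊢
  constructor
  · rintro ⟨_, h⟩
    have := Multiset.le_sup h
    omega
  · intro h
    have hsup : ((s.card : ℤ) + c).toNat + 1 = s.sup := by omega
    refine ⟨hg, hsup ▸ sup_mem_of_ne_zero ?_⟩
    rintro rfl
    simp at hsup

lemma one_mem_iff_le_partsRank_dysonMap (hs : ∀ x ∈ s, 0 < x)
    (hg : ((s.card : ℤ) + c).toNat ≠ 0) : c ≤ partsRank (dysonMap c s) ↔ 1 ∈ s := by
  have hcard := card_decParts_add_count hs
  rw [partsRank, sup_dysonMap h1 h0, dysonMap_eq, if_neg hg, Multiset.card_cons,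
    ← Multiset.count_pos]
  omega

omit h1 in
lemma one_mem_iff_not_partsRank_le (hs : ∀ x ∈ s, 0 < x) (hdec : decParts s = 0)
    (hg : ((s.card : ℤ) + c).toNat = 0) : 1 ∈ s ↔ ¬ partsRank s ≤ c := by
  have hcard := card_decParts_add_count hs
  rw [hdec, Multiset.card_zero] at hcard
  unfold partsRank
  constructor
  · intro h
    have := Multiset.le_sup h
    omega
  · intro h
    refine Multiset.count_pos.1 (Nat.pos_of_ne_zero fun hcount => h ?_)
    rw [hcount] at hcard
    rw [Multiset.card_eq_zero.1 hcard.symm] at h0 ⊢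
    simpa using h0

/-- The new part of `dysonMap c s` repeats a part of `decParts s` exactly when
`partsRank s = c + 1`, and `s` has a part `1` exactly when `c ≤ partsRank (dysonMap c s)`. -/
lemma card_toFinset_dysonMap (hs : ∀ x ∈ s, 0 < x) :
    (dysonMap c s).toFinset.card + (if c ≤ partsRank (dysonMap c s) then 1 else 0) =
      s.toFinset.card + if partsRank s ≤ c then 1 else 0 := by
  rw [card_toFinset_eq_decParts hs]
  by_cases hg : ((s.card : ℤ) + c).toNat = 0
  · have hdec := decParts_eq_zero_of_toNat_eq_zero h1 h0 hg
    have hone := one_mem_iff_not_partsRank_le h0 hs hdec hg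
    have hc : c ≤ partsRank (0 : Multiset ℕ) := by
      change c ≤ 0
      omega
    rw [dysonMap_eq, if_pos hg, hdec, if_pos hc, if_congr hone rfl rfl]
    split_ifs <;> rfl
  · rw [if_congr (one_mem_iff_le_partsRank_dysonMap h1 h0 hs hg) rfl rfl, dysonMap_eq, if_neg hg,
      Multiset.toFinset_cons]
    have hmem := Multiset.mem_toFinset.trans (toNat_mem_decParts_iff h1 h0 hg)
    by_cases hr : partsRank s ≤ c
    · rw [if_pos hr, Finset.card_insert_of_notMem (mt hmem.1 (not_not.2 hr))]
      omega
    · rw [if_neg hr, Finset.insert_eq_of_mem (hmem.2 hr)]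
      omega

end Forward

section Backward

variable (h : ((s.erase s.sup).card : ℤ) ≤ s.sup - c)
include h

lemma card_dysonInv : ((dysonInv c s).card : ℤ) = s.sup - c := by
  rw [dysonInv, Multiset.card_add, Multiset.card_map, Multiset.card_replicate]
  omega

lemma partsRank_dysonInv_le : partsRank (dysonInv c s) ≤ c + 1 := by
  have hsup : (dysonInv c s).sup ≤ s.sup + 1 := by
    refine Multiset.sup_le.2 fun x hx => ?_
    rcases Multiset.mem_add.1 hx with hx | hx
    · obtain ⟨y, hy, rfl⟩ := Multiset.mem_map.1 hx
      exact Nat.succ_le_succ (Multiset.le_sup (Multiset.mem_of_mem_erase hy))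
    · rw [Multiset.eq_of_mem_replicate hx]
      omega
  rw [partsRank, card_dysonInv h]
  omega

omit h in
lemma decParts_dysonInv (hs : ∀ x ∈ s, 0 < x) : decParts (dysonInv c s) = s.erase s.sup := by
  have hmap : (s.erase s.sup).map (Nat.pred ∘ Nat.succ) = s.erase s.sup :=
    Multiset.map_id' _
  have hones (k : ℕ) : (Multiset.replicate k (Nat.pred 1)).filter (· ≠ 0) = 0 :=
    Multiset.filter_eq_nil.2 fun _ hx => not_not.2 (Multiset.eq_of_mem_replicate hx)
  rw [decParts, dysonInv, Multiset.map_add, Multiset.map_map, Multiset.map_replicate,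
    Multiset.filter_add, hmap, hones, add_zero]
  exact Multiset.filter_eq_self.2 fun x hx => (hs x (Multiset.mem_of_mem_erase hx)).ne'

lemma dysonMap_dysonInv (hs : ∀ x ∈ s, 0 < x) : dysonMap c (dysonInv c s) = s := by
  have hpart : ((s.sup : ℤ) - c + c).toNat = s.sup := by omega
  rw [dysonMap_eq, card_dysonInv h, decParts_dysonInv hs, hpart]
  split_ifs with h0
  · rcases eq_or_ne s 0 with rfl | hne
    · rfl
    · exact absurd h0 (hs _ (sup_mem_of_ne_zero hne)).ne'
  · exact Multiset.cons_erase (sup_mem_of_ne_zero fun hs0 => h0 (by rw [hs0]; rfl))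

lemma sum_dysonInv (hs : ∀ x ∈ s, 0 < x) : ((dysonInv c s).sum : ℤ) = s.sum - c := by
  have hsum := sum_dysonMap (c := c) (s := dysonInv c s) (fun _ => pos_of_mem_dysonInv)
    (by rw [card_dysonInv h]; omega)
  rw [dysonMap_dysonInv h hs] at hsum
  omega

end Backward

end DysonMap

section RankSums

/-- The sum of `f (rank P)` over the overpartitions `P` of `n`; a partition with `k` distinct part
sizes underlies `2 ^ k` overpartitions. -/
def rankSum (f : ℤ → ℤ) (n : ℕ) : ℤ :=
  ∑ l : n.Partition, 2 ^ l.parts.toFinset.card * f (partsRank l.parts)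

/-- The weight `[m ≤ r] + [m < r]` of the rank `r`, for which Dyson's map gives a closed
recurrence. -/
def tailWeight (m r : ℤ) : ℤ := (if m ≤ r then 1 else 0) + if m < r then 1 else 0

/-- The sum over the overpartitions of `n` of the weight `tailWeight m` of the rank. -/
def tailSum (m : ℤ) (n : ℕ) : ℤ := rankSum (tailWeight m) n

lemma cast_card_rank_eq_rankSum (p : ℤ → Prop) [DecidablePred p] (n : ℕ) :
    (Nat.card {P : Overpartition n // p P.rank} : ℤ) =
      rankSum (fun r => if p r then 1 else 0) n := by
  let e : {P : Overpartition n // p P.rank} ≃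
      Σ l : {l : n.Partition // p (partsRank l.parts)},
        {s : Finset ℕ // s ∈ l.1.parts.toFinset.powerset} :=
    { toFun := fun P => ⟨⟨P.1.1.1, P.2⟩, ⟨P.1.1.2, Finset.mem_powerset.2 P.1.2⟩⟩
      invFun := fun x => ⟨⟨(x.1.1, x.2.1), Finset.mem_powerset.1 x.2.2⟩, x.1.2⟩
      left_inv := fun _ => rfl
      right_inv := fun _ => rfl }
  simp only [rankSum, mul_ite, mul_one, mul_zero]
  rw [Nat.card_congr e, Nat.card_sigma, ← Finset.sum_filter, Nat.cast_sum,
    Finset.sum_subtype (p := fun l : n.Partition => p (partsRank l.parts)) _ (by simp)]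
  refine Finset.sum_congr rfl fun l _ => ?_
  rw [Nat.card_eq_fintype_card, Fintype.card_coe, Finset.card_powerset, Nat.cast_pow,
    Nat.cast_ofNat]

lemma rankSum_one (n : ℕ) : rankSum (fun _ => 1) n = pbar n := by
  have h := cast_card_rank_eq_rankSum (fun _ => True) n
  simp only [if_true] at h
  rw [← h, pbar, Nat.card_congr (Equiv.subtypeUnivEquiv fun _ => trivial)]

lemma rankSum_add (f g : ℤ → ℤ) (n : ℕ) :
    rankSum (fun r => f r + g r) n = rankSum f n + rankSum g n := by
  simp only [rankSum, mul_add, Finset.sum_add_distrib]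

lemma rankSum_sub (f g : ℤ → ℤ) (n : ℕ) :
    rankSum (fun r => f r - g r) n = rankSum f n - rankSum g n := by
  simp only [rankSum, mul_sub, Finset.sum_sub_distrib]

lemma rankSum_const_mul (a : ℤ) (f : ℤ → ℤ) (n : ℕ) :
    rankSum (fun r => a * f r) n = a * rankSum f n := by
  simp only [rankSum, Finset.mul_sum, mul_left_comm]

lemma rankSum_finset_sum {ι : Type*} (s : Finset ι) (f : ι → ℤ → ℤ) (n : ℕ) :
    rankSum (fun r => ∑ i ∈ s, f i r) n = ∑ i ∈ s, rankSum (f i) n := by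
  simp only [rankSum, Finset.mul_sum]
  exact Finset.sum_comm

lemma rankSum_mono {f g : ℤ → ℤ} (h : ∀ r, f r ≤ g r) (n : ℕ) : rankSum f n ≤ rankSum g n :=
  Finset.sum_le_sum fun _ _ => mul_le_mul_of_nonneg_left (h _) (by positivity)

lemma card_parts_le {n : ℕ} (l : n.Partition) : l.parts.card ≤ n := by
  have := sum_decParts_add_card fun x hx => l.parts_pos (i := x) hx
  rw [l.parts_sum] at this
  omega

lemma sup_parts_le {n : ℕ} (l : n.Partition) : l.parts.sup ≤ n :=
  Multiset.sup_le.2 fun _ hx => l.parts_sum ▸ Multiset.le_sum_of_mem hx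

lemma parts_ne_zero {n : ℕ} (hn : n ≠ 0) (l : n.Partition) : l.parts ≠ 0 := fun h =>
  hn (by rw [← l.parts_sum, h, Multiset.sum_zero])

lemma abs_partsRank_lt {n : ℕ} (hn : n ≠ 0) (l : n.Partition) : |partsRank l.parts| < n := by
  have hcard := Multiset.card_pos.2 (parts_ne_zero hn l)
  have hsup := l.parts_pos (sup_mem_of_ne_zero (parts_ne_zero hn l))
  have := card_parts_le l
  have := sup_parts_le l
  rw [partsRank, abs_lt]
  omega

lemma abs_partsRank_le {n : ℕ} (l : n.Partition) : |partsRank l.parts| ≤ n := by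
  have := card_parts_le l
  have := sup_parts_le l
  rw [partsRank, abs_le]
  omega

lemma rankSum_congr {f g : ℤ → ℤ} {n : ℕ} (h : ∀ r : ℤ, |r| ≤ n → f r = g r) :
    rankSum f n = rankSum g n :=
  Finset.sum_congr rfl fun l _ => by rw [h _ (abs_partsRank_le l)]

section Dyson

variable {c : ℤ} {n n' : ℕ} (h : (n' : ℤ) = n + c)
include h

lemma card_add_nonneg_of_partsRank_le {l : n.Partition} (hl : partsRank l.parts ≤ c + 1) :
    0 ≤ (l.parts.card : ℤ) + c := by
  rcases eq_or_ne n 0 with rfl | hn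
  · omega
  · have := l.parts_pos (sup_mem_of_ne_zero (parts_ne_zero hn l))
    unfold partsRank at hl
    omega

lemma card_erase_sup_le_of_le_partsRank {l : n'.Partition} (hl : c - 1 ≤ partsRank l.parts) :
    ((l.parts.erase l.parts.sup).card : ℤ) ≤ l.parts.sup - c := by
  unfold partsRank at hl
  rcases eq_or_ne l.parts 0 with h0 | hne
  · have hn' := l.parts_sum
    rw [h0, Multiset.sum_zero] at hn'
    rw [h0, Multiset.erase_zero, Multiset.card_zero, Multiset.sup_zero, bot_eq_zero]
    omega
  · have := Multiset.card_erase_of_mem (sup_mem_of_ne_zero hne)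
    have := Multiset.card_pos.2 hne
    rw [Nat.pred_eq_sub_one] at *
    omega

/-- `dysonMap` as a map from the partitions of `n` of rank at most `c + 1`. -/
def dysonMapPartition (l : n.Partition) (hl : partsRank l.parts ≤ c + 1) : n'.Partition where
  parts := dysonMap c l.parts
  parts_pos hx := pos_of_mem_dysonMap hx
  parts_sum := by
    have := sum_dysonMap (c := c) (fun _ => l.parts_pos) (card_add_nonneg_of_partsRank_le h hl)
    rw [l.parts_sum] at this
    omega

/-- `dysonInv` as a map from the partitions of `n'` of rank at least `c - 1`. -/
def dysonInvPartition (l : n'.Partition) (hl : c - 1 ≤ partsRank l.parts) : n.Partition where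
  parts := dysonInv c l.parts
  parts_pos hx := pos_of_mem_dysonInv hx
  parts_sum := by
    have := sum_dysonInv (card_erase_sup_le_of_le_partsRank h hl) fun _ => l.parts_pos
    rw [l.parts_sum] at this
    omega

lemma sum_dysonMap_weight :
    (∑ l : n.Partition with partsRank l.parts ≤ c + 1,
      2 ^ (l.parts.toFinset.card + if partsRank l.parts ≤ c then 1 else 0) : ℤ) =
    ∑ l : n'.Partition with c - 1 ≤ partsRank l.parts,
      2 ^ (l.parts.toFinset.card + if c ≤ partsRank l.parts then 1 else 0) := by
  have hpos {k : ℕ} (l : k.Partition) : ∀ x ∈ l.parts, 0 < x := fun _ => l.parts_pos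
  have hfst {l : n.Partition}
      (hl : l ∈ ({l | partsRank l.parts ≤ c + 1} : Finset n.Partition)) :
      partsRank l.parts ≤ c + 1 :=
    (Finset.mem_filter.1 hl).2
  have hsnd {l : n'.Partition}
      (hl : l ∈ ({l | c - 1 ≤ partsRank l.parts} : Finset n'.Partition)) :
      c - 1 ≤ partsRank l.parts :=
    (Finset.mem_filter.1 hl).2
  have h0 {l : n.Partition} (hl) := card_add_nonneg_of_partsRank_le h (hfst (l := l) hl)
  have h1 {l : n'.Partition} (hl) := card_erase_sup_le_of_le_partsRank h (hsnd (l := l) hl)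
  refine Finset.sum_bij' (fun l hl => dysonMapPartition h l (hfst hl))
    (fun l hl => dysonInvPartition h l (hsnd hl)) ?_ ?_ ?_ ?_ ?_
  · exact fun l hl => (Finset.mem_filter_univ _).2
      (sub_one_le_partsRank_dysonMap (hfst hl) (h0 hl) (hpos l))
  · exact fun l hl => (Finset.mem_filter_univ _).2 (partsRank_dysonInv_le (h1 hl))
  · exact fun l hl => Nat.Partition.ext (dysonInv_dysonMap (hfst hl) (h0 hl) (hpos l))
  · exact fun l hl => Nat.Partition.ext (dysonMap_dysonInv (h1 hl) (hpos l))
  · exact fun l hl => congrArg (2 ^ ·) (card_toFinset_dysonMap (hfst hl) (h0 hl) (hpos l)).symm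

lemma tailSum_sub_one : tailSum (c - 1) n' = 2 * pbar n - tailSum (c + 1) n := by
  rw [← rankSum_one, tailSum, tailSum, ← rankSum_const_mul, ← rankSum_sub, rankSum, rankSum]
  have hweight := sum_dysonMap_weight h
  simp only [Finset.sum_filter] at hweight
  refine Eq.trans ?_ (hweight.symm.trans ?_)
  all_goals
    refine Finset.sum_congr rfl fun l _ => ?_
    simp only [tailWeight]
    split_ifs <;> first | omega | ring

end Dyson

lemma tailSum_neg (m n : ℕ) : tailSum (-m) n = 2 * pbar n - tailSum m n := by
  induction n using Nat.strong_induction_on generalizing m with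
  | _ n ih =>
    rcases le_or_gt n m with hnm | hmn
    · rw [← rankSum_one, ← rankSum_const_mul, tailSum, tailSum, ← rankSum_sub]
      refine Finset.sum_congr rfl fun l _ => congrArg _ ?_
      have hrank : |partsRank l.parts| < m ∨ (m = 0 ∧ partsRank l.parts = 0) := by
        rcases eq_or_ne n 0 with rfl | hn
        · have := abs_nonpos_iff.1 (abs_partsRank_le l)
          rw [this, abs_zero]
          omega
        · exact Or.inl ((abs_partsRank_lt hn l).trans_le (Nat.cast_le.2 hnm))
      rw [abs_lt] at hrank
      simp only [tailWeight]
      split_ifs <;> omega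
    · obtain ⟨k, rfl⟩ : ∃ k, n = k + (m + 1) := ⟨n - (m + 1), by omega⟩
      have hpos := tailSum_sub_one (c := m + 1) (n := k) (n' := k + (m + 1)) (by push_cast; ring)
      have hneg := tailSum_sub_one (c := -(m + 1)) (n := k + (m + 1)) (n' := k) (by push_cast; ring)
      have hk := ih k (by omega) (m + 2)
      rw [show (m : ℤ) + 1 - 1 = m by ring,
        show (m : ℤ) + 1 + 1 = ((m + 2 : ℕ) : ℤ) by push_cast; ring] at hpos
      rw [show -((m : ℤ) + 1) - 1 = -((m + 2 : ℕ) : ℤ) by push_cast; ring,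
        show -((m : ℤ) + 1) + 1 = -m by ring] at hneg
      linarith

lemma tailSum_zero (n : ℕ) : tailSum 0 n = pbar n := by
  have := tailSum_neg 0 n
  rw [Nat.cast_zero, neg_zero] at this
  linarith

lemma tailSum_nonneg (m : ℤ) (n : ℕ) : 0 ≤ tailSum m n := by
  unfold tailSum rankSum tailWeight
  positivity

lemma tailSum_le (m : ℤ) (n : ℕ) : tailSum m n ≤ 2 * pbar n := by
  rw [← rankSum_one, ← rankSum_const_mul]
  refine rankSum_mono (fun r => ?_) n
  unfold tailWeight
  split_ifs <;> norm_num

lemma tailSum_of_le {m n : ℕ} (hm : m ≠ 0) (h : n ≤ m) : tailSum m n = 0 := by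
  rw [tailSum, rankSum]
  refine Finset.sum_eq_zero fun l _ => mul_eq_zero_of_right _ ?_
  have hrank : partsRank l.parts < m := by
    rcases eq_or_ne n 0 with rfl | hn
    · have := abs_le.1 (abs_partsRank_le l)
      omega
    · have := abs_lt.1 (abs_partsRank_lt hn l)
      omega
  simp only [tailWeight, hrank.not_ge, hrank.not_gt, if_false, add_zero]

lemma rankSum_eq_add_one (k : ℤ) (n : ℕ) :
    rankSum (fun r => if r = k then 1 else 0) n + rankSum (fun r => if r = k + 1 then 1 else 0) n =
      tailSum k n - tailSum (k + 1) n := by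
  rw [tailSum, tailSum, ← rankSum_add, ← rankSum_sub]
  refine rankSum_congr fun r _ => ?_
  simp only [tailWeight]
  split_ifs <;> omega

lemma rankSum_eq_neg (k n : ℕ) :
    rankSum (fun r => if r = -k then 1 else 0) n = rankSum (fun r => if r = k then 1 else 0) n := by
  induction hj : n + 1 - k generalizing k with
  | zero =>
    refine rankSum_congr fun r hr => ?_
    rw [abs_le] at hr
    rw [if_neg (by omega), if_neg (by omega)]
  | succ j ih =>
    have hpos := rankSum_eq_add_one k n
    have hneg := rankSum_eq_add_one (-(k + 1 : ℕ)) n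
    have hnext := ih (k + 1) (by omega)
    rw [show -((k + 1 : ℕ) : ℤ) + 1 = -k by push_cast; ring, tailSum_neg, tailSum_neg] at hneg
    push_cast at hpos hneg hnext
    linarith

lemma rankSum_eq_sum (f : ℤ → ℤ) (n : ℕ) :
    rankSum f n =
      ∑ k ∈ Finset.Icc (-n : ℤ) n, f k * rankSum (fun r => if r = k then 1 else 0) n := by
  simp only [← rankSum_const_mul, ← rankSum_finset_sum]
  refine rankSum_congr fun r hr => ?_
  simp only [mul_ite, mul_one, mul_zero, Finset.sum_ite_eq, Finset.mem_Icc, ← abs_le, hr, if_true]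

lemma rankSum_comp_neg (f : ℤ → ℤ) (n : ℕ) : rankSum (fun r => f (-r)) n = rankSum f n := by
  rw [rankSum_eq_sum, rankSum_eq_sum f]
  refine Finset.sum_bij' (fun k _ => -k) (fun k _ => -k) ?_ ?_ ?_ ?_ ?_
  · exact fun k hk => by rw [Finset.mem_Icc] at hk ⊢; omega
  · exact fun k hk => by rw [Finset.mem_Icc] at hk ⊢; omega
  · exact fun k _ => neg_neg k
  · exact fun k _ => neg_neg k
  · intro k _
    obtain ⟨j, rfl | rfl⟩ := k.eq_nat_or_neg
    · rw [rankSum_eq_neg]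
    · rw [neg_neg, rankSum_eq_neg]

lemma sum_tailWeight_eq (N : ℕ) (r : ℤ) :
    ∑ t ∈ Finset.range N, (tailWeight (5 * t + 1) r - 3 * tailWeight (5 * t + 2) r +
      3 * tailWeight (5 * t + 3) r - tailWeight (5 * t + 4) r) =
      if 0 < r ∧ r < 5 * N then
        if r % 5 = 0 then 0 else if r % 5 = 1 ∨ r % 5 = 4 then 1 else -1
      else 0 := by
  induction N with
  | zero => rw [Finset.sum_range_zero, if_neg (by push_cast; omega)]
  | succ N ih =>
    rw [Finset.sum_range_succ, ih]
    simp only [tailWeight]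
    push_cast
    have := N.cast_nonneg (α := ℤ)
    generalize (N : ℤ) = M at *
    clear ih
    omega

/-- By the symmetry of the rank, `[r ≡ 1] - [r ≡ 2]` may be replaced by the quadratic character
modulo `5` restricted to positive ranks. -/
lemma nbar_one_sub_nbar_two (n : ℕ) :
    (nbar 1 5 n : ℤ) - nbar 2 5 n =
      ∑ t ∈ Finset.range (n + 1), (tailSum (5 * t + 1) n - 3 * tailSum (5 * t + 2) n +
        3 * tailSum (5 * t + 3) n - tailSum (5 * t + 4) n) := by
  let f (r : ℤ) : ℤ := (if r ≡ 1 [ZMOD 5] then 1 else 0) - if r ≡ 2 [ZMOD 5] then 1 else 0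
  let g (r : ℤ) : ℤ := ∑ t ∈ Finset.range (n + 1), (tailWeight (5 * t + 1) r -
    3 * tailWeight (5 * t + 2) r + 3 * tailWeight (5 * t + 3) r - tailWeight (5 * t + 4) r)
  have hf : (nbar 1 5 n : ℤ) - nbar 2 5 n = rankSum f n := by
    rw [rankSum_sub, ← cast_card_rank_eq_rankSum, ← cast_card_rank_eq_rankSum]
    rfl
  have hg : rankSum g n = ∑ t ∈ Finset.range (n + 1), (tailSum (5 * t + 1) n -
      3 * tailSum (5 * t + 2) n + 3 * tailSum (5 * t + 3) n - tailSum (5 * t + 4) n) := by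
    refine (rankSum_finset_sum _ _ n).trans (Finset.sum_congr rfl fun t _ => ?_)
    rw [rankSum_sub _ (tailWeight _), rankSum_add, rankSum_sub (tailWeight _), rankSum_const_mul,
      rankSum_const_mul]
    rfl
  have hodd : rankSum (fun r => f (-r) - g (-r)) n = rankSum (fun r => g r - f r) n :=
    rankSum_congr fun r hr => by
      rw [abs_le] at hr
      have hval (k : ℤ) := sum_tailWeight_eq (n + 1) k
      push_cast at hval
      simp only [f, g, Int.ModEq]
      rw [hval r, hval (-r)]
      split_ifs <;> omega
  rw [rankSum_comp_neg (fun r => f r - g r), rankSum_sub f, rankSum_sub g] at hodd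
  rw [hf, ← hg]
  linarith

lemma pbar_le (n : ℕ) : pbar n ≤ 4 ^ n := by
  have hcard : Fintype.card n.Partition ≤ 2 ^ n :=
    calc Fintype.card n.Partition ≤ Fintype.card (Composition n) :=
          Fintype.card_le_of_surjective _ Nat.Partition.ofComposition_surj
      _ = 2 ^ (n - 1) := composition_card n
      _ ≤ 2 ^ n := Nat.pow_le_pow_right two_pos (Nat.sub_le n 1)
  have hterm (l : n.Partition) : (2 : ℤ) ^ l.parts.toFinset.card * 1 ≤ 2 ^ n := by
    rw [mul_one]
    exact pow_le_pow_right₀ one_le_two ((Multiset.toFinset_card_le _).trans (card_parts_le l))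
  zify
  calc (pbar n : ℤ) ≤ ∑ _ : n.Partition, 2 ^ n := by
        rw [← rankSum_one]
        exact Finset.sum_le_sum fun l _ => hterm l
    _ = Fintype.card n.Partition * 2 ^ n := by
        rw [Finset.sum_const, Finset.card_univ, nsmul_eq_mul]
    _ ≤ 2 ^ n * 2 ^ n := mul_le_mul_of_nonneg_right (mod_cast hcard) (by positivity)
    _ = 4 ^ n := by rw [← mul_pow]; norm_num

end RankSums

section Theta

open Filter Topology

/-- The integer `k (k - 1) / 2`, the exponent of the theta series. -/
def triangle (k : ℤ) : ℤ := k * (k - 1) / 2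

/-- The `k`-th term `(-1)ᵏ p^(k (k - 1) / 2) zᵏ` of the theta series. -/
noncomputable def thetaTerm (p z : ℝ) (k : ℤ) : ℝ := (-1) ^ k * p ^ triangle k * z ^ k

/-- Jacobi's theta function `j(z; p) = ∑ₖ (-1)ᵏ p^(k (k - 1) / 2) zᵏ`, the sum being over all
integers. -/
noncomputable def theta (p z : ℝ) : ℝ := ∑' k : ℤ, thetaTerm p z k

/-- The logarithmic derivative `z ∂/∂z` applied to `theta p z`. -/
noncomputable def thetaDeriv (p z : ℝ) : ℝ := ∑' k : ℤ, k * thetaTerm p z k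

/-- The Appell–Lerch sum `∑ₖ (-1)ᵏ p^(k (k - 1) / 2) zᵏ / (1 - y pᵏ)`; since `0⁻¹ = 0`, a term
with vanishing denominator is left out. -/
noncomputable def appell (p z y : ℝ) : ℝ := ∑' k : ℤ, thetaTerm p z k * (1 - y * p ^ k)⁻¹

lemma two_mul_triangle (k : ℤ) : 2 * triangle k = k * (k - 1) :=
  Int.mul_ediv_cancel' (by simpa using (Int.even_mul_pred_self k).two_dvd)

lemma triangle_eq {k m : ℤ} (h : 2 * m = k * (k - 1)) : triangle k = m := by
  have := two_mul_triangle k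
  omega

lemma triangle_add (a b : ℤ) : triangle (a + b) = triangle a + triangle b + a * b :=
  triangle_eq (by linear_combination two_mul_triangle a + two_mul_triangle b)

lemma triangle_one_sub (k : ℤ) : triangle (1 - k) = triangle k :=
  triangle_eq (by linear_combination two_mul_triangle k)

lemma triangle_neg (k : ℤ) : triangle (-k) = triangle k + k :=
  triangle_eq (by linear_combination two_mul_triangle k)

lemma triangle_zero : triangle 0 = 0 := rfl

lemma triangle_one : triangle 1 = 0 := rfl

lemma neg_one_zpow_neg (k : ℤ) : (-1 : ℝ) ^ (-k) = (-1) ^ k := by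
  rw [← inv_zpow', inv_neg, inv_one]

variable {p z y : ℝ}

lemma thetaTerm_zero (p z : ℝ) : thetaTerm p z 0 = 1 := by
  rw [thetaTerm, triangle_zero, zpow_zero, zpow_zero, zpow_zero, one_mul, one_mul]

lemma thetaTerm_one (p z : ℝ) : thetaTerm p z 1 = -z := by
  rw [thetaTerm, triangle_one, zpow_one, zpow_zero, zpow_one, mul_one, neg_one_mul]

lemma thetaTerm_mul (p z w : ℝ) (k : ℤ) : thetaTerm p (z * w) k = thetaTerm p z k * w ^ k := by
  rw [thetaTerm, thetaTerm, mul_zpow, mul_assoc _ (z ^ k)]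

lemma thetaTerm_neg (hp : p ≠ 0) (k : ℤ) : thetaTerm p z (-k) = thetaTerm p (p * z⁻¹) k := by
  rw [thetaTerm, thetaTerm, triangle_neg, zpow_add₀ hp, mul_zpow, inv_zpow', neg_one_zpow_neg]
  ring

lemma thetaTerm_one_sub (hz : z ≠ 0) (k : ℤ) :
    thetaTerm p z (1 - k) = -z * thetaTerm p z⁻¹ k := by
  rw [thetaTerm, thetaTerm, triangle_one_sub, sub_eq_add_neg, zpow_add₀ (by norm_num),
    zpow_add₀ hz, inv_zpow', neg_one_zpow_neg, zpow_one, zpow_one]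
  ring

lemma abs_thetaTerm (hp : 0 < p) (hz : 0 < z) (k : ℤ) :
    |thetaTerm p z k| = p ^ triangle k * z ^ k := by
  rw [thetaTerm, abs_mul, abs_mul, abs_zpow, abs_neg, abs_one, one_zpow, one_mul,
    abs_of_pos (zpow_pos hp _), abs_of_pos (zpow_pos hz _)]

lemma thetaTerm_ne_zero (hp : 0 < p) (hz : 0 < z) (k : ℤ) : thetaTerm p z k ≠ 0 := by
  rw [← abs_pos, abs_thetaTerm hp hz]
  positivity

lemma thetaTerm_add (hp : p ≠ 0) (hz : z ≠ 0) (a b : ℤ) :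
    thetaTerm p z (a + b) = thetaTerm p z a * thetaTerm p z b * p ^ (a * b) := by
  simp only [thetaTerm]
  rw [triangle_add, zpow_add₀ (by norm_num), zpow_add₀ hp, zpow_add₀ hp, zpow_add₀ hz]
  ring

lemma thetaTerm_add_one (hp : p ≠ 0) (hz : z ≠ 0) (k : ℤ) :
    thetaTerm p z (k + 1) = -z * thetaTerm p (p * z) k := by
  rw [thetaTerm_add hp hz, thetaTerm_one, mul_one, mul_comm p z, thetaTerm_mul]
  ring

section Summability

lemma exists_abs_le_of_tendsto_nat {g : ℤ → ℝ} {a b : ℝ}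
    (ha : Tendsto (fun n : ℕ => g n) atTop (𝓝 a)) (hb : Tendsto (fun n : ℕ => g (-n)) atTop (𝓝 b)) :
    ∃ C, ∀ k, |g k| ≤ C := by
  obtain ⟨A, hA⟩ := ha.abs.bddAbove_range
  obtain ⟨B, hB⟩ := hb.abs.bddAbove_range
  refine ⟨max A B, fun k => ?_⟩
  obtain ⟨n, rfl | rfl⟩ := k.eq_nat_or_neg
  · exact le_max_of_le_left (hA ⟨n, rfl⟩)
  · exact le_max_of_le_right (hB ⟨n, rfl⟩)

variable (hp : 0 < p) (hp1 : p < 1)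
include hp hp1

lemma tendsto_inv_one_sub_mul_zpow_nat (y : ℝ) :
    Tendsto (fun n : ℕ => (1 - y * p ^ (n : ℤ))⁻¹) atTop (𝓝 1) := by
  have h := ((tendsto_pow_atTop_nhds_zero_of_lt_one hp.le hp1).const_mul y).const_sub 1
  rw [mul_zero, sub_zero] at h
  simpa only [zpow_natCast, inv_one] using h.inv₀ one_ne_zero

lemma tendsto_inv_one_sub_mul_zpow_neg_nat (hy : y ≠ 0) :
    Tendsto (fun n : ℕ => (1 - y * p ^ (-n : ℤ))⁻¹ / p ^ n) atTop (𝓝 (-y⁻¹)) := by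
  have h := (tendsto_pow_atTop_nhds_zero_of_lt_one hp.le hp1).sub_const y
  rw [zero_sub] at h
  rw [← inv_neg]
  refine (h.inv₀ (neg_ne_zero.2 hy)).congr fun n => ?_
  rw [zpow_neg, zpow_natCast, div_eq_mul_inv, ← mul_inv]
  congr 1
  have : p ^ n ≠ 0 := (pow_pos hp n).ne'
  field_simp

lemma exists_abs_inv_one_sub_mul_zpow_le (hy : y ≠ 0) : ∃ C, ∀ k : ℤ, |(1 - y * p ^ k)⁻¹| ≤ C := by
  refine exists_abs_le_of_tendsto_nat (tendsto_inv_one_sub_mul_zpow_nat hp hp1 y)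
    (((tendsto_inv_one_sub_mul_zpow_neg_nat hp hp1 hy).mul
      (tendsto_pow_atTop_nhds_zero_of_lt_one hp.le hp1)).congr fun n => ?_)
  exact div_mul_cancel₀ _ (pow_pos hp n).ne'

variable (hz : 0 < z)
include hz

lemma summable_nat_zpow_triangle_mul : Summable fun n : ℕ => p ^ triangle n * z ^ (n : ℤ) := by
  refine summable_of_ratio_test_tendsto_lt_one (l := 0) one_pos
    (Eventually.of_forall fun n => by positivity) ?_
  have hratio (n : ℕ) : ‖p ^ triangle (n + 1 : ℕ) * z ^ ((n + 1 : ℕ) : ℤ)‖ /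
      ‖p ^ triangle n * z ^ (n : ℤ)‖ = p ^ n * z := by
    have := (zpow_pos hp (triangle n)).ne'
    have := (zpow_pos hz n).ne'
    rw [Real.norm_of_nonneg (by positivity), Real.norm_of_nonneg (by positivity), Nat.cast_succ,
      triangle_add, triangle_one, add_zero, mul_one, zpow_add₀ hp.ne', zpow_add_one₀ hz.ne',
      ← zpow_natCast p n]
    field_simp
  simp_rw [hratio]
  simpa using (tendsto_pow_atTop_nhds_zero_of_lt_one hp.le hp1).mul_const z

lemma summable_zpow_triangle_mul : Summable fun k : ℤ => p ^ triangle k * z ^ k := by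
  refine .of_nat_of_neg (summable_nat_zpow_triangle_mul hp hp1 hz)
    ((summable_nat_zpow_triangle_mul hp hp1 (mul_pos hp (inv_pos.2 hz))).congr fun n => ?_)
  rw [triangle_neg, zpow_add₀ hp.ne', mul_zpow, inv_zpow']
  ring

lemma summable_thetaTerm : Summable (thetaTerm p z) :=
  .of_abs ((summable_zpow_triangle_mul hp hp1 hz).congr fun k => (abs_thetaTerm hp hz k).symm)

lemma summable_appell (hy : y ≠ 0) : Summable fun k : ℤ => thetaTerm p z k * (1 - y * p ^ k)⁻¹ := by
  obtain ⟨C, hC⟩ := exists_abs_inv_one_sub_mul_zpow_le hp hp1 hy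
  refine .of_norm_bounded ((summable_zpow_triangle_mul hp hp1 hz).mul_right C) fun k => ?_
  rw [Real.norm_eq_abs, abs_mul, abs_thetaTerm hp hz]
  exact mul_le_mul_of_nonneg_left (hC k) (by positivity)

omit hp hp1 hz in
lemma abs_intCast_le_two_zpow_add (k : ℤ) : |(k : ℝ)| ≤ 2 ^ k + 2⁻¹ ^ k := by
  have hlt (n : ℕ) : (n : ℝ) ≤ 2 ^ n := mod_cast Nat.lt_two_pow_self.le
  obtain ⟨n, rfl | rfl⟩ := k.eq_nat_or_neg
  · rw [Int.cast_natCast, abs_of_nonneg n.cast_nonneg, zpow_natCast]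
    exact (hlt n).trans (le_add_of_nonneg_right (by positivity))
  · rw [Int.cast_neg, abs_neg, Int.cast_natCast, abs_of_nonneg n.cast_nonneg, inv_zpow', neg_neg,
      zpow_natCast]
    exact (hlt n).trans (le_add_of_nonneg_left (by positivity))

lemma summable_intCast_mul_thetaTerm : Summable fun k : ℤ => (k : ℝ) * thetaTerm p z k := by
  refine .of_norm_bounded ((summable_zpow_triangle_mul hp hp1 (mul_pos hz two_pos)).add
    (summable_zpow_triangle_mul hp hp1 (mul_pos hz (inv_pos.2 two_pos)))) fun k => ?_
  rw [Real.norm_eq_abs, abs_mul, abs_thetaTerm hp hz]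
  refine (mul_le_mul_of_nonneg_right (abs_intCast_le_two_zpow_add k) (by positivity)).trans_eq ?_
  rw [mul_zpow, mul_zpow]
  ring

end Summability

section FunctionalEquations

lemma theta_mul_self (hp : p ≠ 0) (hz : z ≠ 0) : theta p (p * z) = -z⁻¹ * theta p z := by
  rw [theta, theta, ← (Equiv.addRight (1 : ℤ)).tsum_eq (thetaTerm p z), ← tsum_mul_left]
  refine tsum_congr fun k => ?_
  rw [Equiv.coe_addRight, thetaTerm_add_one hp hz]
  field_simp

lemma theta_inv (hz : z ≠ 0) : theta p z⁻¹ = -z⁻¹ * theta p z := by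
  rw [theta, theta, ← (Equiv.subLeft (1 : ℤ)).tsum_eq (thetaTerm p z), ← tsum_mul_left]
  refine tsum_congr fun k => ?_
  rw [Equiv.subLeft_apply, thetaTerm_one_sub hz]
  field_simp

lemma theta_one (p : ℝ) : theta p 1 = 0 := by
  have h := theta_inv (p := p) one_ne_zero
  rw [inv_one] at h
  linarith

lemma theta_mul_inv (hp : p ≠ 0) (hz : z ≠ 0) : theta p (p * z⁻¹) = theta p z := by
  rw [theta_mul_self hp (inv_ne_zero hz), theta_inv hz]
  field_simp

lemma theta_self (hp : p ≠ 0) : theta p p = 0 := by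
  have h := theta_mul_inv hp one_ne_zero
  rwa [inv_one, mul_one, theta_one] at h

lemma appell_mul_self (hp : p ≠ 0) (hz : z ≠ 0) (y : ℝ) :
    appell p (p * z) (p * y) = -z⁻¹ * appell p z y := by
  rw [appell, appell,
    ← (Equiv.addRight (1 : ℤ)).tsum_eq fun k => thetaTerm p z k * (1 - y * p ^ k)⁻¹,
    ← tsum_mul_left]
  refine tsum_congr fun k => ?_
  rw [Equiv.coe_addRight, thetaTerm_add_one hp hz, zpow_add_one₀ hp,
    show p * y * p ^ k = y * (p ^ k * p) by ring]
  field_simp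

lemma appell_eq_neg_appell_inv (hp : p ≠ 0) (hy : y ≠ 0) :
    appell p z y = -y⁻¹ * appell p (p * (p * z⁻¹)) y⁻¹ := by
  rw [appell, appell, ← (Equiv.neg ℤ).tsum_eq fun k => thetaTerm p z k * (1 - y * p ^ k)⁻¹,
    ← tsum_mul_left]
  refine tsum_congr fun k => ?_
  have hk : p ^ k ≠ 0 := zpow_ne_zero k hp
  rw [Equiv.neg_apply, thetaTerm_neg hp, mul_comm p (p * z⁻¹), thetaTerm_mul _ _ p, zpow_neg,
    show 1 - y * (p ^ k)⁻¹ = -(1 - y⁻¹ * p ^ k) * (y * (p ^ k)⁻¹) by field_simp; ring, mul_inv,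
    inv_neg, mul_inv, inv_inv]
  ring

variable (hp : 0 < p) (hp1 : p < 1) (hz : 0 < z)
include hp hp1 hz

lemma thetaDeriv_mul_self : thetaDeriv p (p * z) = -z⁻¹ * (thetaDeriv p z - theta p z) := by
  rw [thetaDeriv, thetaDeriv, theta, ← (summable_intCast_mul_thetaTerm hp hp1 hz).tsum_sub
    (summable_thetaTerm hp hp1 hz), ← (Equiv.addRight (1 : ℤ)).tsum_eq fun k =>
      (k : ℝ) * thetaTerm p z k - thetaTerm p z k, ← tsum_mul_left]
  refine tsum_congr fun k => ?_
  rw [Equiv.coe_addRight, thetaTerm_add_one hp.ne' hz.ne']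
  push_cast
  field_simp
  ring

lemma thetaDeriv_inv : thetaDeriv p z⁻¹ = -z⁻¹ * (theta p z - thetaDeriv p z) := by
  rw [thetaDeriv, thetaDeriv, theta, ← (summable_thetaTerm hp hp1 hz).tsum_sub
    (summable_intCast_mul_thetaTerm hp hp1 hz), ← (Equiv.subLeft (1 : ℤ)).tsum_eq fun k =>
      thetaTerm p z k - (k : ℝ) * thetaTerm p z k, ← tsum_mul_left]
  refine tsum_congr fun k => ?_
  rw [Equiv.subLeft_apply, thetaTerm_one_sub hz.ne']
  push_cast
  field_simp
  ring

end FunctionalEquations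

end Theta

section AppellRelation

open Filter Topology

/-- Kronecker's sum `∑ₙ aⁿ / (1 - b pⁿ)` over all integers, which converges for `p < a < 1`. -/
noncomputable def kronecker (p a b : ℝ) : ℝ := ∑' n : ℤ, a ^ n * (1 - b * p ^ n)⁻¹

/-- The coefficient of `vⁱ` in the expansion of `(1 - v)⁻¹` at `v = 0` if `0 < t`, and at `v = ∞`
if `t ≤ 0`. -/
noncomputable def geomSign (i t : ℤ) : ℝ := (if 0 ≤ i then 1 else 0) - if t ≤ 0 then 1 else 0

/-- The coefficients of `appell p z (x * z)` in its expansion along the terms of `theta p z`; see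
`hasSum_thetaTerm_mul_appellCoeff`. The sum is finite. -/
noncomputable def appellCoeff (p x : ℝ) (s : ℤ) : ℝ :=
  ∑' i, geomSign i (s - i) * (thetaTerm p x⁻¹ i)⁻¹

/-- The automorphism `(a, b) ↦ (a + b, b)` of `ℤ²`, used to rearrange double series. -/
def shear : ℤ × ℤ ≃ ℤ × ℤ where
  toFun x := (x.1 + x.2, x.2)
  invFun x := (x.1 - x.2, x.2)
  left_inv x := by simp
  right_inv x := by simp

variable {p a b v x z w y : ℝ}

lemma summable_zpow_mul_zpow_natAbs (hp : 0 < p) (ha : p < a) (ha1 : a < p⁻¹) :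
    Summable fun n : ℤ => a ^ n * p ^ n.natAbs := by
  have ha0 : 0 < a := hp.trans ha
  refine .of_nat_of_neg
    ((summable_geometric_of_lt_one (r := a * p) (by positivity) ?_).congr fun n => ?_)
    ((summable_geometric_of_lt_one (r := a⁻¹ * p) (by positivity) ?_).congr fun n => ?_)
  · exact (lt_inv_mul_iff₀' hp).1 (by simpa using ha1)
  · rw [mul_pow, zpow_natCast, Int.natAbs_natCast]
  · exact inv_mul_lt_one₀ ha0 |>.2 ha
  · rw [mul_pow, zpow_neg, zpow_natCast, Int.natAbs_neg, Int.natAbs_natCast, inv_pow]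

lemma exists_abs_inv_one_sub_sub_le (hp : 0 < p) (hp1 : p < 1) (hb : b ≠ 0) :
    ∃ C, ∀ n : ℤ, |(1 - b * p ^ n)⁻¹ - if 0 ≤ n then 1 else 0| ≤ C * p ^ n.natAbs := by
  set g : ℤ → ℝ := fun n => ((1 - b * p ^ n)⁻¹ - if 0 ≤ n then 1 else 0) / p ^ n.natAbs with hg
  have hnonneg : Tendsto (fun n : ℕ => g n) atTop (𝓝 b) := by
    have hlim := tendsto_inv_one_sub_mul_zpow_nat hp hp1 b
    have hmul := hlim.const_mul b
    rw [mul_one] at hmul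
    refine hmul.congr' ?_
    filter_upwards [hlim.eventually_ne one_ne_zero] with n hn
    have : 1 - b * p ^ n ≠ 0 := by simpa using hn
    have := (pow_pos hp n).ne'
    simp only [hg, if_pos n.cast_nonneg, Int.natAbs_natCast, zpow_natCast]
    field_simp
    ring
  have hneg : Tendsto (fun n : ℕ => g (-n)) atTop (𝓝 (-b⁻¹)) := by
    refine (tendsto_inv_one_sub_mul_zpow_neg_nat hp hp1 hb).congr' ?_
    filter_upwards [eventually_gt_atTop 0] with n hn
    have : ¬0 ≤ -(n : ℤ) := by omega
    simp only [hg, if_neg this, sub_zero, Int.natAbs_neg, Int.natAbs_natCast]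
  obtain ⟨C, hC⟩ := exists_abs_le_of_tendsto_nat hnonneg hneg
  refine ⟨C, fun n => ?_⟩
  have h := hC n
  rwa [abs_div, abs_of_pos (pow_pos hp _), div_le_iff₀ (pow_pos hp _)] at h

lemma hasSum_zpow_of_lt_one (hv : 0 < v) (hv1 : v < 1) :
    HasSum (fun i : ℤ => (if 0 ≤ i then 1 else 0) * v ^ i) (1 - v)⁻¹ := by
  rw [← add_zero (1 - v)⁻¹]
  refine HasSum.of_nat_of_neg_add_one
    ((hasSum_geometric_of_lt_one hv.le hv1).congr_fun fun n => ?_)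
    (hasSum_zero.congr_fun fun n => ?_)
  · rw [if_pos n.cast_nonneg, one_mul, zpow_natCast]
  · rw [if_neg (by omega), zero_mul]

lemma summable_kronecker (hp : 0 < p) (hp1 : p < 1) (ha : p < a) (ha1 : a < 1) (hb : b ≠ 0) :
    Summable fun n : ℤ => a ^ n * (1 - b * p ^ n)⁻¹ := by
  have ha0 : 0 < a := hp.trans ha
  obtain ⟨C, hC⟩ := exists_abs_inv_one_sub_sub_le hp hp1 hb
  have hrest : Summable fun n : ℤ => a ^ n * ((1 - b * p ^ n)⁻¹ - if 0 ≤ n then 1 else 0) := by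
    refine .of_norm_bounded ((summable_zpow_mul_zpow_natAbs hp ha
      (ha1.trans (one_lt_inv₀ hp |>.2 hp1))).mul_left C) fun n => ?_
    rw [Real.norm_eq_abs, abs_mul, abs_of_pos (zpow_pos ha0 n), mul_left_comm]
    exact mul_le_mul_of_nonneg_left (hC n) (by positivity)
  exact (hrest.add (hasSum_zpow_of_lt_one ha0 ha1).summable).congr fun n => by ring

section GeometricExpansion

lemma geomSign_add_one (i t : ℤ) : geomSign i (t + 1) = geomSign i t + if t = 0 then 1 else 0 := by
  rw [geomSign, geomSign]
  split_ifs <;> first | omega | norm_num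

lemma hasSum_geomSign (hv : 0 < v) {t : ℤ} (ht : (1 ≤ t ∧ v < 1) ∨ (t ≤ 0 ∧ 1 < v)) :
    HasSum (fun i : ℤ => geomSign i t * v ^ i) (1 - v)⁻¹ := by
  obtain ⟨ht, hv1⟩ | ⟨ht, hv1⟩ := ht
  · have ht' : ¬t ≤ 0 := by omega
    simpa only [geomSign, if_neg ht', sub_zero] using hasSum_zpow_of_lt_one hv hv1
  · have hsum := ((hasSum_zpow_of_lt_one (inv_pos.2 hv) (inv_lt_one_of_one_lt₀ hv1)).mul_left
      (-v⁻¹))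
    rw [← (Equiv.subLeft (-1 : ℤ)).hasSum_iff] at hsum
    have hval : -v⁻¹ * (1 - v⁻¹)⁻¹ = (1 - v)⁻¹ := by
      rw [neg_mul, ← mul_inv, ← inv_neg, mul_one_sub, mul_inv_cancel₀ hv.ne', neg_sub]
    rw [hval] at hsum
    refine hsum.congr_fun fun i => ?_
    have hneg : (if 0 ≤ -1 - i then 1 else 0 : ℝ) = -geomSign i t := by
      rw [geomSign, if_pos ht]
      split_ifs <;> first | omega | norm_num
    rw [Function.comp_apply, Equiv.subLeft_apply, hneg, inv_zpow', neg_sub, sub_neg_eq_add,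
      zpow_add_one₀ hv.ne']
    field_simp

lemma hasSum_abs_geomSign (hv : 0 < v) {t : ℤ} (ht : (1 ≤ t ∧ v < 1) ∨ (t ≤ 0 ∧ 1 < v)) :
    HasSum (fun i : ℤ => |geomSign i t * v ^ i|) |(1 - v)⁻¹| := by
  have hsum := hasSum_geomSign hv ht
  obtain ⟨ht, -⟩ | ⟨ht, -⟩ := ht
  · have hpos (i : ℤ) : 0 ≤ geomSign i t * v ^ i := by
      rw [geomSign, if_neg (show ¬t ≤ 0 by omega), sub_zero]
      positivity
    rw [abs_of_nonneg (hsum.nonneg hpos)]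
    exact hsum.congr_fun fun i => abs_of_nonneg (hpos i)
  · have hneg (i : ℤ) : geomSign i t * v ^ i ≤ 0 := by
      refine mul_nonpos_of_nonpos_of_nonneg ?_ (by positivity)
      rw [geomSign, if_pos ht]
      split_ifs <;> norm_num
    rw [abs_of_nonpos (hsum.nonpos hneg)]
    exact hsum.neg.congr_fun fun i => abs_of_nonpos (hneg i)

lemma appellCoeff_zero (p x : ℝ) : appellCoeff p x 0 = 0 := by
  refine (tsum_congr fun i => ?_).trans tsum_zero
  simp only [geomSign, zero_sub, Int.neg_nonpos_iff, sub_self, zero_mul]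

lemma summable_geomSign_sub_mul (s : ℤ) (f : ℤ → ℝ) :
    Summable fun i => geomSign i (s - i) * f i := by
  refine summable_of_hasFiniteSupport ((Set.finite_Icc (min 0 s) (max 0 s)).subset fun i hi => ?_)
  by_contra hnot
  refine hi ?_
  have : geomSign i (s - i) = 0 := by
    rw [geomSign]
    rw [Set.mem_Icc, min_le_iff, le_max_iff] at hnot
    split_ifs <;> first | omega | norm_num
  simp only [this, zero_mul]

lemma appellCoeff_add_one (p x : ℝ) (s : ℤ) :
    appellCoeff p x (s + 1) = appellCoeff p x s + (thetaTerm p x⁻¹ s)⁻¹ := by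
  rw [appellCoeff, appellCoeff, ← tsum_ite_eq s fun _ => (thetaTerm p x⁻¹ s)⁻¹,
    ← (summable_geomSign_sub_mul s _).tsum_add (hasSum_ite_eq s _).summable]
  refine tsum_congr fun i => ?_
  rw [show s + 1 - i = s - i + 1 by ring, geomSign_add_one, add_mul]
  congr 1
  by_cases hi : i = s
  · rw [if_pos (by omega), if_pos hi, one_mul, hi]
  · rw [if_neg (by omega), if_neg hi, zero_mul]

variable (hp : 0 < p) (hp1 : p < 1) (hz : 0 < z)
include hp hp1 hz

lemma hasSum_thetaTerm_mul_geomSign (hy : 1 < y) (hyp : y * p < 1) :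
    HasSum (fun u : ℤ × ℤ => thetaTerm p z u.1 * (geomSign u.2 u.1 * (y * p ^ u.1) ^ u.2))
      (appell p z y) := by
  have hy0 : 0 < y := one_pos.trans hy
  have hpos (t : ℤ) : 0 < y * p ^ t := by positivity
  have hsep (t : ℤ) : (1 ≤ t ∧ y * p ^ t < 1) ∨ (t ≤ 0 ∧ 1 < y * p ^ t) := by
    obtain ht | ht := le_or_gt 1 t
    · have : p ^ t ≤ p ^ (1 : ℤ) := zpow_le_zpow_right_of_le_one₀ hp hp1.le ht
      rw [zpow_one] at this
      exact .inl ⟨ht, (mul_le_mul_of_nonneg_left this hy0.le).trans_lt hyp⟩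
    · have ht : t ≤ 0 := by omega
      exact .inr ⟨ht, one_lt_mul_of_lt_of_le hy (one_le_zpow_of_nonpos₀ hp hp1.le ht)⟩
  have hrow (t : ℤ) := (hasSum_abs_geomSign (hpos t) (hsep t)).mul_left |thetaTerm p z t|
  simp_rw [← abs_mul] at hrow
  have hsum : Summable fun u : ℤ × ℤ =>
      thetaTerm p z u.1 * (geomSign u.2 u.1 * (y * p ^ u.1) ^ u.2) := by
    rw [← summable_abs_iff, summable_prod_of_nonneg fun _ => abs_nonneg _]
    refine ⟨fun t => (hrow t).summable, ?_⟩
    simp_rw [fun t => (hrow t).tsum_eq]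
    exact (summable_appell hp hp1 hz hy0.ne').abs
  rw [appell, ← tsum_congr fun t => ((hasSum_geomSign (hpos t) (hsep t)).mul_left _).tsum_eq,
    ← hsum.tsum_prod]
  exact hsum.hasSum

lemma hasSum_thetaTerm_mul_appellCoeff (hx : 0 < x) (h1 : 1 < x * z) (h2 : x * z * p < 1) :
    HasSum (fun s => thetaTerm p z s * appellCoeff p x s) (appell p z (x * z)) := by
  have hsum := shear.symm.hasSum_iff.2 (hasSum_thetaTerm_mul_geomSign hp hp1 hz h1 h2)
  have hterm (s i : ℤ) : thetaTerm p z (s - i) * (geomSign i (s - i) * (x * z * p ^ (s - i)) ^ i) =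
      thetaTerm p z s * (geomSign i (s - i) * (thetaTerm p x⁻¹ i)⁻¹) := by
    have hmul : thetaTerm p z i = thetaTerm p x⁻¹ i * (x * z) ^ i := by
      rw [← thetaTerm_mul, inv_mul_cancel_left₀ hx.ne']
    have hcancel := mul_inv_cancel₀ (thetaTerm_ne_zero hp (inv_pos.2 hx) i)
    have hs : thetaTerm p z s = thetaTerm p z (s - i) * thetaTerm p z i * (p ^ (s - i)) ^ i := by
      rw [← zpow_mul, ← thetaTerm_add hp.ne' hz.ne', sub_add_cancel]
    rw [hs, hmul, mul_zpow]
    linear_combination -thetaTerm p z (s - i) * (x * z) ^ i * (p ^ (s - i)) ^ i *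
      geomSign i (s - i) * hcancel
  refine (hsum.prod_fiberwise fun s => (hsum.summable.prod_factor s).hasSum).congr_fun fun s => ?_
  rw [appellCoeff, ← tsum_mul_left]
  exact tsum_congr fun i => (hterm s i).symm

end GeometricExpansion

lemma thetaTerm_mul_theta_zpow_mul (hp : p ≠ 0) (hz : z ≠ 0) (s : ℤ) :
    thetaTerm p z s * theta p (p ^ s * z) = theta p z := by
  rw [theta, theta, ← (Equiv.addRight s).tsum_eq (thetaTerm p z), ← tsum_mul_left]
  refine tsum_congr fun k => ?_
  rw [Equiv.coe_addRight, thetaTerm_add hp hz, mul_comm _ z, thetaTerm_mul, ← zpow_mul, mul_comm s]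
  ring

variable (hp : 0 < p) (hp1 : p < 1)
include hp hp1

lemma appell_sub_mul_appell_mul_self (hz : 0 < z) (hy : 0 < y)
    (hy1 : ∀ k : ℤ, k ≠ 0 → y * p ^ k ≠ 1) :
    appell p z y - y * appell p (p * z) y = theta p z - if y = 1 then 1 else 0 := by
  have h := (summable_appell hp hp1 hz hy.ne').hasSum.sub
    ((summable_appell hp hp1 (mul_pos hp hz) hy.ne').hasSum.mul_left y)
  refine h.unique (((summable_thetaTerm hp hp1 hz).hasSum.sub
    (hasSum_ite_eq (0 : ℤ) (if y = 1 then (1 : ℝ) else 0))).congr_fun fun k => ?_)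
  rw [mul_comm p z, thetaTerm_mul]
  have hcancel (hne : y * p ^ k ≠ 1) : (1 - y * p ^ k) * (1 - y * p ^ k)⁻¹ = 1 :=
    mul_inv_cancel₀ (sub_ne_zero.2 hne.symm)
  obtain rfl | hk := eq_or_ne k 0
  · rw [if_pos rfl]
    split_ifs with h1
    · simp [h1, thetaTerm_zero]
    · linear_combination thetaTerm p z 0 * hcancel (by simpa using h1)
  · rw [if_neg hk]
    linear_combination thetaTerm p z k * hcancel (hy1 k hk)

lemma hasSum_thetaTerm_mul_appell (hz : 0 < z) (hy : 0 < y) (h1 : p < w / (y * z))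
    (h2 : w / (y * z) < 1) :
    HasSum (fun s : ℤ => thetaTerm p z s * (y ^ s * appell p (p ^ s * w) y))
      (theta p (y * z) * kronecker p (w / (y * z)) y) := by
  have hyz : 0 < y * z := mul_pos hy hz
  have hT := (summable_thetaTerm hp hp1 hyz).norm
  have hK := (summable_kronecker hp hp1 h1 h2 hy.ne').norm
  have hsum := shear.hasSum_iff.2 (summable_mul_of_summable_norm hT hK).hasSum
  rw [← tsum_mul_tsum_of_summable_norm hT hK] at hsum
  refine (hsum.prod_fiberwise fun s => (hsum.summable.prod_factor s).hasSum).congr_fun fun s => ?_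
  rw [appell, ← tsum_mul_left, ← tsum_mul_left]
  refine tsum_congr fun n => ?_
  have hn : thetaTerm p (y * z) n * (w / (y * z)) ^ n = thetaTerm p w n := by
    rw [← thetaTerm_mul, mul_div_cancel₀ _ hyz.ne']
  have hs : thetaTerm p (y * z) s = thetaTerm p z s * y ^ s := by rw [mul_comm, thetaTerm_mul]
  change _ = thetaTerm p (y * z) (s + n) * ((w / (y * z)) ^ n * (1 - y * p ^ n)⁻¹)
  rw [thetaTerm_add hp.ne' hyz.ne', hs, mul_comm _ w, thetaTerm_mul, ← hn, zpow_mul]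
  ring

lemma zpow_mul_appell_zpow_mul (hx : 0 < x) (hw : 0 < w)
    (hxw : ∀ k : ℤ, k ≠ 0 → x * w * p ^ k ≠ 1) (s : ℤ) :
    (x * w) ^ s * appell p (p ^ s * w) (x * w) =
      appell p w (x * w) - theta p w * appellCoeff p x s + (if x * w = 1 then 1 else 0) * s := by
  have hstep (s : ℤ) : (x * w) ^ s * appell p (p ^ s * w) (x * w) -
      (x * w) ^ (s + 1) * appell p (p ^ (s + 1) * w) (x * w) =
        theta p w * (thetaTerm p x⁻¹ s)⁻¹ - if x * w = 1 then 1 else 0 := by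
    have hrec := appell_sub_mul_appell_mul_self hp hp1 (z := p ^ s * w) (by positivity)
      (mul_pos hx hw) hxw
    have htheta : (x * w) ^ s * theta p (p ^ s * w) = theta p w * (thetaTerm p x⁻¹ s)⁻¹ := by
      rw [eq_mul_inv_iff_mul_eq₀ (thetaTerm_ne_zero hp (inv_pos.2 hx) s),
        ← thetaTerm_mul_theta_zpow_mul hp.ne' hw.ne' s, ← inv_mul_cancel_left₀ hx.ne' w,
        thetaTerm_mul, inv_mul_cancel_left₀ hx.ne']
      ring
    have hone : (x * w) ^ s * (if x * w = 1 then 1 else 0) = if x * w = 1 then (1 : ℝ) else 0 := by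
      split_ifs with h
      · rw [h, one_zpow, one_mul]
      · rw [mul_zero]
    rw [zpow_add_one₀ (mul_pos hx hw).ne', zpow_add_one₀ hp.ne', mul_comm (p ^ s) p,
      mul_assoc p]
    linear_combination (x * w) ^ s * hrec + htheta - hone
  induction s using Int.induction_on with
  | zero => simp [appellCoeff_zero]
  | succ n ih =>
    rw [appellCoeff_add_one]
    push_cast
    linear_combination ih - hstep n
  | pred n ih =>
    have hcoeff := appellCoeff_add_one p x (-n - 1)
    have hlast := hstep (-n - 1)
    rw [sub_add_cancel] at hcoeff hlast
    push_cast at ih ⊢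
    linear_combination ih + hlast - theta p w * hcoeff

lemma theta_mul_kronecker (hx : 0 < x) (hz : 0 < z) (hw : 0 < w) (h1 : 1 < x * z)
    (h2 : x * z * p < 1) (hxw : ∀ k : ℤ, k ≠ 0 → x * w * p ^ k ≠ 1) :
    theta p (x * z * w) * kronecker p (x * z)⁻¹ (x * w) =
      theta p z * appell p w (x * w) - theta p w * appell p z (x * z) +
        if x * w = 1 then thetaDeriv p z else 0 := by
  have hxz : 0 < x * z := mul_pos hx hz
  have hquot : w / (x * w * z) = (x * z)⁻¹ := by field_simp
  have hleft := hasSum_thetaTerm_mul_appell hp hp1 hz (mul_pos hx hw)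
    (by rwa [hquot, lt_inv_comm₀ hp hxz, ← one_div, lt_div_iff₀ hp])
    (by rw [hquot]; exact inv_lt_one_of_one_lt₀ h1)
  rw [hquot, mul_right_comm] at hleft
  have hright := (((summable_thetaTerm hp hp1 hz).hasSum.mul_right (appell p w (x * w))).sub
    ((hasSum_thetaTerm_mul_appellCoeff hp hp1 hz hx h1 h2).mul_left (theta p w))).add
      ((summable_intCast_mul_thetaTerm hp hp1 hz).hasSum.mul_left (if x * w = 1 then 1 else 0))
  rw [ite_mul, one_mul, zero_mul] at hright
  refine hleft.unique (hright.congr_fun fun s => ?_)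
  rw [zpow_mul_appell_zpow_mul hp hp1 hx hw hxw]
  ring

end AppellRelation

section TripleProduct

open Filter Topology Finset

/-- The finite `q`-Pochhammer symbol `(z; p)ₙ = ∏_{i < n} (1 - z pⁱ)`. -/
noncomputable def qPochFin (p z : ℝ) (n : ℕ) : ℝ := ∏ i ∈ range n, (1 - z * p ^ i)

/-- The `q`-Pochhammer symbol `(z; p)_∞ = ∏ᵢ (1 - z pⁱ)`. -/
noncomputable def qPoch (p z : ℝ) : ℝ := ∏' i : ℕ, (1 - z * p ^ i)

/-- The reciprocal `1 / (p; p)ₘ` of the `q`-factorial, extended by `0` to negative integers. -/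
noncomputable def qFactorialInv (p : ℝ) (m : ℤ) : ℝ :=
  if m < 0 then 0 else (qPochFin p p m.toNat)⁻¹

/-- The Gaussian binomial coefficient `[2N, N + k]` with parameter `p`. -/
noncomputable def gaussBinom (p : ℝ) (N : ℕ) (k : ℤ) : ℝ :=
  qPochFin p p (2 * N) * qFactorialInv p (N - k) * qFactorialInv p (N + k)

lemma qPochFin_zero (p z : ℝ) : qPochFin p z 0 = 1 := prod_range_zero _

lemma qPochFin_succ (p z : ℝ) (n : ℕ) :
    qPochFin p z (n + 1) = qPochFin p z n * (1 - z * p ^ n) :=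
  prod_range_succ _ n

variable {p z : ℝ} (hp : 0 < p) (hp1 : p < 1)
include hp hp1

lemma summable_mul_pow (z : ℝ) : Summable fun i : ℕ => z * p ^ i :=
  (summable_geometric_of_lt_one hp.le hp1).mul_left z

lemma multipliable_one_sub_mul_pow (z : ℝ) : Multipliable fun i : ℕ => 1 - z * p ^ i := by
  simpa only [sub_eq_add_neg] using
    Real.multipliable_one_add_of_summable (summable_mul_pow hp hp1 z).neg

lemma tendsto_qPochFin (z : ℝ) : Tendsto (qPochFin p z) atTop (𝓝 (qPoch p z)) :=
  (multipliable_one_sub_mul_pow hp hp1 z).hasProd.tendsto_prod_nat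

lemma qPoch_eq_one_sub_mul (z : ℝ) : qPoch p z = (1 - z) * qPoch p (p * z) := by
  have hshift : ∀ i : ℕ, 1 - z * p ^ (i + 1) = 1 - p * z * p ^ i := fun i => by ring
  have hmul := multipliable_one_sub_mul_pow hp hp1 (p * z)
  rw [qPoch, tprod_eq_zero_mul' (hmul.congr fun i => (hshift i).symm), pow_zero, mul_one]
  exact congr_arg _ (tprod_congr hshift)

lemma mul_pow_lt_one (hz : z < 1) (i : ℕ) : z * p ^ i < 1 := by
  have h0 := pow_pos hp i
  have h1 := pow_le_one₀ hp.le hp1.le (n := i)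
  nlinarith

lemma qPochFin_pos (hz : z < 1) (n : ℕ) : 0 < qPochFin p z n :=
  prod_pos fun i _ => sub_pos.2 (mul_pow_lt_one hp hp1 hz i)

lemma qPoch_pos (hz : z < 1) : 0 < qPoch p z := by
  refine (ge_of_tendsto' (tendsto_qPochFin hp hp1 z) fun n =>
    (qPochFin_pos hp hp1 hz n).le).lt_of_ne' ?_
  have h := tprod_one_add_ne_zero_of_summable (f := fun i : ℕ => -(z * p ^ i))
    (fun i => by rw [← sub_eq_add_neg]; exact (sub_pos.2 (mul_pow_lt_one hp hp1 hz i)).ne')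
    (summable_mul_pow hp hp1 z).neg.norm
  simpa only [qPoch, sub_eq_add_neg] using h

lemma continuous_qPoch : Continuous (qPoch p) := by
  refine continuous_iff_continuousAt.2 fun z => ?_
  have h := tendsto_tprod_one_add_of_dominated_convergence (𝓕 := 𝓝 z)
    (f := fun (w : ℝ) (i : ℕ) => -(w * p ^ i)) (summable_mul_pow hp hp1 (|z| + 1))
    (fun i => ((continuous_id.mul continuous_const).neg).tendsto z) ?_
  · simpa only [ContinuousAt, qPoch, sub_eq_add_neg] using! h
  · filter_upwards [(continuous_abs.tendsto z).eventually (gt_mem_nhds (lt_add_one |z|))]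
      with w hw i
    rw [norm_neg, norm_mul, Real.norm_eq_abs, Real.norm_eq_abs, abs_of_pos (pow_pos hp i)]
    exact mul_le_mul_of_nonneg_right hw.le (pow_pos hp i).le

lemma antitone_qPochFin_self : Antitone (qPochFin p p) := by
  refine antitone_nat_of_succ_le fun n => ?_
  rw [qPochFin_succ]
  exact mul_le_of_le_one_right (qPochFin_pos hp hp1 hp1 n).le (sub_le_self _ (by positivity))

lemma qPochFin_self_le_one (n : ℕ) : qPochFin p p n ≤ 1 :=
  (antitone_qPochFin_self hp hp1 n.zero_le).trans_eq (qPochFin_zero p p)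

lemma qFactorialInv_nonneg (m : ℤ) : 0 ≤ qFactorialInv p m := by
  rw [qFactorialInv]
  split_ifs
  · exact le_rfl
  · exact (inv_pos.2 (qPochFin_pos hp hp1 hp1 _)).le

lemma qFactorialInv_le (m : ℤ) : qFactorialInv p m ≤ (qPoch p p)⁻¹ := by
  have hpos := qPoch_pos hp hp1 hp1
  rw [qFactorialInv]
  split_ifs
  · exact (inv_pos.2 hpos).le
  · exact inv_anti₀ hpos
      ((antitone_qPochFin_self hp hp1).le_of_tendsto (tendsto_qPochFin hp hp1 p) _)

lemma qFactorialInv_sub_one (m : ℤ) :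
    qFactorialInv p (m - 1) = (1 - p ^ m) * qFactorialInv p m := by
  rw [qFactorialInv, qFactorialInv]
  obtain h | rfl | h := lt_trichotomy m 0
  · rw [if_pos (by omega), if_pos h, mul_zero]
  · norm_num
  · obtain ⟨n, rfl⟩ : ∃ n : ℕ, m = n + 1 := ⟨(m - 1).toNat, by omega⟩
    have hfac : 1 - p * p ^ n ≠ 0 := (sub_pos.2 (mul_pow_lt_one hp hp1 hp1 n)).ne'
    rw [if_neg (by omega), if_neg (by omega), add_sub_cancel_right, Int.toNat_natCast,
      Int.toNat_natCast_add_one, qPochFin_succ, zpow_add_one₀ hp.ne', zpow_natCast, mul_comm _ p,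
      mul_inv, mul_left_comm, mul_inv_cancel₀ hfac, mul_one]

lemma tendsto_qFactorialInv (k : ℤ) :
    Tendsto (fun N : ℕ => qFactorialInv p (N + k)) atTop (𝓝 (qPoch p p)⁻¹) := by
  have hlim : Tendsto (fun N : ℕ => ((N : ℤ) + k).toNat) atTop atTop :=
    tendsto_atTop_mono (fun N => show N - (-k).toNat ≤ _ by omega) (tendsto_sub_atTop_nat _)
  refine (((tendsto_qPochFin hp hp1 p).comp hlim).inv₀ (qPoch_pos hp hp1 hp1).ne').congr' ?_
  filter_upwards [eventually_ge_atTop (-k).toNat] with N hN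
  rw [qFactorialInv, if_neg (by omega), Function.comp_apply]

lemma gaussBinom_succ (N : ℕ) (k : ℤ) :
    gaussBinom p (N + 1) k = (1 + p ^ (2 * N + 1)) * gaussBinom p N k +
      p ^ (N - k + 1) * gaussBinom p N (k - 1) + p ^ (N + k + 1) * gaussBinom p N (k + 1) := by
  have hsub := qFactorialInv_sub_one hp hp1 (N - k + 1)
  have hadd := qFactorialInv_sub_one hp hp1 (N + k + 1)
  rw [add_sub_cancel_right] at hsub hadd
  simp only [gaussBinom]
  rw [show (N : ℤ) - (k - 1) = N - k + 1 by ring, show (N : ℤ) + (k - 1) = N + k - 1 by ring,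
    show (N : ℤ) - (k + 1) = N - k - 1 by ring, ← add_assoc (N : ℤ) k 1, Nat.cast_succ,
    show (N : ℤ) + 1 - k = N - k + 1 by ring, show (N : ℤ) + 1 + k = N + k + 1 by ring,
    qFactorialInv_sub_one hp hp1 (N - k), qFactorialInv_sub_one hp hp1 (N + k), hsub, hadd,
    show 2 * (N + 1) = 2 * N + 1 + 1 by ring, qPochFin_succ, qPochFin_succ, zpow_add_one₀ hp.ne',
    zpow_add_one₀ hp.ne', zpow_sub₀ hp.ne', zpow_add₀ hp.ne', zpow_natCast]
  have hk : p ^ k ≠ 0 := zpow_ne_zero k hp.ne'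
  field_simp
  ring

omit hp1 in
lemma thetaTerm_mul_zpow (hz : z ≠ 0) (k : ℤ) :
    thetaTerm p z k * p ^ (-k + 1) = -z * thetaTerm p z (k - 1) := by
  have h := thetaTerm_add_one hp.ne' hz (k - 1)
  rw [sub_add_cancel, mul_comm p, thetaTerm_mul] at h
  rw [h, mul_assoc, mul_assoc, ← zpow_add₀ hp.ne', show k - 1 + (-k + 1) = 0 by ring, zpow_zero,
    mul_one]

lemma hasSum_thetaTerm_mul_gaussBinom (hz : z ≠ 0) (N : ℕ) :
    HasSum (fun k : ℤ => thetaTerm p z k * gaussBinom p N k)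
      (qPochFin p z N * qPochFin p (p * z⁻¹) N) := by
  induction N with
  | zero =>
    rw [qPochFin_zero, qPochFin_zero, mul_one]
    refine (hasSum_ite_eq (0 : ℤ) (1 : ℝ)).congr_fun fun k => ?_
    obtain rfl | hk := eq_or_ne k 0
    · simp [thetaTerm_zero, gaussBinom, qFactorialInv, qPochFin_zero]
    · rw [if_neg hk, gaussBinom, qFactorialInv, qFactorialInv]
      obtain h | h := lt_or_gt_of_ne hk <;> simp [h]
  | succ N ih =>
    have hsum := ((ih.mul_left (1 + p ^ (2 * N + 1))).add
      (((Equiv.subRight (1 : ℤ)).hasSum_iff.2 ih).mul_left (-(z * p ^ N)))).add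
        (((Equiv.addRight (1 : ℤ)).hasSum_iff.2 ih).mul_left (-(z⁻¹ * p ^ (N + 1))))
    have hval : qPochFin p z (N + 1) * qPochFin p (p * z⁻¹) (N + 1) =
        (1 + p ^ (2 * N + 1)) * (qPochFin p z N * qPochFin p (p * z⁻¹) N) +
          -(z * p ^ N) * (qPochFin p z N * qPochFin p (p * z⁻¹) N) +
          -(z⁻¹ * p ^ (N + 1)) * (qPochFin p z N * qPochFin p (p * z⁻¹) N) := by
      rw [qPochFin_succ, qPochFin_succ]
      field_simp
      ring
    rw [hval]
    refine hsum.congr_fun fun k => ?_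
    simp only [Function.comp_apply, Equiv.subRight_apply, Equiv.coe_addRight]
    have hprev : thetaTerm p z k * p ^ (N - k + 1) = -(z * p ^ N) * thetaTerm p z (k - 1) := by
      rw [show (N : ℤ) - k + 1 = N + (-k + 1) by ring, zpow_add₀ hp.ne', zpow_natCast]
      linear_combination p ^ N * thetaTerm_mul_zpow hp hz k
    have hnext : thetaTerm p z k * p ^ (N + k + 1) =
        -(z⁻¹ * p ^ (N + 1)) * thetaTerm p z (k + 1) := by
      rw [thetaTerm_add_one hp.ne' hz, mul_comm p, thetaTerm_mul, zpow_add_one₀ hp.ne',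
        zpow_add₀ hp.ne', zpow_natCast]
      field_simp
      ring
    rw [gaussBinom_succ hp hp1]
    linear_combination gaussBinom p N (k - 1) * hprev + gaussBinom p N (k + 1) * hnext

/-- Jacobi's triple product identity, as the limit `N → ∞` of its finite form. -/
theorem theta_eq_qPoch_mul (hz : 0 < z) :
    theta p z = qPoch p p * qPoch p z * qPoch p (p * z⁻¹) := by
  have hne := (qPoch_pos hp hp1 hp1).ne'
  have hprod := (tendsto_qPochFin hp hp1 z).mul (tendsto_qPochFin hp hp1 (p * z⁻¹))
  have hsum : Tendsto (fun N : ℕ => ∑' k, thetaTerm p z k * gaussBinom p N k) atTop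
      (𝓝 (∑' k, thetaTerm p z k * (qPoch p p * (qPoch p p)⁻¹ * (qPoch p p)⁻¹))) := by
    refine tendsto_tsum_of_dominated_convergence
      (bound := fun k => |thetaTerm p z k| * (1 * (qPoch p p)⁻¹ * (qPoch p p)⁻¹))
      ((summable_thetaTerm hp hp1 hz).abs.mul_right _) (fun k => ?_) (.of_forall fun N k => ?_)
    · exact ((((tendsto_qPochFin hp hp1 p).comp (tendsto_id.const_mul_atTop' two_pos)).mul
        (tendsto_qFactorialInv hp hp1 (-k))).mul (tendsto_qFactorialInv hp hp1 k)).const_mul _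
    · have hnonneg := qFactorialInv_nonneg hp hp1
      have hle := qFactorialInv_le hp hp1
      have hinv := (hnonneg 0).trans (hle 0)
      rw [Real.norm_eq_abs, abs_mul, gaussBinom, abs_of_nonneg (mul_nonneg (mul_nonneg
        (qPochFin_pos hp hp1 hp1 _).le (hnonneg _)) (hnonneg _))]
      refine mul_le_mul_of_nonneg_left (mul_le_mul (mul_le_mul (qPochFin_self_le_one hp hp1 _)
        (hle _) (hnonneg _) zero_le_one) (hle _) (hnonneg _) ?_) (abs_nonneg _)
      rwa [one_mul]
  have heq := tendsto_nhds_unique hsum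
    (hprod.congr fun N => (hasSum_thetaTerm_mul_gaussBinom hp hp1 hz.ne' N).tsum_eq.symm)
  rw [tsum_mul_right, mul_inv_cancel₀ hne, one_mul, ← div_eq_mul_inv, div_eq_iff hne] at heq
  rw [theta, heq]
  ring

lemma continuousAt_theta (hz : 0 < z) : ContinuousAt (theta p) z := by
  have hcont := continuous_qPoch hp hp1
  have hprod : ContinuousAt (fun w => qPoch p p * qPoch p w * qPoch p (p * w⁻¹)) z :=
    (continuousAt_const.mul hcont.continuousAt).mul
      (hcont.continuousAt.comp (continuousAt_const.mul (continuousAt_inv₀ hz.ne')))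
  refine hprod.congr ?_
  filter_upwards [lt_mem_nhds hz] with w hw using (theta_eq_qPoch_mul hp hp1 hw).symm

end TripleProduct

section ThetaRelations

open Filter Topology

/-- `NotZPow p y` says that `y` is not an integer power of `p`, i.e. that no denominator
`1 - y pᵏ` vanishes. -/
def NotZPow (p y : ℝ) : Prop := ∀ k : ℤ, y * p ^ k ≠ 1

/-- The logarithmic derivative `θ'(u) / θ(u)` of `θ = theta p`, with respect to `log u`. -/
noncomputable def thetaLogDeriv (p u : ℝ) : ℝ := thetaDeriv p u / theta p u

variable {p a b x y z w : ℝ}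

lemma notZPow_mul_self_iff (hp : p ≠ 0) : NotZPow p (p * y) ↔ NotZPow p y := by
  have hshift (k : ℤ) : y * p ^ (k + 1) = p * y * p ^ k := by rw [zpow_add_one₀ hp]; ring
  refine ⟨fun h k => ?_, fun h k => hshift k ▸ h (k + 1)⟩
  rw [← sub_add_cancel k 1, hshift]
  exact h (k - 1)

lemma NotZPow.inv (h : NotZPow p y) : NotZPow p y⁻¹ := fun k hk => h (-k) <| by
  rw [zpow_neg, ← inv_inj, mul_inv, inv_inv, inv_one, hk]

section UnitInterval

variable (hp : 0 < p) (hp1 : p < 1)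
include hp hp1

lemma notZPow_of_one_lt (h1 : 1 < y) (h2 : y * p < 1) : NotZPow p y := fun k hk => by
  obtain hk0 | hk0 := le_or_gt k 0
  · exact (one_lt_mul_of_lt_of_le h1 (one_le_zpow_of_nonpos₀ hp hp1.le hk0)).ne' hk
  · have hle : p ^ k ≤ p ^ (1 : ℤ) := zpow_le_zpow_right_of_le_one₀ hp hp1.le hk0
    rw [zpow_one] at hle
    exact ((mul_le_mul_of_nonneg_left hle (one_pos.trans h1).le).trans_lt h2).ne hk

lemma notZPow_of_lt_one (h1 : p < y) (h2 : y < 1) : NotZPow p y := by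
  have hy := hp.trans h1
  rw [← inv_inv y]
  refine (notZPow_of_one_lt hp hp1 ((one_lt_inv₀ hy).2 h2) ?_).inv
  rwa [inv_mul_eq_div, div_lt_one hy]

lemma zpow_ne_one (k : ℤ) (hk : k ≠ 0) : 1 * p ^ k ≠ 1 := by
  rwa [one_mul, ne_eq, zpow_eq_one_iff_right₀ hp.le hp1.ne]

lemma exists_zpow_mul_mem (hy : 0 < y) (h : NotZPow p y) :
    ∃ k : ℤ, 1 < p ^ k * y ∧ p ^ k * y * p < 1 := by
  obtain ⟨k, h1, h2⟩ := exists_mem_Ico_zpow hy ((one_lt_inv₀ hp).2 hp1)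
  rw [inv_zpow', zpow_neg] at h1
  rw [inv_zpow', zpow_neg, zpow_add_one₀ hp.ne'] at h2
  have hk : 0 < p ^ k := zpow_pos hp k
  refine ⟨k, ?_, ?_⟩
  · rw [mul_comm]
    exact lt_of_le_of_ne (by rwa [inv_le_iff_one_le_mul₀ hk] at h1) (h k).symm
  · rwa [← one_div, lt_div_iff₀ (mul_pos hk hp), ← mul_assoc, mul_comm y] at h2

lemma eq_zero_of_mul_self_eq {D : ℝ → ℝ} (hx : 0 < x)
    (hshift : ∀ z, 0 < z → NotZPow p (x * z) → D (p * z) = -z⁻¹ * D z)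
    (hD : ∀ z, 0 < z → 1 < x * z → x * z * p < 1 → D z = 0) (hz : 0 < z)
    (hxz : NotZPow p (x * z)) : D z = 0 := by
  have hpow (k : ℤ) : NotZPow p (x * (p ^ k * z)) ∧ (D (p ^ k * z) = 0 ↔ D z = 0) := by
    have hsucc (k : ℤ) : p ^ (k + 1) * z = p * (p ^ k * z) := by rw [zpow_add_one₀ hp.ne']; ring
    have hpos (k : ℤ) : 0 < p ^ k * z := by positivity
    have hiff (k : ℤ) (hk : NotZPow p (x * (p ^ k * z))) :
        D (p ^ (k + 1) * z) = 0 ↔ D (p ^ k * z) = 0 := by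
      rw [hsucc, hshift _ (hpos k) hk, mul_eq_zero, or_iff_right
        (neg_ne_zero.2 (inv_ne_zero (hpos k).ne'))]
    induction k using Int.induction_on with
    | zero => simpa using hxz
    | succ n ih =>
      refine ⟨?_, (hiff _ ih.1).trans ih.2⟩
      rw [hsucc, mul_left_comm, notZPow_mul_self_iff hp.ne']
      exact ih.1
    | pred n ih =>
      have hn := hsucc (-n - 1)
      have hn' := hiff (-n - 1)
      rw [sub_add_cancel] at hn hn'
      have h := ih.1
      rw [hn, mul_left_comm, notZPow_mul_self_iff hp.ne'] at h
      exact ⟨h, (hn' h).symm.trans ih.2⟩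
  obtain ⟨k, h1, h2⟩ := exists_zpow_mul_mem hp hp1 (mul_pos hx hz) hxz
  rw [mul_left_comm] at h1 h2
  exact (hpow k).2.1 (hD _ (by positivity) h1 h2)

lemma tendsto_one_sub_mul_kronecker (hb : b ≠ 0) :
    Tendsto (fun a => (1 - a) * kronecker p a b) (𝓝[<] 1) (𝓝 1) := by
  obtain ⟨C, hC⟩ := exists_abs_inv_one_sub_sub_le hp hp1 hb
  obtain ⟨c, hpc, hc1⟩ := exists_between hp1
  have hc : 0 < c := hp.trans hpc
  have hp1' : 1 < p⁻¹ := (one_lt_inv₀ hp).2 hp1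
  have hbound := ((summable_zpow_mul_zpow_natAbs hp hp1 hp1').add
    (summable_zpow_mul_zpow_natAbs hp hpc (hc1.trans hp1'))).mul_left C
  set B := ∑' n : ℤ, C * (1 ^ n * p ^ n.natAbs + c ^ n * p ^ n.natAbs)
  have hrem : ∀ a, c < a → a < 1 → |(1 - a) * kronecker p a b - 1| ≤ (1 - a) * B := by
    intro a hca ha1
    have ha := hc.trans hca
    have hdiff := (summable_kronecker hp hp1 (hpc.trans hca) ha1 hb).hasSum.sub
      (hasSum_zpow_of_lt_one ha ha1)
    have hle := tsum_of_norm_bounded (f := fun n : ℤ => a ^ n * (1 - b * p ^ n)⁻¹ -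
      (if 0 ≤ n then 1 else 0) * a ^ n) hbound.hasSum fun n => ?_
    · rw [hdiff.tsum_eq, Real.norm_eq_abs] at hle
      have hsub : 0 < 1 - a := sub_pos.2 ha1
      have hfac : (1 - a) * kronecker p a b - 1 = (1 - a) * (kronecker p a b - (1 - a)⁻¹) := by
        rw [mul_sub, mul_inv_cancel₀ hsub.ne']
      rw [hfac, abs_mul, abs_of_pos hsub]
      exact mul_le_mul_of_nonneg_left hle hsub.le
    · have hpow : a ^ n ≤ 1 ^ n + c ^ n := by
        rw [one_zpow]
        obtain ⟨m, rfl | rfl⟩ := n.eq_nat_or_neg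
        · exact (zpow_le_one₀ ha ha1.le m.cast_nonneg).trans
            (le_add_of_nonneg_right (by positivity))
        · rw [zpow_neg, zpow_neg, zpow_natCast, zpow_natCast]
          exact (inv_anti₀ (pow_pos hc m) (pow_le_pow_left₀ hc.le hca.le m)).trans
            (le_add_of_nonneg_left zero_le_one)
      rw [mul_comm _ (a ^ n), ← mul_sub, Real.norm_eq_abs, abs_mul, abs_of_pos (zpow_pos ha n),
        ← add_mul, mul_left_comm]
      exact mul_le_mul hpow (hC n) (abs_nonneg _) (by positivity)
  have hzero : Tendsto (fun a => (1 - a) * B) (𝓝[<] 1) (𝓝 0) := by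
    have h : Continuous fun a : ℝ => (1 - a) * B := by fun_prop
    simpa using (h.tendsto 1).mono_left nhdsWithin_le_nhds
  rw [tendsto_iff_norm_sub_tendsto_zero]
  refine squeeze_zero' (.of_forall fun _ => norm_nonneg _) ?_ hzero
  filter_upwards [Ioo_mem_nhdsLT hc1] with a ha using hrem a ha.1 ha.2

lemma theta_mul_kronecker_eq_theta_mul_appell (ha : p < a) (ha1 : a < 1) (hb : 0 < b)
    (hnb : NotZPow p b) : theta p a * kronecker p a b = theta p (a * b) * appell p p b := by
  have ha0 := hp.trans ha
  have hx : p⁻¹ * b * (p * (a * b)⁻¹) = a⁻¹ := by field_simp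
  have hb' : p⁻¹ * b * p = b := by field_simp
  have h := theta_mul_kronecker hp hp1 (x := p⁻¹ * b) (z := p * (a * b)⁻¹) (w := p) (by positivity)
    (by positivity) hp (by rw [hx]; exact (one_lt_inv₀ ha0).2 ha1)
    (by rwa [hx, inv_mul_eq_div, div_lt_one ha0]) fun k _ => by rw [hb']; exact hnb k
  have hb1 : b ≠ 1 := by simpa using hnb 0
  rwa [hx, hb', inv_inv, if_neg hb1, theta_self hp.ne', mul_comm a⁻¹, theta_mul_inv hp.ne' ha0.ne',
    theta_mul_inv hp.ne' (mul_pos ha0 hb).ne', zero_mul, sub_zero, add_zero] at h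

lemma appell_self_mul_theta (hb : 0 < b) (hnb : NotZPow p b) :
    appell p p b * theta p b = qPoch p p ^ 3 := by
  have hcont := continuous_qPoch hp hp1
  have hleft : Tendsto (fun a => theta p a * kronecker p a b) (𝓝[<] 1) (𝓝 (qPoch p p ^ 3)) := by
    have hprod : ContinuousAt (fun a => qPoch p p * qPoch p (p * a) * qPoch p (p * a⁻¹)) 1 :=
      (continuousAt_const.mul (hcont.comp (continuous_const.mul continuous_id)).continuousAt).mul
        (hcont.continuousAt.comp (continuousAt_const.mul (continuousAt_inv₀ one_ne_zero)))
    have hlim := (hprod.tendsto.mono_left nhdsWithin_le_nhds).mul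
      (tendsto_one_sub_mul_kronecker hp hp1 hb.ne')
    rw [inv_one, mul_one, mul_one, ← pow_three'] at hlim
    refine hlim.congr' ?_
    filter_upwards [Ioo_mem_nhdsLT one_pos] with a ha
    rw [theta_eq_qPoch_mul hp hp1 ha.1, qPoch_eq_one_sub_mul hp hp1 a]
    ring
  have hright : Tendsto (fun a => theta p (a * b) * appell p p b) (𝓝[<] 1)
      (𝓝 (theta p (1 * b) * appell p p b)) := by
    have htheta : ContinuousAt (theta p) (1 * b) := continuousAt_theta hp hp1 (by rwa [one_mul])
    exact ((htheta.comp (f := fun a => a * b) (by fun_prop)).tendsto.mono_left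
      nhdsWithin_le_nhds).mul_const _
  rw [mul_comm, ← one_mul b]
  rw [one_mul b] at hright ⊢
  refine tendsto_nhds_unique hright (hleft.congr' ?_)
  filter_upwards [Ioo_mem_nhdsLT hp1] with a ha
  exact theta_mul_kronecker_eq_theta_mul_appell hp hp1 ha.1 ha.2 hb hnb

lemma theta_ne_zero (hb : 0 < b) (hnb : NotZPow p b) : theta p b ≠ 0 := fun h => by
  have hcube := appell_self_mul_theta hp hp1 hb hnb
  rw [h, mul_zero] at hcube
  exact (pow_pos (qPoch_pos hp hp1 hp1) 3).ne hcube

theorem theta_mul_appell_sub (hx : 0 < x) (hz : 0 < z) (hw : 0 < w) (hxz : NotZPow p (x * z))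
    (hxw : NotZPow p (x * w)) :
    theta p z * appell p w (x * w) - theta p w * appell p z (x * z) =
      -(x * z) * qPoch p p ^ 3 * theta p (x * z * w) * theta p (w * z⁻¹) /
        (theta p (x * z) * theta p (x * w)) := by
  have hw0 := theta_ne_zero hp hp1 (mul_pos hx hw) hxw
  rw [← sub_eq_zero]
  refine eq_zero_of_mul_self_eq (D := fun z => theta p z * appell p w (x * w) -
    theta p w * appell p z (x * z) - -(x * z) * qPoch p p ^ 3 * theta p (x * z * w) *
      theta p (w * z⁻¹) / (theta p (x * z) * theta p (x * w))) hp hp1 hx (fun z hz _ => ?_)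
    (fun z hz h1 h2 => ?_) hz hxz
  · have hquot : theta p (w * (p * z)⁻¹) = -(w * (p * z)⁻¹) * theta p (w * z⁻¹) := by
      have h := theta_mul_self (z := w * (p * z)⁻¹) hp.ne' (by positivity)
      rw [show p * (w * (p * z)⁻¹) = w * z⁻¹ by field_simp] at h
      rw [h]
      field_simp
    rw [hquot, mul_left_comm x p z, mul_assoc p, theta_mul_self hp.ne' hz.ne',
      appell_mul_self hp.ne' hz.ne', theta_mul_self hp.ne' (mul_pos hx hz).ne',
      theta_mul_self hp.ne' (mul_pos (mul_pos hx hz) hw).ne']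
    field_simp
    ring
  · have hxz : 0 < x * z := mul_pos hx hz
    have hxw' : 0 < x * w := mul_pos hx hw
    have hz0 := theta_ne_zero hp hp1 hxz (notZPow_of_one_lt hp hp1 h1 h2)
    have hcore := theta_mul_kronecker hp hp1 hx hz hw h1 h2 fun k _ => hxw k
    have hkron := theta_mul_kronecker_eq_theta_mul_appell hp hp1 (a := (x * z)⁻¹)
      (by rwa [lt_inv_comm₀ hp hxz, ← one_div p, lt_div_iff₀ hp])
      (inv_lt_one_of_one_lt₀ h1) hxw' hxw
    rw [theta_inv hxz.ne', show (x * z)⁻¹ * (x * w) = w * z⁻¹ by field_simp] at hkron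
    have hcube := appell_self_mul_theta hp hp1 hxw' hxw
    rw [if_neg (by simpa using hxw 0)] at hcore
    have hfield : theta p (x * z) * theta p (x * w) * kronecker p (x * z)⁻¹ (x * w) =
        -(x * z) * theta p (w * z⁻¹) * qPoch p p ^ 3 := by
      rw [← hcube]
      field_simp at hkron ⊢
      linear_combination -hkron
    rw [sub_eq_zero, eq_div_iff (mul_ne_zero hz0 hw0)]
    linear_combination theta p (x * z * w) * hfield -
      theta p (x * z) * theta p (x * w) * hcore

lemma appell_one_one : appell p 1 1 = -1 := by
  have h1 := appell_sub_mul_appell_mul_self hp hp1 one_pos one_pos (zpow_ne_one hp hp1)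
  have h2 := appell_sub_mul_appell_mul_self hp hp1 hp one_pos (zpow_ne_one hp hp1)
  have h3 := appell_eq_neg_appell_inv (z := 1) (y := 1) hp.ne' one_ne_zero
  rw [mul_one, theta_one, if_pos rfl] at h1
  rw [theta_self hp.ne', if_pos rfl] at h2
  rw [inv_one, mul_one] at h3
  linarith

lemma thetaLogDeriv_mul_self (hz : 0 < z) (hn : NotZPow p z) :
    thetaLogDeriv p (p * z) = thetaLogDeriv p z - 1 := by
  have hne := theta_ne_zero hp hp1 hz hn
  rw [thetaLogDeriv, thetaLogDeriv, thetaDeriv_mul_self hp hp1 hz, theta_mul_self hp.ne' hz.ne']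
  field_simp

lemma thetaLogDeriv_inv (hz : 0 < z) (hn : NotZPow p z) :
    thetaLogDeriv p z⁻¹ = 1 - thetaLogDeriv p z := by
  have hne := theta_ne_zero hp hp1 hz hn
  rw [thetaLogDeriv, thetaLogDeriv, thetaDeriv_inv hp hp1 hz, theta_inv hz.ne']
  field_simp

lemma kronecker_one (ha : p < a) (ha1 : a < 1) : kronecker p a 1 = -thetaLogDeriv p a := by
  have ha0 := hp.trans ha
  have hne := theta_ne_zero hp hp1 ha0 (notZPow_of_lt_one hp hp1 ha ha1)
  have h := theta_mul_kronecker hp hp1 (x := 1) (z := a⁻¹) (w := 1) one_pos (inv_pos.2 ha0) one_pos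
    (by rw [one_mul]; exact (one_lt_inv₀ ha0).2 ha1)
    (by rwa [one_mul, inv_mul_eq_div, div_lt_one ha0])
    fun k hk => by rw [mul_one]; exact zpow_ne_one hp hp1 k hk
  simp only [one_mul, mul_one, inv_inv, if_true] at h
  rw [theta_one, appell_one_one hp hp1, theta_inv ha0.ne', thetaDeriv_inv hp hp1 ha0] at h
  rw [thetaLogDeriv, ← neg_div, eq_div_iff hne]
  field_simp at h
  linear_combination -h

theorem theta_mul_appell_one_sub (hz : 0 < z) (hw : 0 < w) (hn : NotZPow p (w⁻¹ * z)) :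
    theta p z * appell p w 1 - theta p w * appell p z (w⁻¹ * z) =
      -thetaDeriv p z - thetaLogDeriv p (w * z⁻¹) * theta p z := by
  have hw' : 0 < w⁻¹ := inv_pos.2 hw
  rw [← sub_eq_zero]
  refine eq_zero_of_mul_self_eq (D := fun z => theta p z * appell p w 1 -
    theta p w * appell p z (w⁻¹ * z) - (-thetaDeriv p z - thetaLogDeriv p (w * z⁻¹) * theta p z))
    hp hp1 hw' (fun z hz hn => ?_) (fun z hz h1 h2 => ?_) hz hn
  · have hlog : thetaLogDeriv p (w * (p * z)⁻¹) = thetaLogDeriv p (w * z⁻¹) + 1 := by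
      have hn' : NotZPow p (w * (p * z)⁻¹) := by
        have h := ((notZPow_mul_self_iff hp.ne').2 hn).inv
        rwa [show (p * (w⁻¹ * z))⁻¹ = w * (p * z)⁻¹ by field_simp] at h
      have h := thetaLogDeriv_mul_self hp hp1 (by positivity) hn'
      rw [show p * (w * (p * z)⁻¹) = w * z⁻¹ by field_simp] at h
      linarith
    rw [hlog, mul_left_comm _ p z, theta_mul_self hp.ne' hz.ne', appell_mul_self hp.ne' hz.ne',
      thetaDeriv_mul_self hp hp1 hz]
    ring
  · have hwz : 0 < w⁻¹ * z := mul_pos hw' hz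
    have hone : w⁻¹ * w = 1 := inv_mul_cancel₀ hw.ne'
    have hcore := theta_mul_kronecker hp hp1 hw' hz hw h1 h2 fun k hk => by
      rw [hone]; exact zpow_ne_one hp hp1 k hk
    rw [hone, if_pos rfl, kronecker_one hp hp1
      (by rwa [lt_inv_comm₀ hp hwz, ← one_div p, lt_div_iff₀ hp]) (inv_lt_one_of_one_lt₀ h1),
      show w⁻¹ * z * w = z by field_simp, show (w⁻¹ * z)⁻¹ = w * z⁻¹ by field_simp] at hcore
    linear_combination -hcore

end UnitInterval

end ThetaRelations

section ModulusTen

/-- The theta function `theta` at nome `q¹⁰` and argument `qᵃ`; all theta functions of the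
5-dissection are of this form. -/
noncomputable def thetaTen (q : ℝ) (a : ℤ) : ℝ := theta (q ^ 10) (q ^ a)

/-- The Appell sum `appell` at nome `q¹⁰` and arguments `qᵃ`, `qᵇ`. -/
noncomputable def appellTen (q : ℝ) (a b : ℤ) : ℝ := appell (q ^ 10) (q ^ a) (q ^ b)

/-- The logarithmic derivative of the theta function at nome `q¹⁰` and argument `qᵃ`. -/
noncomputable def logDerivTen (q : ℝ) (a : ℤ) : ℝ := thetaLogDeriv (q ^ 10) (q ^ a)

/-- The cube of the Euler product `∏ (1 - q¹⁰ⁿ)`. -/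
noncomputable def eulerTenCube (q : ℝ) : ℝ := qPoch (q ^ 10) (q ^ 10) ^ 3

variable {q : ℝ}

lemma pow_ten_zpow (k : ℤ) : (q ^ 10) ^ k = q ^ (10 * k) := by
  rw [← zpow_natCast, ← zpow_mul, Nat.cast_ofNat]

lemma pow_ten_lt_one (hq : 0 < q) (hq1 : q < 1) : q ^ 10 < 1 := pow_lt_one₀ hq.le hq1 (by norm_num)

variable (hq : 0 < q)
include hq

lemma pow_ten_mul_zpow (k : ℤ) : q ^ 10 * q ^ k = q ^ (k + 10) := by
  rw [zpow_add₀ hq.ne', mul_comm]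
  norm_cast

lemma thetaTen_add_ten (a : ℤ) : thetaTen q (a + 10) = -(q ^ a)⁻¹ * thetaTen q a := by
  unfold thetaTen
  rw [← pow_ten_mul_zpow hq, theta_mul_self (by positivity) (by positivity)]

lemma thetaTen_neg (a : ℤ) : thetaTen q (-a) = -(q ^ a)⁻¹ * thetaTen q a := by
  unfold thetaTen
  rw [zpow_neg, theta_inv (by positivity)]

lemma thetaTen_ten_sub (a : ℤ) : thetaTen q (10 - a) = thetaTen q a := by
  have ha : q ^ a ≠ 0 := (zpow_pos hq a).ne'
  rw [sub_eq_neg_add, thetaTen_add_ten hq, thetaTen_neg hq, zpow_neg]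
  field_simp

lemma appellTen_add_ten (a b : ℤ) :
    appellTen q (a + 10) (b + 10) = -(q ^ a)⁻¹ * appellTen q a b := by
  unfold appellTen
  rw [← pow_ten_mul_zpow hq, ← pow_ten_mul_zpow hq,
    appell_mul_self (by positivity) (by positivity)]

lemma appellTen_eq_neg_appellTen_neg (a b : ℤ) :
    appellTen q a b = -(q ^ b)⁻¹ * appellTen q (20 - a) (-b) := by
  unfold appellTen
  rw [appell_eq_neg_appell_inv (by positivity) (zpow_pos hq b).ne', ← zpow_neg, ← zpow_neg,
    pow_ten_mul_zpow hq, pow_ten_mul_zpow hq, show -a + 10 + 10 = 20 - a by ring]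

variable (hq1 : q < 1)
include hq1

lemma notZPow_pow_ten {b : ℤ} (hb : ¬(10 : ℤ) ∣ b) : NotZPow (q ^ 10) (q ^ b) := by
  intro k hk
  rw [pow_ten_zpow, ← zpow_add₀ hq.ne', zpow_eq_one_iff_right₀ hq.le hq1.ne] at hk
  omega

lemma thetaTen_ne_zero {b : ℤ} (hb : ¬(10 : ℤ) ∣ b) : thetaTen q b ≠ 0 :=
  theta_ne_zero (pow_pos hq 10) (pow_ten_lt_one hq hq1) (zpow_pos hq b) (notZPow_pow_ten hq hq1 hb)

lemma appellTen_ten {b : ℤ} (hb : ¬(10 : ℤ) ∣ b) :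
    appellTen q 10 b = eulerTenCube q / thetaTen q b := by
  rw [eq_div_iff (thetaTen_ne_zero hq hq1 hb)]
  have h := appell_self_mul_theta (pow_pos hq 10) (pow_ten_lt_one hq hq1) (zpow_pos hq b)
    (notZPow_pow_ten hq hq1 hb)
  rwa [appellTen, show q ^ (10 : ℤ) = q ^ 10 by norm_cast]

lemma thetaTen_mul_appellTen_sub (z₁ b₁ z₀ b₀ : ℤ) (h : b₁ - z₁ = b₀ - z₀) (h₁ : ¬(10 : ℤ) ∣ b₁)
    (h₀ : ¬(10 : ℤ) ∣ b₀) :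
    thetaTen q z₀ * appellTen q z₁ b₁ - thetaTen q z₁ * appellTen q z₀ b₀ =
      -q ^ b₀ * eulerTenCube q * thetaTen q (b₀ + z₁) * thetaTen q (z₁ - z₀) /
        (thetaTen q b₀ * thetaTen q b₁) := by
  have e₀ : q ^ (b₀ - z₀) * q ^ z₀ = q ^ b₀ := by rw [← zpow_add₀ hq.ne', sub_add_cancel]
  have e₁ : q ^ (b₀ - z₀) * q ^ z₁ = q ^ b₁ := by rw [← zpow_add₀ hq.ne', ← h, sub_add_cancel]
  have key := theta_mul_appell_sub (pow_pos hq 10) (pow_ten_lt_one hq hq1)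
    (zpow_pos hq (b₀ - z₀)) (zpow_pos hq z₀) (zpow_pos hq z₁)
    (by rw [e₀]; exact notZPow_pow_ten hq hq1 h₀) (by rw [e₁]; exact notZPow_pow_ten hq hq1 h₁)
  rwa [e₀, e₁, ← zpow_add₀ hq.ne', ← zpow_neg, ← zpow_add₀ hq.ne', ← sub_eq_add_neg] at key

lemma thetaTen_mul_appellTen_zero_sub (z₁ z₀ : ℤ) (h : ¬(10 : ℤ) ∣ z₀ - z₁)
    (h₀ : ¬(10 : ℤ) ∣ z₀) :
    thetaTen q z₀ * appellTen q z₁ 0 - thetaTen q z₁ * appellTen q z₀ (z₀ - z₁) =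
      -(logDerivTen q z₀ + logDerivTen q (z₁ - z₀)) * thetaTen q z₀ := by
  have e₀ : (q ^ z₁)⁻¹ * q ^ z₀ = q ^ (z₀ - z₁) := by rw [zpow_sub₀ hq.ne', inv_mul_eq_div]
  have e₁ : q ^ z₁ * (q ^ z₀)⁻¹ = q ^ (z₁ - z₀) := by rw [zpow_sub₀ hq.ne', div_eq_mul_inv]
  have hθ : theta (q ^ 10) (q ^ z₀) ≠ 0 := thetaTen_ne_zero hq hq1 h₀
  have key := theta_mul_appell_one_sub (pow_pos hq 10) (pow_ten_lt_one hq hq1) (zpow_pos hq z₀)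
    (zpow_pos hq z₁) (by rw [e₀]; exact notZPow_pow_ten hq hq1 h)
  rw [e₀, e₁] at key
  unfold thetaTen appellTen logDerivTen
  rw [zpow_zero, key, thetaLogDeriv.eq_def _ (q ^ z₀)]
  field_simp
  ring

lemma logDerivTen_add_ten {a : ℤ} (ha : ¬(10 : ℤ) ∣ a) :
    logDerivTen q (a + 10) = logDerivTen q a - 1 := by
  unfold logDerivTen
  rw [← pow_ten_mul_zpow hq, thetaLogDeriv_mul_self (pow_pos hq 10) (pow_ten_lt_one hq hq1)
    (by positivity) (notZPow_pow_ten hq hq1 ha)]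

lemma logDerivTen_neg {a : ℤ} (ha : ¬(10 : ℤ) ∣ a) : logDerivTen q (-a) = 1 - logDerivTen q a := by
  unfold logDerivTen
  rw [zpow_neg, thetaLogDeriv_inv (pow_pos hq 10) (pow_ten_lt_one hq hq1) (by positivity)
    (notZPow_pow_ten hq hq1 ha)]

lemma logDerivTen_ten_sub {a : ℤ} (ha : ¬(10 : ℤ) ∣ a) :
    logDerivTen q (10 - a) = -logDerivTen q a := by
  rw [sub_eq_neg_add, logDerivTen_add_ten hq hq1 (by rwa [Int.dvd_neg]), logDerivTen_neg hq hq1 ha]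
  ring

/-- Cyclic summation of `thetaTen_mul_appellTen_sub` eliminates the Appell sums. -/
lemma thetaTen_weierstrass (e a₀ a₁ a₂ : ℤ) (h₀ : ¬(10 : ℤ) ∣ e + a₀) (h₁ : ¬(10 : ℤ) ∣ e + a₁)
    (h₂ : ¬(10 : ℤ) ∣ e + a₂) :
    q ^ (e + a₀) * thetaTen q a₂ * thetaTen q (e + a₂) * thetaTen q (e + a₀ + a₁) *
        thetaTen q (a₁ - a₀) +
      q ^ (e + a₁) * thetaTen q a₀ * thetaTen q (e + a₀) * thetaTen q (e + a₁ + a₂) *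
        thetaTen q (a₂ - a₁) +
      q ^ (e + a₂) * thetaTen q a₁ * thetaTen q (e + a₁) * thetaTen q (e + a₂ + a₀) *
        thetaTen q (a₀ - a₂) = 0 := by
  have m₀₁ := thetaTen_mul_appellTen_sub hq hq1 a₁ (e + a₁) a₀ (e + a₀) (by ring) h₁ h₀
  have m₁₂ := thetaTen_mul_appellTen_sub hq hq1 a₂ (e + a₂) a₁ (e + a₁) (by ring) h₂ h₁
  have m₂₀ := thetaTen_mul_appellTen_sub hq hq1 a₀ (e + a₀) a₂ (e + a₂) (by ring) h₀ h₂
  have n₀ := thetaTen_ne_zero hq hq1 h₀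
  have n₁ := thetaTen_ne_zero hq hq1 h₁
  have n₂ := thetaTen_ne_zero hq hq1 h₂
  have hJ : eulerTenCube q ≠ 0 :=
    (pow_pos (qPoch_pos (pow_pos hq 10) (pow_ten_lt_one hq hq1) (pow_ten_lt_one hq hq1)) 3).ne'
  refine mul_left_cancel₀ hJ ?_
  linear_combination (norm := (field_simp; ring))
    (thetaTen q (e + a₀) * thetaTen q (e + a₁) * thetaTen q (e + a₂)) *
      (thetaTen q a₂ * m₀₁ + thetaTen q a₀ * m₁₂ + thetaTen q a₁ * m₂₀)

end ModulusTen

section ThetaTenRelations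

variable {q : ℝ} (hq : 0 < q)
include hq

lemma thetaTen_six : thetaTen q 6 = thetaTen q 4 := thetaTen_ten_sub hq 4
lemma thetaTen_seven : thetaTen q 7 = thetaTen q 3 := thetaTen_ten_sub hq 3
lemma thetaTen_eight : thetaTen q 8 = thetaTen q 2 := thetaTen_ten_sub hq 2
lemma thetaTen_nine : thetaTen q 9 = thetaTen q 1 := thetaTen_ten_sub hq 1

lemma thetaTen_natCast_add_ten (a : ℕ) : thetaTen q (a + 10) = -(q ^ a)⁻¹ * thetaTen q a := by
  rw [thetaTen_add_ten hq, zpow_natCast]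

lemma thetaTen_neg_natCast (a : ℕ) : thetaTen q (-a) = -(q ^ a)⁻¹ * thetaTen q a := by
  rw [thetaTen_neg hq, zpow_natCast]

lemma thetaTen_eleven : thetaTen q 11 = -(q ^ 1)⁻¹ * thetaTen q 1 :=
  thetaTen_natCast_add_ten hq 1
lemma thetaTen_twelve : thetaTen q 12 = -(q ^ 2)⁻¹ * thetaTen q 2 :=
  thetaTen_natCast_add_ten hq 2
lemma thetaTen_thirteen : thetaTen q 13 = -(q ^ 3)⁻¹ * thetaTen q 3 :=
  thetaTen_natCast_add_ten hq 3
lemma thetaTen_fourteen : thetaTen q 14 = -(q ^ 4)⁻¹ * thetaTen q 4 :=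
  thetaTen_natCast_add_ten hq 4
lemma thetaTen_fifteen : thetaTen q 15 = -(q ^ 5)⁻¹ * thetaTen q 5 :=
  thetaTen_natCast_add_ten hq 5
lemma thetaTen_sixteen : thetaTen q 16 = -(q ^ 6)⁻¹ * thetaTen q 6 :=
  thetaTen_natCast_add_ten hq 6
lemma thetaTen_seventeen : thetaTen q 17 = -(q ^ 7)⁻¹ * thetaTen q 7 :=
  thetaTen_natCast_add_ten hq 7
lemma thetaTen_eighteen : thetaTen q 18 = -(q ^ 8)⁻¹ * thetaTen q 8 :=
  thetaTen_natCast_add_ten hq 8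
lemma thetaTen_nineteen : thetaTen q 19 = -(q ^ 9)⁻¹ * thetaTen q 9 :=
  thetaTen_natCast_add_ten hq 9
lemma thetaTen_twenty_one : thetaTen q 21 = -(q ^ 11)⁻¹ * thetaTen q 11 :=
  thetaTen_natCast_add_ten hq 11
lemma thetaTen_twenty_three : thetaTen q 23 = -(q ^ 13)⁻¹ * thetaTen q 13 :=
  thetaTen_natCast_add_ten hq 13

lemma thetaTen_neg_two : thetaTen q (-2) = -(q ^ 2)⁻¹ * thetaTen q 2 :=
  thetaTen_neg_natCast hq 2
lemma thetaTen_neg_three : thetaTen q (-3) = -(q ^ 3)⁻¹ * thetaTen q 3 :=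
  thetaTen_neg_natCast hq 3
lemma thetaTen_neg_four : thetaTen q (-4) = -(q ^ 4)⁻¹ * thetaTen q 4 :=
  thetaTen_neg_natCast hq 4
lemma thetaTen_neg_eight : thetaTen q (-8) = -(q ^ 8)⁻¹ * thetaTen q 8 :=
  thetaTen_neg_natCast hq 8
lemma thetaTen_neg_twelve : thetaTen q (-12) = -(q ^ 12)⁻¹ * thetaTen q 12 :=
  thetaTen_neg_natCast hq 12

variable (hq1 : q < 1)
include hq1

lemma thetaTen_weierstrass_one_two_three :
    q * thetaTen q 1 ^ 2 * thetaTen q 2 * thetaTen q 4 +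
      thetaTen q 1 * thetaTen q 3 * thetaTen q 4 ^ 2 =
        thetaTen q 2 ^ 2 * thetaTen q 3 * thetaTen q 5 := by
  have h := thetaTen_weierstrass hq hq1 1 1 2 3 (by norm_num) (by norm_num) (by norm_num)
  norm_num at h
  simp only [thetaTen_six hq, thetaTen_neg_two hq] at h
  refine mul_left_cancel₀ (pow_pos hq 2).ne' ?_
  linear_combination (norm := (field_simp; ring)) h

lemma thetaTen_weierstrass_one_two_four :
    q * thetaTen q 1 * thetaTen q 2 ^ 2 * thetaTen q 3 +
      thetaTen q 1 * thetaTen q 4 ^ 2 * thetaTen q 5 =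
        thetaTen q 2 * thetaTen q 3 ^ 2 * thetaTen q 4 := by
  have h := thetaTen_weierstrass hq hq1 1 1 2 4 (by norm_num) (by norm_num) (by norm_num)
  norm_num at h
  simp only [thetaTen_six hq, thetaTen_seven hq, thetaTen_neg_three hq] at h
  refine mul_left_cancel₀ (pow_pos hq 2).ne' ?_
  linear_combination (norm := (field_simp; ring)) h

lemma thetaTen_weierstrass_one_three_four :
    q ^ 2 * thetaTen q 1 ^ 2 * thetaTen q 2 ^ 2 +
      thetaTen q 2 * thetaTen q 4 * thetaTen q 5 ^ 2 =
        thetaTen q 3 ^ 2 * thetaTen q 4 ^ 2 := by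
  have h := thetaTen_weierstrass hq hq1 1 1 3 4 (by norm_num) (by norm_num) (by norm_num)
  norm_num at h
  simp only [thetaTen_six hq, thetaTen_eight hq, thetaTen_neg_three hq] at h
  refine mul_left_cancel₀ (pow_pos hq 2).ne' ?_
  linear_combination (norm := (field_simp; ring)) h

end ThetaTenRelations

section RankGapComponents

/-- The bilateral sum `∑ₖ (-1)ᵏ q^(5k² - 5k + ck) / (1 - q^(5k+b))`, written as a combination of
Appell sums through `(1 - x)⁻¹ = (1 + x) (1 - x²)⁻¹`. -/
noncomputable def lambertSum (q : ℝ) (c b : ℤ) : ℝ :=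
  appellTen q c (2 * b) + q ^ b * appellTen q (c + 5) (2 * b)

/-- Component of exponents `≡ 0 (mod 5)` in the dissection of the series of `rankGapTerm`. -/
noncomputable def rankGapNum₀ (q : ℝ) : ℝ :=
  6 * (lambertSum q 7 0 - q ^ 3 * lambertSum q 13 3) -
    2 * (lambertSum q 6 0 + q ^ 4 * lambertSum q 14 4)

/-- Component of exponents `≡ 1 (mod 5)` in the dissection of the series of `rankGapTerm`. -/
noncomputable def rankGapNum₁ (q : ℝ) : ℝ := -2 * (q * lambertSum q 10 2)

/-- Component of exponents `≡ 2 (mod 5)` in the dissection of the series of `rankGapTerm`. -/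
noncomputable def rankGapNum₂ (q : ℝ) : ℝ := 2 * (lambertSum q 8 1 + q ^ 2 * lambertSum q 12 3)

/-- Component of exponents `≡ 3 (mod 5)` in the dissection of the series of `rankGapTerm`. -/
noncomputable def rankGapNum₃ (q : ℝ) : ℝ := 6 * (q * lambertSum q 11 2 - lambertSum q 9 1)

/-- Component of exponents `≡ 4 (mod 5)` in the dissection of the series of `rankGapTerm`. -/
noncomputable def rankGapNum₄ (q : ℝ) : ℝ := 6 * lambertSum q 10 1

/-- The generating function of `N̄(1,5,5n) - N̄(2,5,5n)`. -/
noncomputable def rankGap₀ (q : ℝ) : ℝ := 2 * q * eulerTenCube q / (thetaTen q 3 * thetaTen q 4)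

/-- The generating function of `N̄(1,5,5n+1) - N̄(2,5,5n+1)`. -/
noncomputable def rankGap₁ (q : ℝ) : ℝ := -2 * (q * lambertSum q 10 2) / thetaTen q 5

/-- The generating function of `N̄(1,5,5n+2) - N̄(2,5,5n+2)`. -/
noncomputable def rankGap₂ (q : ℝ) : ℝ := 2 * eulerTenCube q / (thetaTen q 1 * thetaTen q 4)

/-- The generating function of `N̄(1,5,5n+3) - N̄(2,5,5n+3)`. -/
noncomputable def rankGap₃ (q : ℝ) : ℝ := -2 * eulerTenCube q / (thetaTen q 2 * thetaTen q 3)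

/-- The generating function of `N̄(1,5,5n+4) - N̄(2,5,5n+4)`. -/
noncomputable def rankGap₄ (q : ℝ) : ℝ :=
  2 * lambertSum q 10 1 / thetaTen q 5 + 4 * (q ^ 3 * appellTen q 17 4) / thetaTen q 3

variable {q : ℝ} (hq : 0 < q) (hq1 : q < 1)
include hq hq1

lemma logDerivTen_five : logDerivTen q 5 = 0 := by
  have h := logDerivTen_ten_sub hq hq1 (a := 5) (by norm_num)
  norm_num at h
  linarith

lemma logDerivTen_six : logDerivTen q 6 = -logDerivTen q 4 :=
  logDerivTen_ten_sub hq hq1 (a := 4) (by norm_num)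

lemma logDerivTen_eight : logDerivTen q 8 = -logDerivTen q 2 :=
  logDerivTen_ten_sub hq hq1 (a := 2) (by norm_num)

lemma three_mul_logDerivTen_four : 3 * logDerivTen q 4 =
    logDerivTen q 2 + q ^ 2 * eulerTenCube q * thetaTen q 2 ^ 2 / thetaTen q 4 ^ 3 := by
  have n₄ : thetaTen q 4 ≠ 0 := thetaTen_ne_zero hq hq1 (by norm_num)
  have h₁ := thetaTen_mul_appellTen_zero_sub hq hq1 8 4 (by norm_num) (by norm_num)
  have h₂ := thetaTen_mul_appellTen_zero_sub hq hq1 8 (-4) (by norm_num) (by norm_num)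
  have h₃ := thetaTen_mul_appellTen_sub hq hq1 4 (-4) (-4) (-12) rfl (by norm_num) (by norm_num)
  have s₁ := logDerivTen_neg hq hq1 (a := 4) (by norm_num)
  have s₂ := logDerivTen_add_ten hq hq1 (a := 2) (by norm_num)
  norm_num at h₁ h₂ h₃ s₂
  simp only [thetaTen_eight hq, thetaTen_neg_four hq, thetaTen_neg_eight hq,
    thetaTen_neg_twelve hq, thetaTen_twelve hq, s₁, s₂] at h₁ h₂ h₃
  linear_combination (norm := (field_simp; ring)) 1 / thetaTen q 4 * h₁ +
    q ^ 4 / thetaTen q 4 * h₂ - q ^ 4 * thetaTen q 2 / thetaTen q 4 ^ 2 * h₃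

lemma lambertSum_seven_zero_sub : lambertSum q 7 0 - q ^ 3 * lambertSum q 13 3 =
    -logDerivTen q 4 - 2 * q ^ 2 * thetaTen q 3 / thetaTen q 5 * appellTen q 15 2 +
      q ^ 2 * eulerTenCube q * thetaTen q 1 / (thetaTen q 4 * thetaTen q 5) := by
  have n₂ : thetaTen q 2 ≠ 0 := thetaTen_ne_zero hq hq1 (by norm_num)
  have n₄ : thetaTen q 4 ≠ 0 := thetaTen_ne_zero hq hq1 (by norm_num)
  have n₅ : thetaTen q 5 ≠ 0 := thetaTen_ne_zero hq hq1 (by norm_num)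
  have h₁ := thetaTen_mul_appellTen_zero_sub hq hq1 7 5 (by norm_num) (by norm_num)
  have h₂ := thetaTen_mul_appellTen_zero_sub hq hq1 12 18 (by norm_num) (by norm_num)
  have h₃ := thetaTen_mul_appellTen_sub hq hq1 13 6 5 (-2) rfl (by norm_num) (by norm_num)
  have h₄ := appellTen_eq_neg_appellTen_neg hq 15 2
  have s₁ := logDerivTen_add_ten hq hq1 (a := 8) (by norm_num)
  have s₂ := logDerivTen_neg hq hq1 (a := 6) (by norm_num)
  norm_num at h₁ h₂ h₃ h₄ s₁
  simp only [thetaTen_six hq, thetaTen_seven hq, thetaTen_eight hq, thetaTen_eleven hq,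
    thetaTen_twelve hq, thetaTen_thirteen hq, thetaTen_eighteen hq, thetaTen_neg_two hq, s₁, s₂,
    logDerivTen_five hq hq1, logDerivTen_six hq hq1, logDerivTen_eight hq hq1] at h₁ h₂ h₃
  unfold lambertSum
  norm_num
  linear_combination (norm := (field_simp; ring)) 1 / thetaTen q 5 * h₁ -
    q ^ 8 / thetaTen q 2 * h₂ - q ^ 3 / thetaTen q 5 * h₃ +
      2 * q ^ 2 * thetaTen q 3 / thetaTen q 5 * h₄

lemma lambertSum_six_zero_add : lambertSum q 6 0 + q ^ 4 * lambertSum q 14 4 =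
    -logDerivTen q 2 + 2 * q ^ 4 * thetaTen q 1 / thetaTen q 5 * appellTen q 15 4 +
      q * eulerTenCube q * thetaTen q 3 / (thetaTen q 2 * thetaTen q 5) := by
  have n₂ : thetaTen q 2 ≠ 0 := thetaTen_ne_zero hq hq1 (by norm_num)
  have n₄ : thetaTen q 4 ≠ 0 := thetaTen_ne_zero hq hq1 (by norm_num)
  have n₅ : thetaTen q 5 ≠ 0 := thetaTen_ne_zero hq hq1 (by norm_num)
  have h₁ := thetaTen_mul_appellTen_zero_sub hq hq1 6 14 (by norm_num) (by norm_num)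
  have h₂ := thetaTen_mul_appellTen_zero_sub hq hq1 11 15 (by norm_num) (by norm_num)
  have h₃ := thetaTen_mul_appellTen_sub hq hq1 19 8 15 4 rfl (by norm_num) (by norm_num)
  have s₁ := logDerivTen_add_ten hq hq1 (a := 4) (by norm_num)
  have s₂ := logDerivTen_neg hq hq1 (a := 8) (by norm_num)
  have s₃ := logDerivTen_add_ten hq hq1 (a := 5) (by norm_num)
  have s₄ := logDerivTen_neg hq hq1 (a := 4) (by norm_num)
  norm_num at h₁ h₂ h₃ s₁ s₃
  simp only [thetaTen_six hq, thetaTen_eight hq, thetaTen_nine hq, thetaTen_eleven hq,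
    thetaTen_thirteen hq, thetaTen_fourteen hq, thetaTen_fifteen hq, thetaTen_nineteen hq,
    thetaTen_twenty_three hq, s₁, s₂, s₃, s₄, logDerivTen_five hq hq1,
    logDerivTen_eight hq hq1] at h₁ h₂ h₃
  unfold lambertSum
  norm_num
  linear_combination (norm := (field_simp; ring)) -q ^ 4 / thetaTen q 4 * h₁ -
    q ^ 5 / thetaTen q 5 * h₂ - q ^ 13 / thetaTen q 5 * h₃

lemma appellTen_eight_two_add : appellTen q 8 2 + q ^ 2 * appellTen q 12 6 =
    eulerTenCube q * thetaTen q 4 / thetaTen q 2 ^ 2 := by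
  have n₂ : thetaTen q 2 ≠ 0 := thetaTen_ne_zero hq hq1 (by norm_num)
  have h := thetaTen_mul_appellTen_sub hq hq1 8 2 12 6 rfl (by norm_num) (by norm_num)
  norm_num at h
  simp only [thetaTen_six hq, thetaTen_eight hq, thetaTen_twelve hq, thetaTen_fourteen hq,
    thetaTen_neg_four hq] at h
  linear_combination (norm := (field_simp; ring)) -q ^ 2 / thetaTen q 2 * h

lemma appellTen_thirteen_two : appellTen q 13 2 =
    (q ^ 2 * thetaTen q 3 * appellTen q 15 4 + eulerTenCube q * thetaTen q 3 / thetaTen q 4) /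
      thetaTen q 5 := by
  have n₂ : thetaTen q 2 ≠ 0 := thetaTen_ne_zero hq hq1 (by norm_num)
  have n₄ : thetaTen q 4 ≠ 0 := thetaTen_ne_zero hq hq1 (by norm_num)
  have n₅ : thetaTen q 5 ≠ 0 := thetaTen_ne_zero hq hq1 (by norm_num)
  have h := thetaTen_mul_appellTen_sub hq hq1 13 2 15 4 rfl (by norm_num) (by norm_num)
  norm_num at h
  simp only [thetaTen_seven hq, thetaTen_thirteen hq, thetaTen_fifteen hq, thetaTen_seventeen hq,
    thetaTen_neg_two hq] at h
  linear_combination (norm := (field_simp; ring)) -q ^ 5 / thetaTen q 5 * h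

lemma appellTen_seventeen_six : q ^ 4 * appellTen q 17 6 =
    (q ^ 2 * thetaTen q 3 * appellTen q 15 4 +
      q * eulerTenCube q * thetaTen q 1 * thetaTen q 2 / thetaTen q 4 ^ 2) / thetaTen q 5 := by
  have n₄ : thetaTen q 4 ≠ 0 := thetaTen_ne_zero hq hq1 (by norm_num)
  have n₅ : thetaTen q 5 ≠ 0 := thetaTen_ne_zero hq hq1 (by norm_num)
  have h := thetaTen_mul_appellTen_sub hq hq1 17 6 15 4 rfl (by norm_num) (by norm_num)
  norm_num at h
  simp only [thetaTen_six hq, thetaTen_seven hq, thetaTen_eleven hq, thetaTen_fifteen hq,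
    thetaTen_seventeen hq, thetaTen_twenty_one hq] at h
  linear_combination (norm := (field_simp; ring)) -q ^ 9 / thetaTen q 5 * h

lemma appellTen_nine_two : appellTen q 9 2 =
    (-q ^ 2 * thetaTen q 1 * appellTen q 15 2 +
      eulerTenCube q * thetaTen q 3 * thetaTen q 4 / thetaTen q 2 ^ 2) / thetaTen q 5 := by
  have n₂ : thetaTen q 2 ≠ 0 := thetaTen_ne_zero hq hq1 (by norm_num)
  have n₅ : thetaTen q 5 ≠ 0 := thetaTen_ne_zero hq hq1 (by norm_num)
  have h := thetaTen_mul_appellTen_sub hq hq1 9 2 5 (-2) rfl (by norm_num) (by norm_num)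
  have hneg := appellTen_eq_neg_appellTen_neg hq 15 2
  norm_num at h hneg
  simp only [thetaTen_seven hq, thetaTen_nine hq, thetaTen_neg_two hq] at h
  linear_combination (norm := (field_simp; ring)) 1 / thetaTen q 5 * h +
    q ^ 2 * thetaTen q 1 / thetaTen q 5 * hneg

lemma appellTen_eleven_four : appellTen q 11 4 =
    (q * thetaTen q 1 * appellTen q 15 2 + eulerTenCube q * thetaTen q 1 / thetaTen q 2) /
      thetaTen q 5 := by
  have n₂ : thetaTen q 2 ≠ 0 := thetaTen_ne_zero hq hq1 (by norm_num)
  have n₄ : thetaTen q 4 ≠ 0 := thetaTen_ne_zero hq hq1 (by norm_num)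
  have n₅ : thetaTen q 5 ≠ 0 := thetaTen_ne_zero hq hq1 (by norm_num)
  have h := thetaTen_mul_appellTen_sub hq hq1 11 4 5 (-2) rfl (by norm_num) (by norm_num)
  have hneg := appellTen_eq_neg_appellTen_neg hq 15 2
  norm_num at h hneg
  simp only [thetaTen_six hq, thetaTen_nine hq, thetaTen_eleven hq, thetaTen_neg_two hq] at h
  linear_combination (norm := (field_simp; ring)) 1 / thetaTen q 5 * h -
    q * thetaTen q 1 / thetaTen q 5 * hneg

lemma appellTen_fourteen_two_sub : appellTen q 14 2 - q ^ 2 * appellTen q 16 4 =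
    eulerTenCube q * thetaTen q 2 / thetaTen q 4 ^ 2 := by
  have n₄ : thetaTen q 4 ≠ 0 := thetaTen_ne_zero hq hq1 (by norm_num)
  have h := thetaTen_mul_appellTen_sub hq hq1 14 2 16 4 rfl (by norm_num) (by norm_num)
  norm_num at h
  simp only [thetaTen_six hq, thetaTen_eight hq, thetaTen_fourteen hq, thetaTen_sixteen hq,
    thetaTen_eighteen hq, thetaTen_neg_two hq] at h
  linear_combination (norm := (field_simp; ring)) -q ^ 6 / thetaTen q 4 * h

lemma appellTen_seventeen_four : q ^ 2 * appellTen q 17 4 =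
    (thetaTen q 3 * appellTen q 15 2 - eulerTenCube q * thetaTen q 1 / thetaTen q 4) /
      thetaTen q 5 := by
  have n₂ : thetaTen q 2 ≠ 0 := thetaTen_ne_zero hq hq1 (by norm_num)
  have n₄ : thetaTen q 4 ≠ 0 := thetaTen_ne_zero hq hq1 (by norm_num)
  have n₅ : thetaTen q 5 ≠ 0 := thetaTen_ne_zero hq hq1 (by norm_num)
  have h := thetaTen_mul_appellTen_sub hq hq1 15 2 17 4 rfl (by norm_num) (by norm_num)
  norm_num at h
  simp only [thetaTen_seven hq, thetaTen_nine hq, thetaTen_fifteen hq, thetaTen_seventeen hq,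
    thetaTen_nineteen hq, thetaTen_neg_two hq] at h
  linear_combination (norm := (field_simp; ring)) q ^ 7 / thetaTen q 5 * h

lemma rankGap₄_eq : rankGap₄ q = (6 * lambertSum q 10 1 - 4 * eulerTenCube q / thetaTen q 2 -
    4 * q * eulerTenCube q * thetaTen q 1 / (thetaTen q 3 * thetaTen q 4)) / thetaTen q 5 := by
  have n₂ : thetaTen q 2 ≠ 0 := thetaTen_ne_zero hq hq1 (by norm_num)
  have n₃ : thetaTen q 3 ≠ 0 := thetaTen_ne_zero hq hq1 (by norm_num)
  have n₄ : thetaTen q 4 ≠ 0 := thetaTen_ne_zero hq hq1 (by norm_num)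
  have n₅ : thetaTen q 5 ≠ 0 := thetaTen_ne_zero hq hq1 (by norm_num)
  have hL : lambertSum q 10 1 = eulerTenCube q / thetaTen q 2 + q * appellTen q 15 2 := by
    rw [← appellTen_ten hq hq1 (by norm_num), lambertSum, zpow_one]
    norm_num
  rw [rankGap₄, pow_succ' q 2, mul_assoc q, appellTen_seventeen_four hq hq1, hL]
  field_simp
  ring

theorem rankGapNum₀_eq : rankGapNum₀ q = thetaTen q 5 * rankGap₀ q -
    2 * q * thetaTen q 3 * rankGap₄ q + 2 * q * thetaTen q 1 * rankGap₁ q := by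
  have n₂ : thetaTen q 2 ≠ 0 := thetaTen_ne_zero hq hq1 (by norm_num)
  have n₃ : thetaTen q 3 ≠ 0 := thetaTen_ne_zero hq hq1 (by norm_num)
  have n₄ : thetaTen q 4 ≠ 0 := thetaTen_ne_zero hq hq1 (by norm_num)
  have n₅ : thetaTen q 5 ≠ 0 := thetaTen_ne_zero hq hq1 (by norm_num)
  rw [rankGapNum₀, lambertSum_seven_zero_sub hq hq1, lambertSum_six_zero_add hq hq1,
    rankGap₄_eq hq hq1, rankGap₀, rankGap₁, lambertSum, lambertSum]
  norm_num
  rw [appellTen_ten hq hq1 (b := 2) (by norm_num), appellTen_ten hq hq1 (b := 4) (by norm_num)]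
  linear_combination (norm := (field_simp; ring)) -2 * three_mul_logDerivTen_four hq hq1 +
    q * eulerTenCube q / (thetaTen q 2 * thetaTen q 3 * thetaTen q 4 ^ 3 * thetaTen q 5) *
      (-2 * thetaTen q 4 * thetaTen_weierstrass_one_three_four hq hq1 +
        2 * q * thetaTen q 2 * thetaTen_weierstrass_one_two_three hq hq1)

theorem rankGapNum₁_eq : rankGapNum₁ q = thetaTen q 5 * rankGap₁ q -
    2 * thetaTen q 3 * rankGap₀ q + 2 * q * thetaTen q 1 * rankGap₂ q := by
  have n₁ : thetaTen q 1 ≠ 0 := thetaTen_ne_zero hq hq1 (by norm_num)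
  have n₃ : thetaTen q 3 ≠ 0 := thetaTen_ne_zero hq hq1 (by norm_num)
  have n₅ : thetaTen q 5 ≠ 0 := thetaTen_ne_zero hq hq1 (by norm_num)
  rw [rankGapNum₁, rankGap₀, rankGap₁, rankGap₂]
  field_simp
  ring

theorem rankGapNum₂_eq : rankGapNum₂ q = thetaTen q 5 * rankGap₂ q -
    2 * thetaTen q 3 * rankGap₁ q + 2 * q * thetaTen q 1 * rankGap₃ q := by
  have n₁ : thetaTen q 1 ≠ 0 := thetaTen_ne_zero hq hq1 (by norm_num)
  have n₂ : thetaTen q 2 ≠ 0 := thetaTen_ne_zero hq hq1 (by norm_num)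
  have n₃ : thetaTen q 3 ≠ 0 := thetaTen_ne_zero hq hq1 (by norm_num)
  have n₄ : thetaTen q 4 ≠ 0 := thetaTen_ne_zero hq hq1 (by norm_num)
  have n₅ : thetaTen q 5 ≠ 0 := thetaTen_ne_zero hq hq1 (by norm_num)
  rw [rankGapNum₂, rankGap₁, rankGap₂, rankGap₃]
  unfold lambertSum
  norm_num
  rw [appellTen_thirteen_two hq hq1, appellTen_ten hq hq1 (b := 4) (by norm_num)]
  linear_combination (norm := (field_simp; ring)) 2 * appellTen_eight_two_add hq hq1 +
    2 * q * appellTen_seventeen_six hq hq1 + 2 * eulerTenCube q /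
      (thetaTen q 1 * thetaTen q 2 ^ 2 * thetaTen q 3 * thetaTen q 4 ^ 2 * thetaTen q 5) *
      (thetaTen q 2 * thetaTen q 3 * thetaTen_weierstrass_one_three_four hq hq1 +
        2 * thetaTen q 4 * thetaTen q 5 * thetaTen_weierstrass_one_two_three hq hq1 -
        thetaTen q 3 * thetaTen q 4 * thetaTen_weierstrass_one_two_four hq hq1)

theorem rankGapNum₃_eq : rankGapNum₃ q = thetaTen q 5 * rankGap₃ q -
    2 * thetaTen q 3 * rankGap₂ q + 2 * q * thetaTen q 1 * rankGap₄ q := by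
  have n₁ : thetaTen q 1 ≠ 0 := thetaTen_ne_zero hq hq1 (by norm_num)
  have n₂ : thetaTen q 2 ≠ 0 := thetaTen_ne_zero hq hq1 (by norm_num)
  have n₃ : thetaTen q 3 ≠ 0 := thetaTen_ne_zero hq hq1 (by norm_num)
  have n₄ : thetaTen q 4 ≠ 0 := thetaTen_ne_zero hq hq1 (by norm_num)
  have n₅ : thetaTen q 5 ≠ 0 := thetaTen_ne_zero hq hq1 (by norm_num)
  rw [rankGapNum₃, rankGap₄_eq hq hq1, rankGap₂, rankGap₃]
  unfold lambertSum
  norm_num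
  rw [appellTen_eleven_four hq hq1, appellTen_nine_two hq hq1,
    appellTen_ten hq hq1 (b := 2) (by norm_num)]
  linear_combination (norm := (field_simp; ring)) -6 * q * appellTen_fourteen_two_sub hq hq1 +
    eulerTenCube q /
      (thetaTen q 1 * thetaTen q 2 ^ 2 * thetaTen q 3 * thetaTen q 4 ^ 2 * thetaTen q 5) *
      (2 * thetaTen q 1 * thetaTen q 4 * thetaTen_weierstrass_one_three_four hq hq1 +
        (6 * q * thetaTen q 1 * thetaTen q 2 - 4 * thetaTen q 3 * thetaTen q 4) *
          thetaTen_weierstrass_one_two_three hq hq1)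

theorem rankGapNum₄_eq : rankGapNum₄ q = thetaTen q 5 * rankGap₄ q -
    2 * thetaTen q 3 * rankGap₃ q + 2 * thetaTen q 1 * rankGap₀ q := by
  have n₂ : thetaTen q 2 ≠ 0 := thetaTen_ne_zero hq hq1 (by norm_num)
  have n₃ : thetaTen q 3 ≠ 0 := thetaTen_ne_zero hq hq1 (by norm_num)
  have n₄ : thetaTen q 4 ≠ 0 := thetaTen_ne_zero hq hq1 (by norm_num)
  have n₅ : thetaTen q 5 ≠ 0 := thetaTen_ne_zero hq hq1 (by norm_num)
  rw [rankGapNum₄, rankGap₄_eq hq hq1, rankGap₀, rankGap₃]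
  field_simp
  ring

end RankGapComponents

section Dissection

/-- The term `(-1)ⁿ q^(n²)` of Gauss's series for `∏ (1 - qⁿ) / (1 + qⁿ)`. -/
noncomputable def gaussTerm (q : ℝ) (n : ℤ) : ℝ := (-1) ^ n * q ^ (n * n)

/-- The term of the bilateral series that, divided by Gauss's series, generates
`N̄(1,5,n) - N̄(2,5,n)`; since `0⁻¹ = 0`, the term with `n = 0` vanishes. -/
noncomputable def rankGapTerm (q : ℝ) (n : ℤ) : ℝ :=
  gaussTerm q n * (6 * q ^ (2 * n) - 2 * q ^ n) * (1 - q ^ (5 * n))⁻¹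

/-- The generating function of `N̄(1,5,n) - N̄(2,5,n)`, assembled from its 5-dissection. -/
noncomputable def rankGapSeries (q : ℝ) : ℝ :=
  rankGap₀ (q ^ 5) + q * rankGap₁ (q ^ 5) + q ^ 2 * rankGap₂ (q ^ 5) + q ^ 3 * rankGap₃ (q ^ 5) +
    q ^ 4 * rankGap₄ (q ^ 5)

lemma hasSum_of_hasSum_emod {α : Type*} [AddCommMonoid α] [TopologicalSpace α] [ContinuousAdd α]
    {m : ℕ} (hm : m ≠ 0) {f : ℤ → α} {s : ℕ → α}
    (h : ∀ a < m, HasSum (fun k : ℤ => f (m * k + a)) (s a)) :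
    HasSum f (∑ a ∈ Finset.range m, s a) := by
  have hclass : ∀ a ∈ Finset.range m, HasSum (fun n : ℤ => if n % m = a then f n else 0) (s a) := by
    intro a ha
    rw [Finset.mem_range] at ha
    have hinj : Function.Injective fun k : ℤ => m * k + a := fun x y hxy => by
      simpa [hm] using hxy
    refine (hinj.hasSum_iff fun n hn => if_neg fun hna => hn ⟨n / m, ?_⟩).1
      ((h a ha).congr_fun fun k => if_pos ?_)
    · simpa only [← hna] using Int.mul_ediv_add_emod n m
    · rw [Int.mul_add_emod_self_left, Int.emod_eq_of_lt (by omega) (by omega)]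
  refine (hasSum_sum hclass).congr_fun fun n => ?_
  have hpos : 0 ≤ n % m := Int.emod_nonneg n (by omega)
  have hlt : n % m < m := Int.emod_lt_of_pos n (by omega)
  obtain ⟨a, ha⟩ := Int.eq_ofNat_of_zero_le hpos
  rw [Finset.sum_eq_single_of_mem a (Finset.mem_range.2 (by omega)) fun b _ hb =>
    if_neg (by omega), if_pos ha]

lemma inv_one_sub_eq {x : ℝ} (hx : 0 < x) : (1 - x)⁻¹ = (1 + x) * (1 - x ^ 2)⁻¹ := by
  obtain rfl | h := eq_or_ne x 1
  · simp
  · have h₁ : 1 - x ≠ 0 := sub_ne_zero.2 h.symm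
    have h₂ : 1 + x ≠ 0 := by positivity
    rw [show 1 - x ^ 2 = (1 - x) * (1 + x) by ring]
    field_simp

variable {q : ℝ} (hq : 0 < q)
include hq

lemma thetaTerm_pow_ten_add (c b k : ℤ) : thetaTerm (q ^ 10) (q ^ (c + b)) k =
    thetaTerm (q ^ 10) (q ^ c) k * q ^ (b * k) := by
  rw [zpow_add₀ hq.ne', thetaTerm_mul, ← zpow_mul]

lemma thetaTerm_pow_ten (c k : ℤ) : thetaTerm (q ^ 10) (q ^ c) k =
    (-1) ^ k * q ^ (5 * k * k - 5 * k + c * k) := by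
  rw [thetaTerm, pow_ten_zpow, ← zpow_mul, mul_assoc, ← zpow_add₀ hq.ne']
  congr 2
  linear_combination 5 * two_mul_triangle k

lemma hasSum_lambertSum (hq1 : q < 1) (c b : ℤ) :
    HasSum (fun k : ℤ => thetaTerm (q ^ 10) (q ^ c) k * (1 - q ^ (5 * k + b))⁻¹)
      (lambertSum q c b) := by
  have hsum (c : ℤ) : HasSum
      (fun k : ℤ => thetaTerm (q ^ 10) (q ^ c) k * (1 - q ^ (2 * b) * (q ^ 10) ^ k)⁻¹)
      (appellTen q c (2 * b)) :=
    (summable_appell (pow_pos hq 10) (pow_ten_lt_one hq hq1) (zpow_pos hq c)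
      (zpow_pos hq _).ne').hasSum
  refine ((hsum c).add ((hsum (c + 5)).mul_left (q ^ b))).congr_fun fun k => ?_
  have hsq : (q ^ (5 * k + b)) ^ 2 = q ^ (2 * b) * (q ^ 10) ^ k := by
    rw [pow_ten_zpow, ← zpow_add₀ hq.ne', ← zpow_natCast, ← zpow_mul]
    congr 1
    push_cast
    ring
  rw [inv_one_sub_eq (zpow_pos hq _), hsq, thetaTerm_pow_ten_add hq c 5, zpow_add₀ hq.ne' (5 * k) b]
  ring

lemma gaussTerm_five_mul_add (a k : ℤ) : gaussTerm q (5 * k + a) =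
    (-1) ^ a * q ^ (a * a) * thetaTerm ((q ^ 5) ^ 10) ((q ^ 5) ^ (5 + 2 * a)) k := by
  have hexp : q ^ ((5 * k + a) * (5 * k + a)) =
      q ^ (a * a) * (q ^ 5) ^ (5 * k * k - 5 * k + (5 + 2 * a) * k) := by
    rw [← zpow_natCast q 5, ← zpow_mul, ← zpow_add₀ hq.ne']
    congr 1
    push_cast
    ring
  rw [thetaTerm_pow_ten (by positivity), gaussTerm, hexp, zpow_add₀ (by norm_num), zpow_mul]
  norm_num
  ring

lemma rankGapTerm_five_mul_add (a k : ℤ) : rankGapTerm q (5 * k + a) =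
    (-1) ^ a * q ^ (a * a) *
      (6 * q ^ (2 * a) * (thetaTerm ((q ^ 5) ^ 10) ((q ^ 5) ^ (7 + 2 * a)) k *
          (1 - (q ^ 5) ^ (5 * k + a))⁻¹) -
        2 * q ^ a * (thetaTerm ((q ^ 5) ^ 10) ((q ^ 5) ^ (6 + 2 * a)) k *
          (1 - (q ^ 5) ^ (5 * k + a))⁻¹)) := by
  have hpow (n : ℤ) : q ^ (5 * n) = (q ^ 5) ^ n := by
    rw [zpow_mul]
    norm_cast
  have h₁ : q ^ (5 * k + a) = (q ^ 5) ^ (1 * k) * q ^ a := by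
    rw [zpow_add₀ hq.ne', hpow, one_mul]
  have h₂ : q ^ (2 * (5 * k + a)) = (q ^ 5) ^ (2 * k) * q ^ (2 * a) := by
    rw [← hpow, ← zpow_add₀ hq.ne']
    congr 1
    ring
  rw [rankGapTerm, gaussTerm_five_mul_add hq, h₁, h₂, hpow, show 7 + 2 * a = 5 + 2 * a + 2 by ring,
    show 6 + 2 * a = 5 + 2 * a + 1 by ring, thetaTerm_pow_ten_add (by positivity) _ 2,
    thetaTerm_pow_ten_add (by positivity) _ 1]
  ring

lemma lambertSum_fifteen_four : q ^ 4 * lambertSum q 15 4 = lambertSum q 10 1 := by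
  have h₁ := appellTen_add_ten hq 5 (-2)
  have h₂ := appellTen_add_ten hq 10 (-2)
  have h₃ := appellTen_eq_neg_appellTen_neg hq 15 2
  have h₄ := appellTen_eq_neg_appellTen_neg hq 10 2
  unfold lambertSum
  norm_num at h₁ h₂ h₃ h₄ ⊢
  rw [h₁, h₂, h₃, h₄]
  norm_cast
  field_simp
  ring

variable (hq1 : q < 1)
include hq1

lemma hasSum_gaussTerm_five_mul_add (a : ℤ) : HasSum (fun k : ℤ => gaussTerm q (5 * k + a))
    ((-1) ^ a * q ^ (a * a) * thetaTen (q ^ 5) (5 + 2 * a)) :=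
  have hQ : 0 < q ^ 5 := by positivity
  have hQ1 : q ^ 5 < 1 := pow_lt_one₀ hq.le hq1 (by norm_num)
  ((summable_thetaTerm (pow_pos hQ 10) (pow_ten_lt_one hQ hQ1) (zpow_pos hQ _)).hasSum.mul_left
    _).congr_fun (gaussTerm_five_mul_add hq a)

lemma hasSum_rankGapTerm_five_mul_add (a : ℤ) : HasSum (fun k : ℤ => rankGapTerm q (5 * k + a))
    ((-1) ^ a * q ^ (a * a) * (6 * q ^ (2 * a) * lambertSum (q ^ 5) (7 + 2 * a) a -
      2 * q ^ a * lambertSum (q ^ 5) (6 + 2 * a) a)) :=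
  have hsum (c : ℤ) := hasSum_lambertSum (pow_pos hq 5) (pow_lt_one₀ hq.le hq1 (by norm_num)) c a
  ((((hsum _).mul_left _).sub ((hsum _).mul_left _)).mul_left _).congr_fun
    (rankGapTerm_five_mul_add hq a)

lemma hasSum_gaussTerm : HasSum (gaussTerm q)
    (thetaTen (q ^ 5) 5 - 2 * q * thetaTen (q ^ 5) 3 + 2 * q ^ 4 * thetaTen (q ^ 5) 1) := by
  have hQ : 0 < q ^ 5 := by positivity
  convert hasSum_of_hasSum_emod (m := 5) (by norm_num)
    fun a _ => hasSum_gaussTerm_five_mul_add hq hq1 a using 1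
  norm_num [Finset.sum_range_succ]
  rw [thetaTen_seven hQ, thetaTen_nine hQ, thetaTen_eleven hQ, thetaTen_thirteen hQ]
  norm_cast
  field_simp
  ring

lemma hasSum_rankGapTerm : HasSum (rankGapTerm q)
    (rankGapNum₀ (q ^ 5) + q * rankGapNum₁ (q ^ 5) + q ^ 2 * rankGapNum₂ (q ^ 5) +
      q ^ 3 * rankGapNum₃ (q ^ 5) + q ^ 4 * rankGapNum₄ (q ^ 5)) := by
  convert hasSum_of_hasSum_emod (m := 5) (by norm_num)
    fun a _ => hasSum_rankGapTerm_five_mul_add hq hq1 a using 1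
  have h := lambertSum_fifteen_four (pow_pos hq 5)
  unfold rankGapNum₀ rankGapNum₁ rankGapNum₂ rankGapNum₃ rankGapNum₄
  norm_num [Finset.sum_range_succ]
  norm_cast
  linear_combination -6 * q ^ 4 * h

theorem hasSum_rankGapTerm_eq_mul :
    HasSum (rankGapTerm q) (rankGapSeries q * ∑' n, gaussTerm q n) := by
  have hQ : 0 < q ^ 5 := by positivity
  have hQ1 : q ^ 5 < 1 := pow_lt_one₀ hq.le hq1 (by norm_num)
  convert hasSum_rankGapTerm hq hq1 using 1
  rw [(hasSum_gaussTerm hq hq1).tsum_eq, rankGapNum₀_eq hQ hQ1, rankGapNum₁_eq hQ hQ1,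
    rankGapNum₂_eq hQ hQ1, rankGapNum₃_eq hQ hQ1, rankGapNum₄_eq hQ hQ1, rankGapSeries]
  ring

end Dissection

section GeneratingFunction

/-- The generating function of overpartitions. -/
noncomputable def pbarSeries (q : ℝ) : ℝ := ∑' n, (pbar n : ℝ) * q ^ n

/-- The generating function of `tailSum m`. -/
noncomputable def tailSeries (q : ℝ) (m : ℕ) : ℝ := ∑' n, (tailSum m n : ℝ) * q ^ n

/-- The term of index `k + 1` of `-∑ₖ (-1)ᵏ q^(k² + mk)`. -/
noncomputable def halfGaussTerm (q : ℝ) (m k : ℕ) : ℝ := (-1) ^ k * q ^ ((k + 1) ^ 2 + m * (k + 1))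

/-- The half theta series by which `2 * pbarSeries q` is multiplied in `tailSeries q m`. -/
noncomputable def halfGauss (q : ℝ) (m : ℕ) : ℝ := ∑' k, halfGaussTerm q m k

lemma eq_zero_of_abs_le_mul {x : ℕ → ℝ} {r C : ℝ} {d : ℕ} (hr0 : 0 ≤ r) (hr1 : r < 1)
    (hC : ∀ m, |x m| ≤ C) (hx : ∀ m, |x m| ≤ r * |x (m + d)|) (m : ℕ) : x m = 0 := by
  have hbound (k : ℕ) : ∀ m, |x m| ≤ r ^ k * C := by
    induction k with
    | zero => simpa using hC
    | succ k ih =>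
      intro m
      calc |x m| ≤ r * |x (m + d)| := hx m
        _ ≤ r * (r ^ k * C) := mul_le_mul_of_nonneg_left (ih _) hr0
        _ = r ^ (k + 1) * C := by ring
  have hlim : Filter.Tendsto (fun k : ℕ => r ^ k * C) Filter.atTop (nhds 0) := by
    simpa using (tendsto_pow_atTop_nhds_zero_of_lt_one hr0 hr1).mul_const C
  exact abs_nonpos_iff.1 (ge_of_tendsto' hlim fun k => hbound k m)

lemma hasSum_nat_succ_add_neg_succ {f : ℤ → ℝ} {a : ℝ} (hf : HasSum f a) :
    HasSum (fun k : ℕ => f (k + 1 : ℕ) + f (-(k + 1 : ℕ))) (a - f 0) := by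
  have h := (hasSum_nat_add_iff' 1).2 hf.nat_add_neg
  simpa using h

lemma hasSum_column_tsum_row {f : ℕ → ℕ → ℝ} {r c : ℕ → ℝ}
    (hf : Summable fun x : ℕ × ℕ => f x.1 x.2) (hr : ∀ t, HasSum (f t) (r t))
    (hc : ∀ k, HasSum (fun t => f t k) (c k)) : HasSum c (∑' t, r t) := by
  have hrows := hf.hasSum.prod_fiberwise hr
  have hcols := (Equiv.prodComm ℕ ℕ).hasSum_iff.2 hf.hasSum
  rw [hrows.tsum_eq]
  exact hcols.prod_fiberwise hc

lemma pbar_zero : pbar 0 = 1 := by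
  zify
  rw [← rankSum_one, rankSum, Fintype.sum_unique]
  simp

section HalfGauss

variable {q : ℝ} (hq : 0 < q) (hq1 : q < 1)
include hq hq1

lemma norm_halfGaussTerm_le (m k : ℕ) : ‖halfGaussTerm q m k‖ ≤ q ^ m * q ^ k := by
  rw [halfGaussTerm, norm_mul, norm_pow, norm_neg, norm_one, one_pow, one_mul,
    Real.norm_of_nonneg (by positivity), ← pow_add]
  exact pow_le_pow_of_le_one hq.le hq1.le (by nlinarith [Nat.zero_le (m * k)])

lemma summable_halfGaussTerm (m : ℕ) : Summable (halfGaussTerm q m) :=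
  .of_norm_bounded ((summable_geometric_of_lt_one hq.le hq1).mul_left _)
    (norm_halfGaussTerm_le hq hq1 m)

lemma abs_halfGauss_le (m : ℕ) : |halfGauss q m| ≤ (1 - q)⁻¹ := by
  refine (tsum_of_norm_bounded ((hasSum_geometric_of_lt_one hq.le hq1).mul_left (q ^ m))
    (norm_halfGaussTerm_le hq hq1 m)).trans ?_
  exact mul_le_of_le_one_left (inv_nonneg.2 (by linarith)) (pow_le_one₀ hq.le hq1.le)

lemma halfGauss_eq_mul_one_sub (m : ℕ) :
    halfGauss q m = q ^ (m + 1) * (1 - halfGauss q (m + 2)) := by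
  rw [halfGauss, (summable_halfGaussTerm hq hq1 m).tsum_eq_zero_add, mul_sub, halfGauss,
    ← tsum_mul_left, sub_eq_add_neg, ← tsum_neg]
  congr 1
  · simp [halfGaussTerm, add_comm]
  · refine tsum_congr fun k => ?_
    unfold halfGaussTerm
    ring

lemma tsum_gaussTerm : ∑' n, gaussTerm q n = 1 - 2 * halfGauss q 0 := by
  have h := hasSum_nat_succ_add_neg_succ (hasSum_gaussTerm hq hq1).summable.hasSum
  have hpair (k : ℕ) : gaussTerm q (k + 1 : ℕ) + gaussTerm q (-(k + 1 : ℕ)) =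
      -2 * halfGaussTerm q 0 k := by
    have hsq : ((k + 1 : ℕ) : ℤ) * (k + 1 : ℕ) = ((k + 1) ^ 2 : ℕ) := by push_cast; ring
    rw [gaussTerm, gaussTerm, halfGaussTerm, neg_mul_neg, hsq, zpow_natCast, zpow_neg,
      zpow_natCast, zpow_natCast, ← inv_pow, inv_neg_one]
    ring
  have hsum := h.unique
    (((summable_halfGaussTerm hq hq1 0).hasSum.mul_left (-2)).congr_fun hpair)
  have hzero : gaussTerm q 0 = 1 := by simp [gaussTerm]
  rw [hzero] at hsum
  rw [halfGauss]
  linarith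

lemma hasSum_halfGaussTerm_mul_inv (a : ℕ) :
    HasSum (fun k : ℕ => halfGaussTerm q a k * (1 - q ^ (5 * (k + 1)))⁻¹)
      (∑' t : ℕ, halfGauss q (5 * t + a)) := by
  have hgeom := summable_geometric_of_lt_one hq.le hq1
  have hsum : Summable fun x : ℕ × ℕ => halfGaussTerm q (5 * x.1 + a) x.2 := by
    refine Summable.of_norm_bounded (hgeom.mul_of_nonneg hgeom (fun n => by positivity)
      fun n => by positivity) fun x => (norm_halfGaussTerm_le hq hq1 _ _).trans ?_
    have hpow : q ^ (5 * x.1 + a) ≤ q ^ x.1 := pow_le_pow_of_le_one hq.le hq1.le (by omega)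
    exact mul_le_mul_of_nonneg_right hpow (by positivity)
  refine hasSum_column_tsum_row (f := fun t k => halfGaussTerm q (5 * t + a) k) hsum
    (fun t => (summable_halfGaussTerm hq hq1 _).hasSum) fun k => ?_
  have hcol := hasSum_geometric_of_lt_one (r := q ^ (5 * (k + 1))) (by positivity)
    (pow_lt_one₀ hq.le hq1 (by omega))
  refine (hcol.mul_left (halfGaussTerm q a k)).congr_fun fun t => ?_
  unfold halfGaussTerm
  ring

lemma rankGapTerm_add_rankGapTerm_neg (k : ℕ) :
    rankGapTerm q (k + 1 : ℕ) + rankGapTerm q (-(k + 1 : ℕ)) =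
      2 * (halfGaussTerm q 1 k * (1 - q ^ (5 * (k + 1)))⁻¹ -
        3 * (halfGaussTerm q 2 k * (1 - q ^ (5 * (k + 1)))⁻¹) +
        3 * (halfGaussTerm q 3 k * (1 - q ^ (5 * (k + 1)))⁻¹) -
        halfGaussTerm q 4 k * (1 - q ^ (5 * (k + 1)))⁻¹) := by
  have hsq : ((k + 1 : ℕ) : ℤ) * (k + 1 : ℕ) = ((k + 1) ^ 2 : ℕ) := by push_cast; ring
  have hmul (a : ℕ) : q ^ ((a : ℤ) * (k + 1 : ℕ)) = (q ^ (k + 1)) ^ a := by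
    rw [← pow_mul', ← zpow_natCast, Nat.cast_mul]
  have h₂ : q ^ (2 * (k + 1 : ℕ) : ℤ) = (q ^ (k + 1)) ^ 2 := hmul 2
  have h₅ : q ^ (5 * (k + 1 : ℕ) : ℤ) = (q ^ (k + 1)) ^ 5 := hmul 5
  have hx : 0 < q ^ (k + 1) := by positivity
  have hx5 : 1 - (q ^ (k + 1)) ^ 5 ≠ 0 :=
    (sub_pos.2 (pow_lt_one₀ hx.le (pow_lt_one₀ hq.le hq1 (by omega)) (by norm_num))).ne'
  rw [rankGapTerm, rankGapTerm, gaussTerm, gaussTerm, neg_mul_neg]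
  simp only [halfGaussTerm, hsq, mul_neg, zpow_neg, zpow_natCast, h₂, h₅, pow_mul' q _ (k + 1),
    pow_add q ((k + 1) ^ 2)]
  generalize q ^ (k + 1) = x at *
  have hinv : (1 - (x ^ 5)⁻¹)⁻¹ = -x ^ 5 * (1 - x ^ 5)⁻¹ := by
    refine inv_eq_of_mul_eq_one_right ?_
    field_simp
    ring
  rw [hinv, ← inv_pow (-1 : ℝ), inv_neg_one]
  field_simp
  ring

end HalfGauss

variable {q : ℝ} (hq : 0 < q) (hq4 : q < 1 / 4)
include hq

lemma tailSum_mul_pow_nonneg (m : ℤ) (n : ℕ) : 0 ≤ (tailSum m n : ℝ) * q ^ n := by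
  have h : (0 : ℝ) ≤ tailSum m n := mod_cast tailSum_nonneg m n
  positivity

lemma tailSum_mul_pow_le (m : ℤ) (n : ℕ) :
    (tailSum m n : ℝ) * q ^ n ≤ 2 * ((pbar n : ℝ) * q ^ n) := by
  have h : (tailSum m n : ℝ) ≤ 2 * pbar n := mod_cast tailSum_le m n
  rw [← mul_assoc]
  exact mul_le_mul_of_nonneg_right h (by positivity)

lemma pbarSeries_nonneg : 0 ≤ pbarSeries q := tsum_nonneg fun n => by positivity

lemma tailSeries_nonneg (m : ℕ) : 0 ≤ tailSeries q m := tsum_nonneg (tailSum_mul_pow_nonneg hq m)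

include hq4

lemma summable_pbar_mul_pow : Summable fun n => (pbar n : ℝ) * q ^ n := by
  refine .of_nonneg_of_le (fun n => by positivity) (fun n => ?_)
    (summable_geometric_of_lt_one (r := 4 * q) (by positivity) (by linarith))
  have h : (pbar n : ℝ) ≤ 4 ^ n := mod_cast pbar_le n
  rw [mul_pow]
  exact mul_le_mul_of_nonneg_right h (by positivity)

lemma summable_tailSum_mul_pow (m : ℤ) : Summable fun n => (tailSum m n : ℝ) * q ^ n :=
  .of_nonneg_of_le (tailSum_mul_pow_nonneg hq m) (tailSum_mul_pow_le hq m)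
    ((summable_pbar_mul_pow hq hq4).mul_left 2)

lemma tailSeries_le (m : ℕ) : tailSeries q m ≤ 2 * pbarSeries q := by
  unfold tailSeries pbarSeries
  rw [← tsum_mul_left]
  exact (summable_tailSum_mul_pow hq hq4 m).tsum_le_tsum (tailSum_mul_pow_le hq m)
    ((summable_pbar_mul_pow hq hq4).mul_left 2)

lemma tailSeries_eq_sum_add (m : ℕ) : tailSeries q m =
    ∑ n ∈ Finset.range (m + 1), (tailSum m n : ℝ) * q ^ n +
      q ^ (m + 1) * (2 * pbarSeries q - tailSeries q (m + 2)) := by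
  unfold tailSeries pbarSeries
  rw [← (summable_tailSum_mul_pow hq hq4 m).sum_add_tsum_nat_add (m + 1), ← tsum_mul_left,
    ← ((summable_pbar_mul_pow hq hq4).mul_left 2).tsum_sub (summable_tailSum_mul_pow hq hq4 _),
    ← tsum_mul_left]
  congr 1
  refine tsum_congr fun n => ?_
  have h : tailSum m (n + (m + 1)) = 2 * pbar n - tailSum (m + 2 : ℕ) n := by
    simpa [add_assoc] using tailSum_sub_one (n := n) (n' := n + (m + 1)) (c := m + 1) (by simp)
  rw [h]
  push_cast
  ring

lemma tailSeries_eq_mul {m : ℕ} (hm : m ≠ 0) :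
    tailSeries q m = q ^ (m + 1) * (2 * pbarSeries q - tailSeries q (m + 2)) := by
  rw [tailSeries_eq_sum_add hq hq4, Finset.sum_eq_zero, zero_add]
  intro n hn
  rw [tailSum_of_le hm (Nat.lt_succ_iff.1 (Finset.mem_range.1 hn)), Int.cast_zero, zero_mul]

theorem tailSeries_eq_mul_halfGauss {m : ℕ} (hm : m ≠ 0) :
    tailSeries q m = 2 * pbarSeries q * halfGauss q m := by
  have hq1 : q < 1 := by linarith
  have hP := pbarSeries_nonneg hq
  obtain ⟨m, rfl⟩ := Nat.exists_eq_succ_of_ne_zero hm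
  refine sub_eq_zero.1 <| eq_zero_of_abs_le_mul (d := 2) (r := q)
    (x := fun m => tailSeries q (m + 1) - 2 * pbarSeries q * halfGauss q (m + 1))
    (C := 2 * pbarSeries q + 2 * pbarSeries q * (1 - q)⁻¹) hq.le hq1 (fun m => ?_) (fun m => ?_) m
  · refine (abs_sub _ _).trans (add_le_add ?_ ?_)
    · rw [abs_of_nonneg (tailSeries_nonneg hq _)]
      exact tailSeries_le hq hq4 _
    · rw [abs_mul, abs_of_nonneg (by positivity)]
      exact mul_le_mul_of_nonneg_left (abs_halfGauss_le hq hq1 _) (by positivity)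
  · have hrec : tailSeries q (m + 1) - 2 * pbarSeries q * halfGauss q (m + 1) = -q ^ (m + 1 + 1) *
        (tailSeries q (m + 2 + 1) - 2 * pbarSeries q * halfGauss q (m + 2 + 1)) := by
      rw [tailSeries_eq_mul hq hq4 (Nat.succ_ne_zero m), halfGauss_eq_mul_one_sub hq hq1 (m + 1),
        Nat.succ_eq_add_one, show m + 1 + 2 = m + 2 + 1 by ring]
      ring
    rw [hrec, abs_mul, abs_neg, abs_of_pos (by positivity)]
    exact mul_le_mul_of_nonneg_right (pow_le_of_le_one hq.le hq1.le (by omega)) (abs_nonneg _)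

theorem pbarSeries_mul_tsum_gaussTerm : pbarSeries q * ∑' n, gaussTerm q n = 1 := by
  have hq1 : q < 1 := by linarith
  have hzero : tailSeries q 0 = pbarSeries q := by
    unfold tailSeries pbarSeries
    simp only [Nat.cast_zero, tailSum_zero, Int.cast_natCast]
  have hU := tailSeries_eq_sum_add hq hq4 0
  have hg := halfGauss_eq_mul_one_sub hq hq1 0
  rw [hzero, tailSeries_eq_mul_halfGauss hq hq4 (by norm_num)] at hU
  norm_num [tailSum_zero, pbar_zero] at hU hg
  rw [tsum_gaussTerm hq hq1]
  linear_combination hU - 2 * pbarSeries q * hg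

lemma summable_tailSeries {a : ℕ} (ha : a ≠ 0) :
    Summable fun t : ℕ => tailSeries q (5 * t + a) := by
  have hq1 : q < 1 := by linarith
  refine .of_nonneg_of_le (fun t => tailSeries_nonneg hq _) (fun t => ?_)
    ((summable_geometric_of_lt_one hq.le hq1).mul_right (2 * pbarSeries q))
  rw [tailSeries_eq_mul hq hq4 (by omega)]
  have h := tailSeries_nonneg hq (5 * t + a + 2)
  have hle := tailSeries_le hq hq4 (5 * t + a + 2)
  exact mul_le_mul (pow_le_pow_of_le_one hq.le hq1.le (by omega)) (by linarith) (by linarith)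
    (by positivity)

lemma hasSum_sum_tailSum_mul_pow {a : ℕ} (ha : a ≠ 0) :
    HasSum (fun n => ((∑ t ∈ Finset.range (n + 1), tailSum (5 * t + a : ℕ) n : ℤ) : ℝ) * q ^ n)
      (2 * pbarSeries q * ∑' t : ℕ, halfGauss q (5 * t + a)) := by
  have hsum : Summable fun x : ℕ × ℕ => (tailSum (5 * x.1 + a : ℕ) x.2 : ℝ) * q ^ x.2 :=
    (summable_prod_of_nonneg fun _ => tailSum_mul_pow_nonneg hq _ _).2
      ⟨fun t => summable_tailSum_mul_pow hq hq4 (5 * t + a : ℕ), summable_tailSeries hq hq4 ha⟩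
  have hrow (t : ℕ) : tailSeries q (5 * t + a) = 2 * pbarSeries q * halfGauss q (5 * t + a) :=
    tailSeries_eq_mul_halfGauss hq hq4 (by omega)
  rw [← tsum_mul_left, ← tsum_congr hrow]
  refine hasSum_column_tsum_row (f := fun t n => (tailSum (5 * t + a : ℕ) n : ℝ) * q ^ n) hsum
    (fun t => (summable_tailSum_mul_pow hq hq4 _).hasSum) fun n => ?_
  rw [Int.cast_sum, Finset.sum_mul]
  refine hasSum_sum_of_ne_finset_zero fun t ht => ?_
  rw [Finset.mem_range] at ht
  rw [tailSum_of_le (by omega) (by omega), Int.cast_zero, zero_mul]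

theorem hasSum_nbar_sub_nbar_mul_pow :
    HasSum (fun n => ((nbar 1 5 n : ℝ) - nbar 2 5 n) * q ^ n) (rankGapSeries q) := by
  have hq1 : q < 1 := by linarith
  have hG (a : ℕ) := (hasSum_halfGaussTerm_mul_inv hq hq1 a).mul_left (2 * pbarSeries q)
  have hU (a : ℕ) (ha : a ≠ 0) := hasSum_sum_tailSum_mul_pow hq hq4 ha
  have hpairs := (hasSum_nat_succ_add_neg_succ (hasSum_rankGapTerm_eq_mul hq hq1)).mul_left
    (pbarSeries q)
  have hval := hpairs.unique ((((hG 1).sub ((hG 2).mul_left 3)).add ((hG 3).mul_left 3)).sub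
    (hG 4) |>.congr_fun fun k => by rw [rankGapTerm_add_rankGapTerm_neg hq hq1]; ring)
  have hzero : rankGapTerm q 0 = 0 := by simp [rankGapTerm]
  rw [hzero, sub_zero, mul_left_comm, pbarSeries_mul_tsum_gaussTerm hq hq4, mul_one] at hval
  rw [hval]
  refine ((((hU 1 (by norm_num)).sub ((hU 2 (by norm_num)).mul_left 3)).add
    ((hU 3 (by norm_num)).mul_left 3)).sub (hU 4 (by norm_num))).congr_fun fun n => ?_
  have hgap := congrArg (Int.cast : ℤ → ℝ) (nbar_one_sub_nbar_two n)
  simp only [Finset.sum_sub_distrib, Finset.sum_add_distrib, ← Finset.mul_sum] at hgap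
  push_cast at hgap ⊢
  rw [hgap]
  ring

end GeneratingFunction

section Coefficients

open Filter Topology

/-- The function `f` is given on the unit interval `(0, 1)` by the power series with
coefficients `a`. -/
def HasCoeffs (f : ℝ → ℝ) (a : ℕ → ℝ) : Prop :=
  ∀ q, 0 < q → q < 1 → HasSum (fun n => a n * q ^ n) (f q)

/-- The function `f` is given on the unit interval by a power series with nonnegative
coefficients. -/
def HasNonnegCoeffs (f : ℝ → ℝ) : Prop := ∃ a, (∀ n, 0 ≤ a n) ∧ HasCoeffs f a

/-- The coefficientwise order on power series, expressed through their sums on the unit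
interval. -/
def CoeffLE (F f : ℝ → ℝ) : Prop := HasNonnegCoeffs fun q => f q - F q

infix:50 " ≼ " => CoeffLE

lemma one_sub_pow_pos {q : ℝ} (hq : 0 < q) (hq1 : q < 1) {a : ℕ} (ha : a ≠ 0) : 0 < 1 - q ^ a :=
  sub_pos.2 (pow_lt_one₀ hq.le hq1 ha)

variable {f g F G H : ℝ → ℝ} {a b : ℕ → ℝ}

namespace HasCoeffs

lemma congr (h : HasCoeffs f a) (e : ∀ q, 0 < q → q < 1 → g q = f q) : HasCoeffs g a :=
  fun q hq hq1 => e q hq hq1 ▸ h q hq hq1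

lemma add (hf : HasCoeffs f a) (hg : HasCoeffs g b) :
    HasCoeffs (fun q => f q + g q) fun n => a n + b n := fun q hq hq1 =>
  ((hf q hq hq1).add (hg q hq hq1)).congr_fun fun _ => add_mul _ _ _

lemma const_mul (c : ℝ) (hf : HasCoeffs f a) : HasCoeffs (fun q => c * f q) fun n => c * a n :=
  fun q hq hq1 => ((hf q hq hq1).mul_left c).congr_fun fun _ => mul_assoc _ _ _

lemma mul (hf : HasCoeffs f a) (hg : HasCoeffs g b) :
    HasCoeffs (fun q => f q * g q)
      fun n => ∑ x ∈ Finset.HasAntidiagonal.antidiagonal n, a x.1 * b x.2 := by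
  intro q hq hq1
  have hsf := (hf q hq hq1).summable.norm
  have hsg := (hg q hq hq1).summable.norm
  have e := tsum_mul_tsum_eq_tsum_sum_antidiagonal_of_summable_norm hsf hsg
  rw [(hf q hq hq1).tsum_eq, (hg q hq hq1).tsum_eq] at e
  have hs := (summable_norm_sum_mul_antidiagonal_of_summable_norm hsf hsg).of_norm.hasSum
  rw [← e] at hs
  refine hs.congr_fun fun n => ?_
  rw [Finset.sum_mul]
  refine Finset.sum_congr rfl fun x hx => ?_
  rw [← Finset.HasAntidiagonal.mem_antidiagonal.1 hx]
  ring

lemma pow (k : ℕ) : HasCoeffs (fun q => q ^ k) (Pi.single k 1) := fun q _ _ => by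
  refine (hasSum_ite_eq k (q ^ k)).congr_fun fun n => ?_
  rw [Pi.single_apply, ite_mul, one_mul, zero_mul]
  split_ifs with h
  · rw [h]
  · rfl

lemma tsum {f g : ℕ → ℝ → ℝ} {a b : ℕ → ℕ → ℝ} (hf : ∀ i, HasCoeffs (f i) (a i))
    (hg : ∀ i, HasCoeffs (g i) (b i)) (hab : ∀ i n, |a i n| ≤ b i n)
    (hs : ∀ q, 0 < q → q < 1 → Summable fun i => g i q) :
    HasCoeffs (fun q => ∑' i, f i q) fun n => ∑' i, a i n := by
  intro q hq hq1
  have hb : ∀ i n, 0 ≤ b i n := fun i n => (abs_nonneg _).trans (hab i n)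
  have hsb : Summable fun x : ℕ × ℕ => b x.1 x.2 * q ^ x.2 :=
    (summable_prod_of_nonneg fun x => mul_nonneg (hb _ _) (by positivity)).2
      ⟨fun i => (hg i q hq hq1).summable,
        (hs q hq hq1).congr fun i => (hg i q hq hq1).tsum_eq.symm⟩
  have hsa : Summable fun x : ℕ × ℕ => a x.1 x.2 * q ^ x.2 := by
    refine hsb.of_norm_bounded fun x => ?_
    rw [norm_mul, Real.norm_eq_abs, Real.norm_of_nonneg (by positivity : 0 ≤ q ^ x.2)]
    exact mul_le_mul_of_nonneg_right (hab _ _) (by positivity)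
  have hcol : ∀ n, HasSum (fun i => a i n * q ^ n) ((∑' i, a i n) * q ^ n) := fun n => by
    rw [← tsum_mul_right]
    exact (hsa.comp_injective fun i j h => (Prod.mk.inj h).1 : Summable fun i => _).hasSum
  exact hasSum_column_tsum_row (f := fun i n => a i n * q ^ n) hsa (fun i => hf i q hq hq1) hcol

end HasCoeffs

namespace HasNonnegCoeffs

lemma congr (h : HasNonnegCoeffs f) (e : ∀ q, 0 < q → q < 1 → g q = f q) : HasNonnegCoeffs g := by
  obtain ⟨a, ha, hf⟩ := h
  exact ⟨a, ha, hf.congr e⟩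

lemma nonneg (h : HasNonnegCoeffs f) {q : ℝ} (hq : 0 < q) (hq1 : q < 1) : 0 ≤ f q := by
  obtain ⟨a, ha, hf⟩ := h
  exact (hf q hq hq1).nonneg fun n => mul_nonneg (ha n) (pow_nonneg hq.le n)

lemma add (hf : HasNonnegCoeffs f) (hg : HasNonnegCoeffs g) :
    HasNonnegCoeffs fun q => f q + g q := by
  obtain ⟨a, ha, hf⟩ := hf
  obtain ⟨b, hb, hg⟩ := hg
  exact ⟨_, fun n => add_nonneg (ha n) (hb n), hf.add hg⟩

lemma mul (hf : HasNonnegCoeffs f) (hg : HasNonnegCoeffs g) :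
    HasNonnegCoeffs fun q => f q * g q := by
  obtain ⟨a, ha, hf⟩ := hf
  obtain ⟨b, hb, hg⟩ := hg
  exact ⟨_, fun n => Finset.sum_nonneg fun x _ => mul_nonneg (ha _) (hb _), hf.mul hg⟩

lemma const_mul {c : ℝ} (hc : 0 ≤ c) (hf : HasNonnegCoeffs f) :
    HasNonnegCoeffs fun q => c * f q := by
  obtain ⟨a, ha, hf⟩ := hf
  exact ⟨_, fun n => mul_nonneg hc (ha n), hf.const_mul c⟩

lemma pow (k : ℕ) : HasNonnegCoeffs fun q => q ^ k :=
  ⟨_, fun n => by rw [Pi.single_apply]; positivity, .pow k⟩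

lemma one : HasNonnegCoeffs fun _ => 1 := (pow 0).congr fun q _ _ => (pow_zero q).symm

lemma zero : HasNonnegCoeffs fun _ => 0 :=
  (one.const_mul le_rfl).congr fun _ _ _ => (zero_mul _).symm

lemma hasSum {f : ℕ → ℝ → ℝ} (hf : ∀ i, HasNonnegCoeffs (f i))
    (hs : ∀ q, 0 < q → q < 1 → HasSum (fun i => f i q) (F q)) : HasNonnegCoeffs F := by
  choose a ha hf using hf
  have h := HasCoeffs.tsum hf hf (fun i n => (abs_of_nonneg (ha i n)).le)
    fun q hq hq1 => (hs q hq hq1).summable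
  exact ⟨_, fun n => tsum_nonneg fun i => ha i n,
    h.congr fun q hq hq1 => (hs q hq hq1).tsum_eq.symm⟩

lemma inv_one_sub_pow {a : ℕ} (ha : a ≠ 0) : HasNonnegCoeffs fun q => (1 - q ^ a)⁻¹ :=
  hasSum (fun i => pow (a * i)) fun q hq hq1 =>
    (hasSum_geometric_of_lt_one (pow_nonneg hq.le a) (pow_lt_one₀ hq.le hq1 ha)).congr_fun
      fun i => pow_mul q a i

lemma inv_one_sub_pow_mul {a : ℕ} (ha : a ≠ 0) (m : ℕ) :
    HasNonnegCoeffs fun q => (1 - q ^ a)⁻¹ * (1 - q ^ (a * m)) := by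
  induction m with
  | zero => exact zero.congr fun q _ _ => by simp
  | succ m ih =>
    refine (ih.add (pow (a * m))).congr fun q hq hq1 => ?_
    have := one_sub_pow_pos hq hq1 ha
    field_simp
    ring

end HasNonnegCoeffs

lemma exists_hasCoeffs_tsum_neg_one_pow {f : ℕ → ℝ → ℝ} (hf : ∀ i, HasNonnegCoeffs (f i))
    (hs : ∀ q, 0 < q → q < 1 → Summable fun i => f i q) :
    ∃ a, HasCoeffs (fun q => ∑' i : ℕ, (-1) ^ i * f i q) a := by
  choose a ha hf using hf
  refine ⟨_, .tsum (fun i => (hf i).const_mul ((-1) ^ i)) hf (fun i n => ?_) hs⟩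
  rw [abs_mul, abs_neg_one_pow, one_mul, abs_of_nonneg (ha i n)]

namespace CoeffLE

lemma congr (h : F ≼ f) (hF : ∀ q, 0 < q → q < 1 → G q = F q)
    (hf : ∀ q, 0 < q → q < 1 → g q = f q) : G ≼ g :=
  HasNonnegCoeffs.congr h fun q hq hq1 => by rw [hF q hq hq1, hf q hq hq1]

lemma trans (h₁ : F ≼ G) (h₂ : G ≼ H) : F ≼ H :=
  (HasNonnegCoeffs.add h₂ h₁).congr fun _ _ _ => (sub_add_sub_cancel _ _ _).symm

lemma hasNonnegCoeffs (h : F ≼ f) (hF : HasNonnegCoeffs F) : HasNonnegCoeffs f :=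
  (HasNonnegCoeffs.add h hF).congr fun _ _ _ => (sub_add_cancel _ _).symm

lemma const_mul {c : ℝ} (hc : 0 ≤ c) (h : F ≼ f) : (fun q => c * F q) ≼ fun q => c * f q :=
  (HasNonnegCoeffs.const_mul hc h).congr fun _ _ _ => (mul_sub _ _ _).symm

lemma add_right (h : F ≼ f) (hg : HasNonnegCoeffs g) : F ≼ fun q => f q + g q :=
  (HasNonnegCoeffs.add h hg).congr fun _ _ _ => add_sub_right_comm _ _ _

lemma mul (h₁ : F ≼ f) (h₂ : G ≼ g) (hF : HasNonnegCoeffs F) (hG : HasNonnegCoeffs G) :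
    (fun q => F q * G q) ≼ fun q => f q * g q :=
  ((HasNonnegCoeffs.mul h₁ (h₂.hasNonnegCoeffs hG)).add (hF.mul h₂)).congr fun q _ _ => by ring

lemma mul_right (h : F ≼ f) (hG : HasNonnegCoeffs G) :
    (fun q => F q * G q) ≼ fun q => f q * G q :=
  (HasNonnegCoeffs.mul h hG).congr fun _ _ _ => (sub_mul _ _ _).symm

lemma one_mul (h₁ : (fun _ => 1) ≼ f) (h₂ : (fun _ => 1) ≼ g) : (fun _ => 1) ≼ fun q => f q * g q :=
  (h₁.mul h₂ .one .one).congr (fun _ _ _ => (mul_one 1).symm) fun _ _ _ => rfl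

lemma pow_inv_one_sub_pow {a : ℕ} (ha : a ≠ 0) (i : ℕ) :
    (fun q => q ^ (a * i)) ≼ fun q => (1 - q ^ a)⁻¹ := by
  refine ((HasNonnegCoeffs.inv_one_sub_pow_mul ha i).add
    ((HasNonnegCoeffs.pow (a * (i + 1))).mul (.inv_one_sub_pow ha))).congr fun q hq hq1 => ?_
  have := one_sub_pow_pos hq hq1 ha
  field_simp
  ring

lemma one_inv_one_sub_pow {a : ℕ} (ha : a ≠ 0) : (fun _ => 1) ≼ fun q => (1 - q ^ a)⁻¹ :=
  (pow_inv_one_sub_pow ha 0).congr (fun q _ _ => by simp) fun _ _ _ => rfl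

lemma inv_one_sub_pow_mul {u v : ℕ} (hu : u ≠ 0) (hv : v ≠ 0) : (fun q => (1 - q ^ u)⁻¹) ≼
    fun q => (1 - q ^ (u + v)) * (1 - q ^ u)⁻¹ * (1 - q ^ v)⁻¹ := by
  refine ((HasNonnegCoeffs.inv_one_sub_pow hv).mul (.pow v)).congr fun q hq hq1 => ?_
  have := one_sub_pow_pos hq hq1 hu
  have := one_sub_pow_pos hq hq1 hv
  field_simp
  ring

lemma of_tendsto_prod {g : ℕ → ℝ → ℝ} (hg : ∀ i, (fun _ => 1) ≼ g i)
    (hF : ∀ q, 0 < q → q < 1 → Tendsto (fun N => ∏ i ∈ Finset.range N, g i q) atTop (𝓝 (F q))) :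
    g 0 ≼ F := by
  have hprod (N : ℕ) : HasNonnegCoeffs fun q => ∏ i ∈ Finset.range N, g i q := by
    induction N with
    | zero => exact HasNonnegCoeffs.one.congr fun q _ _ => Finset.prod_range_zero _
    | succ N ih =>
      exact (ih.mul ((hg N).hasNonnegCoeffs .one)).congr fun q _ _ => Finset.prod_range_succ _ _
  have hdiff (N : ℕ) : HasNonnegCoeffs fun q =>
      ∏ i ∈ Finset.range (N + 2), g i q - ∏ i ∈ Finset.range (N + 1), g i q := by
    refine ((hprod (N + 1)).mul (hg (N + 1))).congr fun q _ _ => ?_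
    rw [Finset.prod_range_succ _ (N + 1)]
    ring
  refine HasNonnegCoeffs.hasSum hdiff fun q hq hq1 => ?_
  rw [hasSum_iff_tendsto_nat_of_nonneg fun N => (hdiff N).nonneg hq hq1]
  refine (((hF q hq hq1).comp (tendsto_add_atTop_nat 1)).sub_const (g 0 q)).congr fun N => ?_
  simp [Finset.sum_range_sub fun N => ∏ i ∈ Finset.range (N + 1), g i q]

end CoeffLE

end Coefficients

section ThetaQuotients

open Filter Topology

/-- The infinite product `(qᵃ; q¹⁰)_∞ = ∏ᵢ (1 - q¹⁰ⁱ⁺ᵃ)`. -/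
noncomputable def qPochTen (q : ℝ) (a : ℕ) : ℝ := qPoch (q ^ 10) (q ^ a)

section

variable {q : ℝ} (hq : 0 < q) (hq1 : q < 1)
include hq hq1

lemma tendsto_qPochTen (a : ℕ) :
    Tendsto (fun N => ∏ i ∈ Finset.range N, (1 - q ^ (10 * i + a))) atTop (𝓝 (qPochTen q a)) := by
  refine (tendsto_qPochFin (pow_pos hq 10) (pow_ten_lt_one hq hq1) (q ^ a)).congr fun N => ?_
  refine Finset.prod_congr rfl fun i _ => ?_
  rw [← pow_mul, ← pow_add, add_comm]

lemma qPochTen_pos {a : ℕ} (ha : a ≠ 0) : 0 < qPochTen q a :=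
  qPoch_pos (pow_pos hq 10) (pow_ten_lt_one hq hq1) (pow_lt_one₀ hq.le hq1 ha)

lemma qPochTen_eq_one_sub_pow_mul (a : ℕ) :
    qPochTen q a = (1 - q ^ a) * qPochTen q (a + 10) := by
  rw [qPochTen, qPoch_eq_one_sub_mul (pow_pos hq 10) (pow_ten_lt_one hq hq1), ← pow_add,
    add_comm 10, ← qPochTen]

lemma thetaTen_eq_qPochTen_mul {a b : ℕ} (hab : a + b = 10) :
    thetaTen q a = qPochTen q 10 * qPochTen q a * qPochTen q b := by
  have hb : q ^ 10 * (q ^ a)⁻¹ = q ^ b := by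
    rw [← hab, pow_add, mul_right_comm, mul_inv_cancel₀ (pow_pos hq a).ne', one_mul]
  rw [thetaTen, zpow_natCast, theta_eq_qPoch_mul (pow_pos hq 10) (pow_ten_lt_one hq hq1)
    (pow_pos hq a), hb]
  rfl

lemma eulerTenCube_div_thetaTen_mul {a a' b b' : ℕ} (ha : a ≠ 0) (ha' : a' ≠ 0)
    (haa' : a + a' = 10) (hb : b ≠ 0) (hb' : b' ≠ 0) (hbb' : b + b' = 10) :
    eulerTenCube q / (thetaTen q a * thetaTen q b) = qPochTen q 10 * (qPochTen q a)⁻¹ *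
      (qPochTen q a')⁻¹ * (qPochTen q b)⁻¹ * (qPochTen q (b' + 10))⁻¹ * (1 - q ^ b')⁻¹ := by
  have := qPochTen_pos hq hq1 ha
  have := qPochTen_pos hq hq1 ha'
  have := qPochTen_pos hq hq1 hb
  have := qPochTen_pos hq hq1 (show b' + 10 ≠ 0 by omega)
  have := qPochTen_pos hq hq1 (show 10 ≠ 0 by norm_num)
  have := one_sub_pow_pos hq hq1 hb'
  rw [thetaTen_eq_qPochTen_mul hq hq1 haa', thetaTen_eq_qPochTen_mul hq hq1 hbb',
    qPochTen_eq_one_sub_pow_mul hq hq1 b', show eulerTenCube q = qPochTen q 10 ^ 3 from rfl]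
  field_simp

lemma inv_thetaTen_five : (thetaTen q 5)⁻¹ =
    (1 - q ^ 5)⁻¹ * (qPochTen q 10 * qPochTen q 5 * qPochTen q 15)⁻¹ := by
  have h := thetaTen_eq_qPochTen_mul hq hq1 (show 5 + 5 = 10 by norm_num)
  rw [Nat.cast_ofNat] at h
  rw [h, ← mul_inv]
  nth_rw 2 [qPochTen_eq_one_sub_pow_mul hq hq1 5]
  ring

lemma inv_thetaTen_three : (thetaTen q 3)⁻¹ = (1 - q ^ 10)⁻¹ * (1 - q ^ 3)⁻¹ * (1 - q ^ 7)⁻¹ *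
    (qPochTen q 20 * qPochTen q 13 * qPochTen q 17)⁻¹ := by
  have h := thetaTen_eq_qPochTen_mul hq hq1 (show 3 + 7 = 10 by norm_num)
  rw [Nat.cast_ofNat] at h
  rw [h, qPochTen_eq_one_sub_pow_mul hq hq1 10, qPochTen_eq_one_sub_pow_mul hq hq1 3,
    qPochTen_eq_one_sub_pow_mul hq hq1 7]
  simp only [← mul_inv]
  ring

end

lemma prod_range_two_mul {M : Type*} [CommMonoid M] (f : ℕ → M) (N : ℕ) :
    ∏ i ∈ Finset.range (2 * N), f i = ∏ i ∈ Finset.range N, (f (2 * i) * f (2 * i + 1)) := by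
  induction N with
  | zero => rfl
  | succ N ih =>
    rw [Nat.mul_succ, Finset.prod_range_succ, Finset.prod_range_succ, Finset.prod_range_succ, ih,
      mul_assoc]

lemma one_coeffLE_mul_inv_mul_inv {u v w : ℕ} (hu : u ≠ 0) (hv : v ≠ 0) (h : u + v = w) :
    (fun _ => 1) ≼ fun q => (1 - q ^ w) * (1 - q ^ u)⁻¹ * (1 - q ^ v)⁻¹ :=
  h ▸ (CoeffLE.one_inv_one_sub_pow hu).trans (.inv_one_sub_pow_mul hu hv)

section

variable {a a' b b' : ℕ} (ha : a ≠ 0) (ha' : a' ≠ 0) (haa' : a + a' = 10) (hb : b ≠ 0)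
include ha ha' haa' hb

/-- The factors of `(q¹⁰; q¹⁰)_∞` with odd index are spent on `a + a' = 10` and those with even
index on `b + b' = 20`, so that each factor dominates `1`. -/
lemma inv_mul_inv_coeffLE_qPochTen_quotient (hb' : b' ≠ 0) (hbb' : b + b' = 20) :
    (fun q => (1 - q ^ a)⁻¹ * (1 - q ^ b)⁻¹) ≼ fun q => qPochTen q 10 * (qPochTen q a)⁻¹ *
      (qPochTen q a')⁻¹ * (qPochTen q b)⁻¹ * (qPochTen q b')⁻¹ := by
  set g : ℕ → ℝ → ℝ := fun i q =>
    ((1 - q ^ (10 * (2 * i) + 10)) * (1 - q ^ (10 * i + a))⁻¹ * (1 - q ^ (10 * i + a'))⁻¹) *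
    ((1 - q ^ (10 * (2 * i + 1) + 10)) * (1 - q ^ (10 * i + b))⁻¹ * (1 - q ^ (10 * i + b'))⁻¹)
    with hg
  have hg_one (i : ℕ) : (fun _ => 1) ≼ g i :=
    (one_coeffLE_mul_inv_mul_inv (by omega) (by omega) (by omega)).one_mul
      (one_coeffLE_mul_inv_mul_inv (by omega) (by omega) (by omega))
  have hg_zero : (fun q => (1 - q ^ a)⁻¹ * (1 - q ^ b)⁻¹) ≼ g 0 := by
    refine ((CoeffLE.inv_one_sub_pow_mul ha ha').mul (.inv_one_sub_pow_mul hb hb')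
      (.inv_one_sub_pow ha) (.inv_one_sub_pow hb)).congr (fun _ _ _ => rfl) fun q _ _ => ?_
    simp [hg, haa', hbb']
  refine hg_zero.trans (CoeffLE.of_tendsto_prod hg_one fun q hq hq1 => ?_)
  have hinv {c : ℕ} (hc : c ≠ 0) := (tendsto_qPochTen hq hq1 c).inv₀ (qPochTen_pos hq hq1 hc).ne'
  have hten := (tendsto_qPochTen hq hq1 10).comp (tendsto_id.const_mul_atTop' two_pos)
  refine ((((hten.mul (hinv ha)).mul (hinv ha')).mul (hinv hb)).mul (hinv hb')).congr fun N => ?_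
  simp only [Function.comp, id, prod_range_two_mul, ← Finset.prod_inv_distrib,
    ← Finset.prod_mul_distrib]
  refine Finset.prod_congr rfl fun i _ => ?_
  simp only [hg]
  ring

theorem inv_mul_inv_coeffLE_eulerTenCube_div (hb' : b' ≠ 0) (hbb' : b + b' = 10) :
    (fun q => (1 - q ^ a)⁻¹ * (1 - q ^ b)⁻¹) ≼
      fun q => eulerTenCube q / (thetaTen q a * thetaTen q b) := by
  refine ((inv_mul_inv_coeffLE_qPochTen_quotient ha ha' haa' hb (b' := b' + 10) (by omega)
    (by omega)).mul (.one_inv_one_sub_pow hb')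
    ((HasNonnegCoeffs.inv_one_sub_pow ha).mul (.inv_one_sub_pow hb)) .one).congr
    (fun _ _ _ => (mul_one _).symm) fun q hq hq1 => ?_
  exact eulerTenCube_div_thetaTen_mul hq hq1 ha ha' haa' hb hb' hbb'

end

lemma one_coeffLE_inv_qPochTen_mul {a b c : ℕ} (ha : a ≠ 0) (hb : b ≠ 0) (hc : c ≠ 0) :
    (fun _ => 1) ≼ fun q => (qPochTen q a * qPochTen q b * qPochTen q c)⁻¹ := by
  have hg (i : ℕ) : (fun _ => 1) ≼ fun q =>
      (1 - q ^ (10 * i + a))⁻¹ * (1 - q ^ (10 * i + b))⁻¹ * (1 - q ^ (10 * i + c))⁻¹ :=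
    ((CoeffLE.one_inv_one_sub_pow (by omega)).one_mul (.one_inv_one_sub_pow (by omega))).one_mul
      (.one_inv_one_sub_pow (by omega))
  refine (hg 0).trans (CoeffLE.of_tendsto_prod hg fun q hq hq1 => ?_)
  have h := (((tendsto_qPochTen hq hq1 a).mul (tendsto_qPochTen hq hq1 b)).mul
    (tendsto_qPochTen hq hq1 c)).inv₀ (mul_pos (mul_pos (qPochTen_pos hq hq1 ha)
      (qPochTen_pos hq hq1 hb)) (qPochTen_pos hq hq1 hc)).ne'
  refine h.congr fun N => ?_
  simp only [← Finset.prod_mul_distrib, ← Finset.prod_inv_distrib, mul_inv]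

theorem coeffLE_rankGap₀ (i j : ℕ) : (fun q => 2 * q ^ (1 + 3 * i + 4 * j)) ≼ rankGap₀ := by
  have h := (CoeffLE.pow_inv_one_sub_pow three_ne_zero i).mul
    (.pow_inv_one_sub_pow four_ne_zero j) (.pow _) (.pow _)
  refine ((h.trans (inv_mul_inv_coeffLE_eulerTenCube_div (a' := 7) (b' := 6) (by norm_num)
    (by norm_num) (by norm_num) (by norm_num) (by norm_num) (by norm_num))).mul_right
    (HasNonnegCoeffs.const_mul zero_le_two (.pow 1))).congr (fun q _ _ => by ring) fun q _ _ => ?_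
  rw [rankGap₀, Nat.cast_ofNat, Nat.cast_ofNat]
  ring

theorem coeffLE_rankGap₂ (i : ℕ) : (fun q => 2 * q ^ i) ≼ rankGap₂ := by
  have h := (CoeffLE.pow_inv_one_sub_pow one_ne_zero i).mul
    (.one_inv_one_sub_pow four_ne_zero) (.pow _) .one
  refine ((h.trans (inv_mul_inv_coeffLE_eulerTenCube_div (a' := 9) (b' := 6) (by norm_num)
    (by norm_num) (by norm_num) (by norm_num) (by norm_num) (by norm_num))).const_mul
    zero_le_two).congr (fun q _ _ => by ring) fun q _ _ => ?_
  rw [rankGap₂, Nat.cast_one, Nat.cast_ofNat]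
  ring

lemma exists_hasCoeffs_rankGap₃ : ∃ a, HasCoeffs rankGap₃ a := by
  have h := inv_mul_inv_coeffLE_eulerTenCube_div (a := 2) (a' := 8) (b := 3) (b' := 7)
    (by norm_num) (by norm_num) (by norm_num) (by norm_num) (by norm_num) (by norm_num)
  obtain ⟨a, -, ha⟩ := h.hasNonnegCoeffs
    ((HasNonnegCoeffs.inv_one_sub_pow two_ne_zero).mul (.inv_one_sub_pow three_ne_zero))
  refine ⟨_, (ha.const_mul (-2)).congr fun q _ _ => ?_⟩
  rw [rankGap₃, Nat.cast_ofNat, Nat.cast_ofNat, mul_div_assoc]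

end ThetaQuotients

section LambertSeries

/-- The summand `q ^ e k / (1 - q ^ d k)` of a Lambert series. -/
noncomputable def lambertTerm (e d : ℕ → ℕ) (k : ℕ) (q : ℝ) : ℝ := q ^ e k * (1 - q ^ d k)⁻¹

/-- The alternating Lambert series `∑ₖ (-1)ᵏ q ^ e k / (1 - q ^ d k)`. -/
noncomputable def lambertSeries (e d : ℕ → ℕ) (q : ℝ) : ℝ := ∑' k, (-1) ^ k * lambertTerm e d k q

lemma hasSum_add_two_mul_add_one {f : ℕ → ℝ} {s : ℝ} (hf : HasSum f s) :
    HasSum (fun i => f (2 * i) + f (2 * i + 1)) s := by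
  have heven : Summable fun i => f (2 * i) :=
    hf.summable.comp_injective (mul_right_injective₀ two_ne_zero)
  have hodd : Summable fun i => f (2 * i + 1) :=
    hf.summable.comp_injective ((add_left_injective 1).comp (mul_right_injective₀ two_ne_zero))
  rw [← hf.tsum_eq, ← tsum_even_add_odd heven hodd]
  exact heven.hasSum.add hodd.hasSum

section

variable {e d e' d' : ℕ → ℕ} {q : ℝ} (hq : 0 < q) (hq1 : q < 1)
include hq hq1

lemma summable_lambertTerm (he : ∀ k, k ≤ e k) (hd : ∀ k, d k ≠ 0) :
    Summable fun k => lambertTerm e d k q := by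
  have hpos (k : ℕ) := one_sub_pow_pos hq hq1 (hd k)
  refine Summable.of_nonneg_of_le (fun k => ?_) (fun k => ?_)
    ((summable_geometric_of_lt_one hq.le hq1).mul_right (1 - q)⁻¹)
  · exact mul_nonneg (by positivity) (inv_nonneg.2 (hpos k).le)
  · exact mul_le_mul (pow_le_pow_of_le_one hq.le hq1.le (he k))
      (inv_anti₀ (sub_pos.2 hq1) (sub_le_sub_left (pow_le_of_le_one hq.le hq1.le (hd k)) 1))
      (inv_nonneg.2 (hpos k).le) (by positivity)

lemma hasSum_lambertSeries (he : ∀ k, k ≤ e k) (hd : ∀ k, d k ≠ 0) :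
    HasSum (fun k => (-1) ^ k * lambertTerm e d k q) (lambertSeries e d q) :=
  (summable_lambertTerm hq hq1 he hd).alternating.hasSum

lemma hasSum_lambertTerm_sub (he : ∀ k, k ≤ e k) (hd : ∀ k, d k ≠ 0) :
    HasSum (fun i => lambertTerm e d (2 * i) q - lambertTerm e d (2 * i + 1) q)
      (lambertSeries e d q) := by
  refine (hasSum_add_two_mul_add_one (hasSum_lambertSeries hq hq1 he hd)).congr_fun fun i => ?_
  rw [pow_succ, pow_mul, neg_one_sq, one_pow]
  ring

lemma hasSum_zpow_mul_inv_one_sub_zpow (he : ∀ k, k ≤ e k) (hd : ∀ k, d k ≠ 0)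
    (he' : ∀ k, k ≤ e' k) (hd' : ∀ k, d' k ≠ 0) {E D : ℤ → ℤ} (hE : ∀ n : ℕ, E n = e n)
    (hD : ∀ n : ℕ, D n = d n) (hE' : ∀ n : ℕ, E (-(n + 1)) + d' n = e' n)
    (hD' : ∀ n : ℕ, D (-(n + 1)) = -d' n) :
    HasSum (fun k : ℤ => (-1 : ℝ) ^ k * (q ^ E k * (1 - q ^ D k)⁻¹))
      (lambertSeries e d q + lambertSeries e' d' q) := by
  refine .of_nat_of_neg_add_one ((hasSum_lambertSeries hq hq1 he hd).congr_fun fun n => ?_)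
    ((hasSum_lambertSeries hq hq1 he' hd').congr_fun fun n => ?_)
  · rw [hE, hD, lambertTerm]
    norm_cast
  · have hinv : (1 - (q ^ d' n)⁻¹)⁻¹ = -(q ^ d' n * (1 - q ^ d' n)⁻¹) := by
      rw [show 1 - (q ^ d' n)⁻¹ = -((1 - q ^ d' n) * (q ^ d' n)⁻¹) by field_simp; ring, inv_neg,
        mul_inv, inv_inv, mul_comm]
    have hexp : q ^ E (-(n + 1)) * q ^ d' n = q ^ e' n := by
      rw [← zpow_natCast, ← zpow_natCast, ← hE', zpow_add₀ hq.ne']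
    have hsign : (-1 : ℝ) ^ (-((n : ℤ) + 1)) = -(-1) ^ n := by
      rw [zpow_neg, ← inv_zpow, inv_neg_one, zpow_add₀ (by norm_num), zpow_natCast, zpow_one,
        mul_neg_one]
    rw [hD', hsign, zpow_neg q, zpow_natCast, hinv, lambertTerm, ← hexp]
    ring

lemma lambertSum_ten {b c : ℕ} (hb : b ≠ 0) (hc : c ≠ 0) (hbc : b + c = 5) :
    lambertSum q 10 b = lambertSeries (fun k => 5 * k ^ 2 + 5 * k) (fun k => 5 * k + b) q +
      lambertSeries (fun k => 5 * k ^ 2 + 10 * k + c) (fun k => 5 * k + c) q := by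
  refine (hasSum_lambertSum hq hq1 10 b).unique ((hasSum_zpow_mul_inv_one_sub_zpow hq hq1
    (E := fun k => 5 * k * k + 5 * k) (D := fun k => 5 * k + b) (fun k => by grind)
    (fun k => by grind) (fun k => by grind) (fun k => by grind) (fun n => by grind)
    (fun n => by grind) (fun n => by grind) (fun n => by grind)).congr_fun fun k => ?_)
  rw [thetaTerm_pow_ten hq, mul_assoc]
  rw [show 5 * k * k - 5 * k + 10 * k = 5 * k * k + 5 * k by ring]

lemma pow_mul_appellTen_seventeen : q ^ 3 * appellTen q 17 4 =
    lambertSeries (fun k => 5 * k ^ 2 + 12 * k + 3) (fun k => 10 * k + 4) q +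
      lambertSeries (fun k => 5 * k ^ 2 + 8 * k + 2) (fun k => 10 * k + 6) q := by
  refine ((summable_appell (pow_pos hq 10) (pow_ten_lt_one hq hq1) (zpow_pos hq 17)
    (zpow_pos hq 4).ne').hasSum.mul_left (q ^ 3)).unique ((hasSum_zpow_mul_inv_one_sub_zpow hq hq1
    (E := fun k => 5 * k * k + 12 * k + 3) (D := fun k => 10 * k + 4) (fun k => by grind)
    (fun k => by grind) (fun k => by grind) (fun k => by grind) (fun n => by grind)
    (fun n => by grind) (fun n => by grind) (fun n => by grind)).congr_fun fun k => ?_)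
  rw [thetaTerm_pow_ten hq, pow_ten_zpow, ← zpow_add₀ hq.ne', add_comm 4 (10 * k),
    show 5 * k * k + 12 * k + 3 = 5 * k * k - 5 * k + 17 * k + 3 by ring, zpow_add₀ hq.ne' _ 3]
  norm_cast
  ring

lemma hasSum_lambertTerm_sub_lambertTerm {δ : ℕ → ℕ} {k l : ℕ} (hk : d k ≠ 0) (hl : d l ≠ 0)
    (hδ : ∀ j, e l + d l * j = e k + d k * j + δ j) :
    HasSum (fun j => q ^ (e k + d k * j) * (1 - q ^ δ j))
      (lambertTerm e d k q - lambertTerm e d l q) := by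
  have hgeom {k : ℕ} (hk : d k ≠ 0) :
      HasSum (fun j => q ^ (e k + d k * j)) (lambertTerm e d k q) :=
    ((hasSum_geometric_of_lt_one (pow_nonneg hq.le _) (pow_lt_one₀ hq.le hq1 hk)).mul_left
      (q ^ e k)).congr_fun fun j => by rw [pow_add, pow_mul]
  refine ((hgeom hk).sub (hgeom hl)).congr_fun fun j => ?_
  rw [hδ, pow_add q _ (δ j), mul_one_sub]

end

section

variable {e d : ℕ → ℕ} {M : ℝ → ℝ}

lemma hasNonnegCoeffs_mul_lambertTerm_sub {δ : ℕ → ℕ} {k l : ℕ} (hk : d k ≠ 0) (hl : d l ≠ 0)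
    (hδ : ∀ j, e l + d l * j = e k + d k * j + δ j)
    (hM : ∀ j, HasNonnegCoeffs fun q => M q * (1 - q ^ δ j)) :
    HasNonnegCoeffs fun q => M q * (lambertTerm e d k q - lambertTerm e d l q) :=
  .hasSum (fun j => (HasNonnegCoeffs.pow (e k + d k * j)).mul (hM j)) fun _ hq hq1 =>
    ((hasSum_lambertTerm_sub_lambertTerm hq hq1 hk hl hδ).mul_left _).congr_fun
      fun _ => mul_left_comm _ _ _

variable (he : ∀ k, k ≤ e k) (hd : ∀ k, d k ≠ 0) {δ : ℕ → ℕ → ℕ}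
  (hδ : ∀ i j, e (2 * i + 1) + d (2 * i + 1) * j = e (2 * i) + d (2 * i) * j + δ i j)
  (hM : ∀ i j, HasNonnegCoeffs fun q => M q * (1 - q ^ δ i j))
include he hd hδ hM

lemma mul_lambertTerm_sub_coeffLE :
    (fun q => M q * (lambertTerm e d 0 q - lambertTerm e d 1 q)) ≼
      fun q => M q * lambertSeries e d q := by
  refine .hasSum (fun i => hasNonnegCoeffs_mul_lambertTerm_sub (hd _) (hd _) (hδ (i + 1))
    (hM (i + 1))) fun q hq hq1 => ?_
  have h := (hasSum_nat_add_iff' 1).2 ((hasSum_lambertTerm_sub hq hq1 he hd).mul_left (M q))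
  rwa [Finset.sum_range_one] at h

lemma hasNonnegCoeffs_mul_lambertSeries :
    HasNonnegCoeffs fun q => M q * lambertSeries e d q :=
  (mul_lambertTerm_sub_coeffLE he hd hδ hM).hasNonnegCoeffs
    (hasNonnegCoeffs_mul_lambertTerm_sub (hd _) (hd _) (hδ 0) (hM 0))

end

lemma exists_hasCoeffs_lambertSeries {e d : ℕ → ℕ} (he : ∀ k, k ≤ e k) (hd : ∀ k, d k ≠ 0) :
    ∃ a, HasCoeffs (lambertSeries e d) a :=
  exists_hasCoeffs_tsum_neg_one_pow
    (fun k => (HasNonnegCoeffs.pow (e k)).mul (.inv_one_sub_pow (hd k)))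
    fun _ hq hq1 => summable_lambertTerm hq hq1 he hd

lemma hasNonnegCoeffs_inv_mul_one_sub_pow_add {r s : ℕ} (hr : r ≠ 0) (hs : s ≠ 0) (m : ℕ) :
    HasNonnegCoeffs fun q =>
      (1 - q ^ 10)⁻¹ * (1 - q ^ r)⁻¹ * (1 - q ^ s)⁻¹ * (1 - q ^ (10 * m + r)) := by
  have hten : (10 : ℕ) ≠ 0 := by norm_num
  refine (((HasNonnegCoeffs.inv_one_sub_pow_mul hten m).mul
    ((HasNonnegCoeffs.inv_one_sub_pow hr).mul (.inv_one_sub_pow hs))).add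
    ((HasNonnegCoeffs.pow (10 * m)).mul ((HasNonnegCoeffs.inv_one_sub_pow hten).mul
      (.inv_one_sub_pow hs)))).congr fun q hq hq1 => ?_
  have := one_sub_pow_pos hq hq1 hr
  have := one_sub_pow_pos hq hq1 hs
  have := one_sub_pow_pos hq hq1 hten
  field_simp
  ring

lemma hasNonnegCoeffs_inv_mul_appellTen : HasNonnegCoeffs fun q =>
    (1 - q ^ 10)⁻¹ * (1 - q ^ 3)⁻¹ * (1 - q ^ 7)⁻¹ * (q ^ 3 * appellTen q 17 4) := by
  have h₁ := hasNonnegCoeffs_mul_lambertSeries (e := fun k => 5 * k ^ 2 + 12 * k + 3)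
    (d := fun k => 10 * k + 4) (δ := fun i j => 10 * (2 * i + 1 + j) + 7) (fun k => by grind)
    (fun k => by grind) (fun i j => by grind)
    fun i j => hasNonnegCoeffs_inv_mul_one_sub_pow_add (s := 3) (by norm_num) (by norm_num) _
  have h₂ := hasNonnegCoeffs_mul_lambertSeries (e := fun k => 5 * k ^ 2 + 8 * k + 2)
    (d := fun k => 10 * k + 6) (δ := fun i j => 10 * (2 * i + 1 + j) + 3) (fun k => by grind)
    (fun k => by grind) (fun i j => by grind)
    fun i j => hasNonnegCoeffs_inv_mul_one_sub_pow_add (s := 7) (by norm_num) (by norm_num) _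
  refine (h₁.add h₂).congr fun q hq hq1 => ?_
  rw [pow_mul_appellTen_seventeen hq hq1]
  ring

lemma inv_coeffLE_inv_mul_lambertTerm_sub {e d : ℕ → ℕ} (he : ∀ k, e k = 5 * k ^ 2 + 5 * k)
    (hd : ∀ k, d k = 5 * k + 1) : (fun q => (1 - q ^ 1)⁻¹) ≼
      fun q => (1 - q ^ 5)⁻¹ * (lambertTerm e d 0 q - lambertTerm e d 1 q) := by
  have hterm (j : ℕ) : (fun _ => 1) ≼ fun q => (1 - q ^ 5)⁻¹ * (1 - q ^ (5 * (j + 2))) := by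
    refine ((HasNonnegCoeffs.pow 5).mul (.inv_one_sub_pow_mul (a := 5) (by norm_num) (j + 1))).congr
      fun q hq hq1 => ?_
    have := one_sub_pow_pos hq hq1 (a := 5) (by norm_num)
    field_simp
    ring
  refine .hasSum (fun j => (HasNonnegCoeffs.pow j).mul (hterm j)) fun q hq hq1 => ?_
  have h := (hasSum_lambertTerm_sub_lambertTerm hq hq1 (e := e) (d := d) (k := 0) (l := 1)
    (δ := fun j => 5 * (j + 2)) (by grind) (by grind) (by grind)).mul_left (1 - q ^ 5)⁻¹
  have hgeom : HasSum (fun j => q ^ j) (1 - q ^ 1)⁻¹ :=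
    (pow_one q).symm ▸ hasSum_geometric_of_lt_one hq.le hq1
  refine (h.sub hgeom).congr_fun fun j => ?_
  rw [he, hd]
  ring

lemma inv_coeffLE_inv_mul_lambertSum :
    (fun q => (1 - q ^ 1)⁻¹) ≼ fun q => (1 - q ^ 5)⁻¹ * lambertSum q 10 1 := by
  have h₁ := mul_lambertTerm_sub_coeffLE (e := fun k => 5 * k ^ 2 + 5 * k)
    (d := fun k => 5 * k + 1) (δ := fun i j => 5 * (4 * i + 2 + j)) (fun k => by grind)
    (fun k => by grind) (fun i j => by grind)
    fun i j => HasNonnegCoeffs.inv_one_sub_pow_mul (by norm_num) _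
  have h₂ := hasNonnegCoeffs_mul_lambertSeries (e := fun k => 5 * k ^ 2 + 10 * k + 4)
    (d := fun k => 5 * k + 4) (δ := fun i j => 5 * (4 * i + 3 + j)) (fun k => by grind)
    (fun k => by grind) (fun i j => by grind)
    fun i j => HasNonnegCoeffs.inv_one_sub_pow_mul (by norm_num) _
  refine (((inv_coeffLE_inv_mul_lambertTerm_sub (fun _ => rfl) fun _ => rfl).trans h₁).add_right
    h₂).congr (fun _ _ _ => rfl) fun q hq hq1 => ?_
  have h := lambertSum_ten hq hq1 (b := 1) (c := 4) (by norm_num) (by norm_num) (by norm_num)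
  rw [Nat.cast_one] at h
  rw [h, mul_add]

theorem coeffLE_rankGap₄ (i : ℕ) : (fun q => 2 * q ^ i) ≼ rankGap₄ := by
  have h₅ := (((CoeffLE.pow_inv_one_sub_pow one_ne_zero i).trans
    inv_coeffLE_inv_mul_lambertSum).mul (one_coeffLE_inv_qPochTen_mul (a := 10) (b := 5) (c := 15)
    (by norm_num) (by norm_num) (by norm_num)) (.pow _) .one).const_mul zero_le_two
  have h₃ := (hasNonnegCoeffs_inv_mul_appellTen.mul ((one_coeffLE_inv_qPochTen_mul (a := 20)
    (b := 13) (c := 17) (by norm_num) (by norm_num) (by norm_num)).hasNonnegCoeffs .one)).const_mul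
    zero_le_four
  refine (h₅.add_right h₃).congr (fun q _ _ => by ring) fun q hq hq1 => ?_
  rw [rankGap₄, div_eq_mul_inv, div_eq_mul_inv, inv_thetaTen_five hq hq1,
    inv_thetaTen_three hq hq1]
  ring

lemma exists_hasCoeffs_rankGap₁ : ∃ a, HasCoeffs rankGap₁ a := by
  obtain ⟨a, ha⟩ := exists_hasCoeffs_lambertSeries (e := fun k => 5 * k ^ 2 + 5 * k)
    (d := fun k => 5 * k + 2) (fun k => by grind) fun k => by grind
  obtain ⟨b, hb⟩ := exists_hasCoeffs_lambertSeries (e := fun k => 5 * k ^ 2 + 10 * k + 3)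
    (d := fun k => 5 * k + 3) (fun k => by grind) fun k => by grind
  obtain ⟨c, -, hc⟩ := (HasNonnegCoeffs.inv_one_sub_pow (a := 5) (by norm_num)).mul
    ((one_coeffLE_inv_qPochTen_mul (a := 10) (b := 5) (c := 15) (by norm_num) (by norm_num)
      (by norm_num)).hasNonnegCoeffs .one)
  refine ⟨_, ((((HasCoeffs.pow 1).mul (ha.add hb)).mul hc).const_mul (-2)).congr
    fun q hq hq1 => ?_⟩
  have h := lambertSum_ten hq hq1 (b := 2) (c := 3) (by norm_num) (by norm_num) (by norm_num)
  rw [Nat.cast_ofNat] at h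
  rw [rankGap₁, h, div_eq_mul_inv, inv_thetaTen_five hq hq1]
  ring

end LambertSeries

section Uniqueness

open Filter Topology

theorem eq_of_hasSum_mul_pow {a b : ℕ → ℝ} {f : ℝ → ℝ} {r : ℝ} (hr : 0 < r)
    (ha : ∀ q, 0 < q → q < r → HasSum (fun n => a n * q ^ n) (f q))
    (hb : ∀ q, 0 < q → q < r → HasSum (fun n => b n * q ^ n) (f q)) : a = b := by
  have hab (q : ℝ) (hq : 0 < q) (hqr : q < r) : HasSum (fun n => (a - b) n * q ^ n) 0 := by
    rw [← sub_self (f q)]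
    exact ((ha q hq hqr).sub (hb q hq hqr)).congr_fun fun n => sub_mul _ _ _
  set p := FormalMultilinearSeries.ofScalars ℝ (a - b) with hp
  have hradius : 0 < p.radius := by
    have hsum := (hab (r / 2) (by positivity) (by linarith)).summable.norm
    refine lt_of_lt_of_le ?_ (p.le_radius_of_summable (r := (r / 2).toNNReal)
      (hsum.congr fun n => ?_))
    · simpa using hr
    · rw [hp, FormalMultilinearSeries.ofScalars_norm, norm_mul, norm_pow,
        Real.coe_toNNReal _ (by positivity), Real.norm_of_nonneg (by positivity : 0 ≤ r / 2)]
  have hp₀ := (p.hasFPowerSeriesOnBall hradius).hasFPowerSeriesAt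
  have hsum_zero : ∀ᶠ q in 𝓝[>] 0, p.sum q = 0 := by
    filter_upwards [Ioo_mem_nhdsGT hr] with q hq
    rw [← (hab q hq.1 hq.2).tsum_eq]
    exact tsum_congr fun n => FormalMultilinearSeries.ofScalars_apply_eq _ _ _
  have hfreq : ∃ᶠ q in 𝓝[≠] 0, p.sum q = 0 :=
    hsum_zero.frequently.filter_mono (nhdsGT_le_nhdsNE 0)
  rw [hp₀.analyticAt.frequently_zero_iff_eventually_zero] at hfreq
  exact sub_eq_zero.1 ((FormalMultilinearSeries.ofScalars_series_eq_zero (E := ℝ)).1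
    (hp₀.eq_zero_of_eventually hfreq))

namespace HasCoeffs

variable {f : ℝ → ℝ} {a : ℕ → ℝ}

lemma pow_mul_comp_pow (hf : HasCoeffs f a) {m d : ℕ} (hd : d < m) :
    HasCoeffs (fun q => q ^ d * f (q ^ m)) fun n => if n % m = d then a (n / m) else 0 := by
  intro q hq hq1
  have hm : m ≠ 0 := by omega
  have hinj : Function.Injective fun n : ℕ => m * n + d := fun _ _ h =>
    Nat.eq_of_mul_eq_mul_left (Nat.pos_of_ne_zero hm) (Nat.add_right_cancel h)
  rw [← hinj.hasSum_iff fun n hn => ?_]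
  · refine ((hf (q ^ m) (by positivity) (pow_lt_one₀ hq.le hq1 hm)).mul_left
      (q ^ d)).congr_fun fun n => ?_
    simp only [Function.comp]
    rw [Nat.mul_add_mod, Nat.mod_eq_of_lt hd, if_pos rfl, Nat.mul_add_div (by omega),
      Nat.div_eq_of_lt hd, add_zero, pow_add, pow_mul]
    ring
  · simp only [if_neg fun h : n % m = d => hn ⟨n / m, h ▸ Nat.div_add_mod n m⟩, zero_mul]

lemma pos_of_const_mul_pow_coeffLE (hf : HasCoeffs f a) {c : ℝ} (hc : 0 < c) {n : ℕ}
    (h : (fun q => c * q ^ n) ≼ f) : 0 < a n := by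
  obtain ⟨b, hb, hbf⟩ := h
  have hab := eq_of_hasSum_mul_pow one_pos hf
    ((hbf.add ((HasCoeffs.pow n).const_mul c)).congr fun _ _ _ => (sub_add_cancel _ _).symm)
  have han : a n = b n + c := by simp [hab]
  exact han ▸ add_pos_of_nonneg_of_pos (hb n) hc

end HasCoeffs

end Uniqueness

section RankGapCoefficients

/-- The difference `N̄(1,5,n) - N̄(2,5,n)`. -/
noncomputable def nbarGap (n : ℕ) : ℝ := nbar 1 5 n - nbar 2 5 n

theorem hasCoeffs_rankGap :
    HasCoeffs rankGap₀ (fun n => nbarGap (5 * n)) ∧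
    HasCoeffs rankGap₁ (fun n => nbarGap (5 * n + 1)) ∧
    HasCoeffs rankGap₂ (fun n => nbarGap (5 * n + 2)) ∧
    HasCoeffs rankGap₃ (fun n => nbarGap (5 * n + 3)) ∧
    HasCoeffs rankGap₄ (fun n => nbarGap (5 * n + 4)) := by
  obtain ⟨b₀, -, h₀⟩ := (coeffLE_rankGap₀ 0 0).hasNonnegCoeffs (.const_mul zero_le_two (.pow _))
  obtain ⟨b₁, h₁⟩ := exists_hasCoeffs_rankGap₁
  obtain ⟨b₂, -, h₂⟩ := (coeffLE_rankGap₂ 0).hasNonnegCoeffs (.const_mul zero_le_two (.pow _))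
  obtain ⟨b₃, h₃⟩ := exists_hasCoeffs_rankGap₃
  obtain ⟨b₄, -, h₄⟩ := (coeffLE_rankGap₄ 0).hasNonnegCoeffs (.const_mul zero_le_two (.pow _))
  have hseries : HasCoeffs rankGapSeries _ :=
    (((((h₀.pow_mul_comp_pow (d := 0) (m := 5) (by norm_num)).add
    (h₁.pow_mul_comp_pow (d := 1) (m := 5) (by norm_num))).add
    (h₂.pow_mul_comp_pow (d := 2) (m := 5) (by norm_num))).add
    (h₃.pow_mul_comp_pow (d := 3) (m := 5) (by norm_num))).add
    (h₄.pow_mul_comp_pow (d := 4) (m := 5) (by norm_num))).congr fun q _ _ => by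
      rw [rankGapSeries, pow_zero, one_mul, pow_one]
  have hgap := eq_of_hasSum_mul_pow (a := nbarGap) (r := 1 / 4) (by norm_num)
    (fun q hq hq4 => hasSum_nbar_sub_nbar_mul_pow hq hq4)
    fun q hq hq4 => hseries q hq (hq4.trans (by norm_num))
  rw [hgap]
  refine ⟨?_, ?_, ?_, ?_, ?_⟩
  · simpa [Nat.mul_add_div] using h₀
  · simpa [Nat.mul_add_mod, Nat.mul_add_div] using h₁
  · simpa [Nat.mul_add_mod, Nat.mul_add_div] using h₂
  · simpa [Nat.mul_add_mod, Nat.mul_add_div] using h₃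
  · simpa [Nat.mul_add_mod, Nat.mul_add_div] using h₄

lemma exists_eq_one_add_three_mul_add_four_mul {m : ℕ} (h₀ : m ≠ 0) (h₂ : m ≠ 2) (h₃ : m ≠ 3)
    (h₆ : m ≠ 6) : ∃ i j, m = 1 + 3 * i + 4 * j := by
  have hmod : m % 3 = 1 ∨ m % 3 = 2 ∨ m % 3 = 0 := by omega
  rcases hmod with h | h | h
  · exact ⟨(m - 1) / 3, 0, by omega⟩
  · exact ⟨(m - 5) / 3, 1, by omega⟩
  · exact ⟨(m - 9) / 3, 2, by omega⟩

end RankGapCoefficients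

theorem stmt3 (n : ℕ) (hn : 0 < n) (h5 : n % 5 = 0 ∨ n % 5 = 2 ∨ n % 5 = 4)
    (hex : n ∉ ({10, 15, 30} : Set ℕ)) :
    nbar 2 5 n < nbar 1 5 n := by
  obtain ⟨h₀, -, h₂, -, h₄⟩ := hasCoeffs_rankGap
  suffices 0 < nbarGap n from Nat.cast_lt.1 (sub_pos.1 this)
  rw [← Nat.div_add_mod n 5]
  rcases h5 with h | h | h <;> rw [h]
  · simp only [Set.mem_insert_iff, Set.mem_singleton_iff, not_or] at hex
    obtain ⟨i, j, hij⟩ := exists_eq_one_add_three_mul_add_four_mul (m := n / 5) (by omega)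
      (by omega) (by omega) (by omega)
    exact h₀.pos_of_const_mul_pow_coeffLE two_pos (hij ▸ coeffLE_rankGap₀ i j)
  · exact h₂.pos_of_const_mul_pow_coeffLE two_pos (coeffLE_rankGap₂ (n / 5))
  · exact h₄.pos_of_const_mul_pow_coeffLE two_pos (coeffLE_rankGap₄ (n / 5))
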